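/- arXiv:2503.14968 — 2 statements merged into one kernel-verified Lean document; each statement's English description precedes it below -/
import Mathlib

section
/- For any δ > 0 there exists n₀ ∈ ℕ such that for all integers n ≥ n₀ divisible by 3 the following holds. Let H be a (1,3)-partite 4-uniform hypergraph with partition classes Q and P, where |P| = n and |Q| = n/3. Suppose every vertex of Q is adjacent to every vertex of P, and for any u ∈ Q and v, v′ ∈ P with deg({u,v,v′}) > 0 we have deg({u,v}) + deg({u,v′}) > (2/3 + δ)n². Then H has a perfect matching. -/
/-!
The links of the vertices of `Q` form a family of 3-graphs on `P`, one for each *colour* `u ∈ Q`,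
each satisfying an Ore-type degree condition (`Ore`); a perfect matching of `H` is a perfect matching
of `P` using each colour exactly once. It is found by the absorbing method (`rainbow_pm`).

*A single 3-graph.* A large 3-graph satisfying the Ore condition has a perfect matching
(`single_pm`). Call two vertices good if their degree sum meets the threshold. Missing triples of
pairwise good vertices may be added: if a perfect matching uses an added triple `e`, then, `e` having
average degree above two thirds, some two further matching edges together with `e` span three
disjoint original edges (`exchange`). Once all good triples are edges, a perfect matching is written
down directly: each light vertex is matched with two neighbours of a lightest vertex, and the
remaining heavy vertices are matched arbitrarily (`saturated_pm`).

*Almost perfect rainbow matchings* (`near_perfect`). By a Chernoff bound, almost all samples of a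
large constant number `3 K` of vertices inherit the Ore condition in a given colour, hence have a
perfect matching in it (`exists_sample_size`). Partition the vertices into such blocks so that almost
all pairs of a block and a colour are good. There are boundedly many matchings of a block, so
by pigeonhole `K` unused colours agree on one, as long as enough blocks and colours remain; that block
is matched with these `K` colours.

*Absorbers.* A gadget consists of four coloured edges; it absorbs a colour together with three
vertices if the 15 vertices and five colours also have a rainbow matching (`Absorbs`). Each colour
and triple is absorbed by a positive proportion of all gadgets (`card_absorbs_ge`), because at most a
third of the vertices are light in most colours, and a vertex that is heavy in a positive proportion of
the colours has many common link pairs with every other vertex. A derandomised random selection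
(`select`) gives a small family of disjoint gadgets in which every colour and triple has linearly many
absorbers (`exists_absorbers`).

Set this family aside, match almost everything else, and let distinct gadgets absorb what is left
(`assemble`).
-/

namespace RainbowOre
open Finset
open scoped Classical

/-- `G` is the edge relation of a 3-uniform hypergraph: symmetric, and supported on triples of
distinct vertices. -/
structure IsThreeGraph {V : Type} (G : V → V → V → Prop) : Prop where
  swap₁ : ∀ {a b c}, G a b c → G b a c
  swap₂ : ∀ {a b c}, G a b c → G a c b
  ne : ∀ {a b c}, G a b c → a ≠ b

/-- The number of *ordered* pairs `(a, b)` such that `{v, a, b}` is an edge, i.e. twice the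
usual vertex degree. -/
noncomputable def dg {V : Type} [Fintype V] (G : V → V → V → Prop) (v : V) : ℕ :=
  #(univ.filter fun p : V × V => G v p.1 p.2)

/-- The Ore-type condition for ordered degrees: no isolated vertices, and adjacent vertices have
degree sum at least `(4/3 + δ) |V|²`. -/
structure Ore {V : Type} [Fintype V] (δ : ℝ) (G : V → V → V → Prop) : Prop where
  exists_edge : ∀ v, ∃ a b, G v a b
  le : ∀ {v w x}, G v w x → (4 / 3 + δ) * (Fintype.card V : ℝ) ^ 2 ≤ dg G v + dg G w

/-- `G` has a perfect matching, given as a numbering of the vertices by `Fin k × Fin 3`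
all of whose rows are edges. -/
def HasPM {V : Type} (k : ℕ) (G : V → V → V → Prop) : Prop :=
  ∃ φ : Fin k × Fin 3 ≃ V, ∀ i, G (φ (i, 0)) (φ (i, 1)) (φ (i, 2))

theorem IsThreeGraph.rot {V : Type} {G : V → V → V → Prop} (h : IsThreeGraph G) {a b c : V}
    (e : G a b c) : G b c a := h.swap₂ (h.swap₁ e)

theorem IsThreeGraph.ne₂ {V : Type} {G : V → V → V → Prop} (h : IsThreeGraph G) {a b c : V}
    (e : G a b c) : b ≠ c := h.ne (h.rot e)

theorem IsThreeGraph.ne₁₃ {V : Type} {G : V → V → V → Prop} (h : IsThreeGraph G) {a b c : V}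
    (e : G a b c) : a ≠ c := h.ne (h.swap₂ e)

theorem dg_le {V : Type} [Fintype V] (G : V → V → V → Prop) (v : V) :
    dg G v ≤ Fintype.card V ^ 2 := by
  unfold dg
  refine (Finset.card_le_univ _).trans ?_
  simp [sq]

theorem dg_mono {V : Type} [Fintype V] {G G' : V → V → V → Prop}
    (h : ∀ a b c, G a b c → G' a b c) (v : V) : dg G v ≤ dg G' v := by
  unfold dg
  exact Finset.card_le_card fun p => by simpa using h _ _ _

/-! ### Perfect matchings in a single 3-graph -/

/-- Replacing the three rows `idx` of `φ` by three transversals, the `r`-th of which takes the entry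
`r + sh s` of the row `idx s`. -/
theorem exchange_pm {V : Type} {G : V → V → V → Prop} {k : ℕ} (φ : Fin k × Fin 3 ≃ V)
    (idx : Fin 3 ↪ Fin k) (sh : Fin 3 → Fin 3)
    (hG : ∀ i, i ∉ Set.range idx → G (φ (i, 0)) (φ (i, 1)) (φ (i, 2)))
    (hN : ∀ r, G (φ (idx 0, r + sh 0)) (φ (idx 1, r + sh 1)) (φ (idx 2, r + sh 2))) :
    HasPM k G := by
  let ψ : Equiv.Perm (Fin 3 × Fin 3) :=
    { toFun := fun p => (p.2, p.1 + sh p.2)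
      invFun := fun p => (p.2 - sh p.1, p.1)
      left_inv := by rintro ⟨a, b⟩; simp
      right_inv := by rintro ⟨a, b⟩; simp }
  let ι : Fin 3 × Fin 3 ↪ Fin k × Fin 3 := idx.prodMap (Function.Embedding.refl _)
  refine ⟨(ψ.viaEmbedding ι).trans φ, fun i => ?_⟩
  by_cases hi : i ∈ Set.range idx
  · obtain ⟨r, rfl⟩ := hi
    have key : ∀ s, ψ.viaEmbedding ι (idx r, s) = (idx s, r + sh s) := by
      intro s
      have := Equiv.Perm.viaEmbedding_apply ψ ι (r, s)
      simpa [ι, ψ] using this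
    simp only [Equiv.trans_apply, key]
    exact hN r
  · have key : ∀ s, ψ.viaEmbedding ι (i, s) = (i, s) := by
      intro s
      apply Equiv.Perm.viaEmbedding_apply_of_notMem
      rintro ⟨⟨r, s'⟩, h⟩
      simp only [ι, Function.Embedding.prodMap, Function.Embedding.coeFn_mk, Prod.map,
        Prod.mk.injEq] at h
      exact hi ⟨r, h.1⟩
    simp only [Equiv.trans_apply, key]
    exact hG i hi

theorem dg_eq_sum {V : Type} [Fintype V] {G : V → V → V → Prop} {k : ℕ}
    (φ : Fin k × Fin 3 ≃ V) (u : V) :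
    dg G u = ∑ i₁, ∑ i₂, ∑ s, ∑ t, if G u (φ (i₁, s)) (φ (i₂, t)) then 1 else 0 := by
  unfold dg
  rw [Finset.card_filter, Fintype.sum_prod_type, ← φ.sum_comp, Fintype.sum_prod_type]
  refine Finset.sum_congr rfl fun i₁ _ => ?_
  rw [Finset.sum_comm]
  rw [← φ.sum_comp, Fintype.sum_prod_type]
  refine Finset.sum_congr rfl fun i₂ _ => ?_
  rw [Finset.sum_comm]

/-- The exchange argument: if all rows of `φ` but the row `i₀` are edges, and there is no perfect
matching, then the vertices of row `i₀` have average degree at most about two thirds. The 27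
transversals of row `i₀` and two further rows split into 9 perfect matchings of the
three rows, each of which misses an edge. -/
theorem exchange {V : Type} [Fintype V] {G : V → V → V → Prop} {k : ℕ} (φ : Fin k × Fin 3 ≃ V)
    (i₀ : Fin k) (hG : ∀ i, i ≠ i₀ → G (φ (i, 0)) (φ (i, 1)) (φ (i, 2))) (hno : ¬ HasPM k G) :
    ∑ r, dg G (φ (i₀, r)) ≤ 18 * k ^ 2 + 27 * k := by
  have hdeg : ∀ i₁ i₂ : Fin k,
      ∑ r : Fin 3, ∑ s : Fin 3, ∑ t : Fin 3,
        (if G (φ (i₀, r)) (φ (i₁, s)) (φ (i₂, t)) then 1 else 0) ≤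
      18 + (9 * ((if i₁ = i₂ then 1 else 0) + (if i₁ = i₀ then 1 else 0)
        + (if i₂ = i₀ then 1 else 0)) : ℕ) := by
    intro i₁ i₂
    -- At most `3 k` pairs of rows are degenerate; they account for the error term `27 k`.
    by_cases hd : i₁ = i₂ ∨ i₁ = i₀ ∨ i₂ = i₀
    · have h27 : ∑ r : Fin 3, ∑ s : Fin 3, ∑ t : Fin 3,
          (if G (φ (i₀, r)) (φ (i₁, s)) (φ (i₂, t)) then 1 else 0) ≤
          ∑ r : Fin 3, ∑ s : Fin 3, ∑ t : Fin 3, 1 := by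
        gcongr
        split_ifs <;> simp
      refine h27.trans ?_
      simp only [sum_const, card_univ, Fintype.card_fin, smul_eq_mul]
      rcases hd with h | h | h <;> simp only [h, if_true] <;> omega
    · push Not at hd
      obtain ⟨h12, h10, h20⟩ := hd
      have hre : ∑ r : Fin 3, ∑ s : Fin 3, ∑ t : Fin 3,
          (if G (φ (i₀, r)) (φ (i₁, s)) (φ (i₂, t)) then 1 else 0) =
          ∑ a : Fin 3, ∑ b : Fin 3, ∑ r : Fin 3,
            (if G (φ (i₀, r)) (φ (i₁, r + a)) (φ (i₂, r + b)) then 1 else 0) := by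
        have : ∀ r : Fin 3, ∑ s : Fin 3, ∑ t : Fin 3,
            (if G (φ (i₀, r)) (φ (i₁, s)) (φ (i₂, t)) then 1 else 0) =
            ∑ a : Fin 3, ∑ b : Fin 3,
            (if G (φ (i₀, r)) (φ (i₁, r + a)) (φ (i₂, r + b)) then 1 else 0) := by
          intro r
          rw [← Equiv.sum_comp (Equiv.addLeft r)]
          refine Finset.sum_congr rfl fun a _ => ?_
          rw [← Equiv.sum_comp (Equiv.addLeft r)]
          rfl
        rw [Finset.sum_congr rfl fun r _ => this r, Finset.sum_comm]
        refine Finset.sum_congr rfl fun a _ => ?_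
        rw [Finset.sum_comm]
      rw [hre]
      have h2 : ∀ a b : Fin 3, ∑ r : Fin 3,
            (if G (φ (i₀, r)) (φ (i₁, r + a)) (φ (i₂, r + b)) then 1 else 0) ≤ 2 := by
        intro a b
        by_contra hlt
        apply hno
        have hall : ∀ r : Fin 3, G (φ (i₀, r)) (φ (i₁, r + a)) (φ (i₂, r + b)) := by
          rw [Fin.sum_univ_three] at hlt
          intro r
          by_contra hr
          apply hlt
          fin_cases r <;> simp only [Fin.zero_eta, Fin.mk_one, Fin.reduceFinMk] at hr <;>
            simp only [hr, if_false] <;> split_ifs <;> norm_num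
        let idx : Fin 3 ↪ Fin k := ⟨![i₀, i₁, i₂], by
          intro x y
          fin_cases x <;> fin_cases y <;>
            simp [h12, h12.symm, h10, h10.symm, h20, h20.symm]⟩
        refine exchange_pm φ idx ![0, a, b] ?_ ?_
        · intro i hi
          apply hG
          rintro rfl
          exact hi ⟨0, rfl⟩
        · intro r
          change G (φ (i₀, r + 0)) (φ (i₁, r + a)) (φ (i₂, r + b))
          rw [add_zero]
          exact hall r
      calc _ ≤ ∑ a : Fin 3, ∑ b : Fin 3, 2 := by gcongr; exact h2 _ _
        _ ≤ _ := by simp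
  have hsum : ∑ r, dg G (φ (i₀, r)) = ∑ i₁, ∑ i₂, ∑ r : Fin 3, ∑ s : Fin 3, ∑ t : Fin 3,
        (if G (φ (i₀, r)) (φ (i₁, s)) (φ (i₂, t)) then 1 else 0) := by
    rw [Finset.sum_congr rfl fun r _ => dg_eq_sum φ _, Finset.sum_comm]
    refine Finset.sum_congr rfl fun i₁ _ => ?_
    rw [Finset.sum_comm]
  rw [hsum]
  calc _ ≤ ∑ i₁ : Fin k, ∑ i₂ : Fin k, (18 + (9 * ((if i₁ = i₂ then 1 else 0)
        + (if i₁ = i₀ then 1 else 0) + (if i₂ = i₀ then 1 else 0)) : ℕ)) := by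
        gcongr; exact hdeg _ _
    _ = 18 * k ^ 2 + 27 * k := by
        simp only [sum_add_distrib, ← mul_sum, sum_const, card_univ, Fintype.card_fin,
          smul_eq_mul, sum_ite_eq, mem_univ, if_true, sum_ite_eq', mul_ite, mul_zero]
        ring

/-- A 3-graph in which every triple of pairwise good vertices (degree sum at least
`(4/3 + δ) |V|²`) is an edge, is the triangle hypergraph of a threshold graph: light vertices `S`, and a clique
containing a set `D` of at least `2|S|` vertices joined to all of `S`. Match `S` into `D`, and the
rest inside the clique. -/
theorem saturated_pm {V : Type} [Fintype V] {G : V → V → V → Prop} {k : ℕ} {δ : ℝ} (hδ : 0 < δ)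
    (hV : Fintype.card V = 3 * k) (h3 : IsThreeGraph G) (hO : Ore δ G)
    (hsat : ∀ a b c, a ≠ b → a ≠ c → b ≠ c →
      (4 / 3 + δ) * (Fintype.card V : ℝ) ^ 2 ≤ dg G a + dg G b →
      (4 / 3 + δ) * (Fintype.card V : ℝ) ^ 2 ≤ dg G a + dg G c →
      (4 / 3 + δ) * (Fintype.card V : ℝ) ^ 2 ≤ dg G b + dg G c → G a b c) :
    HasPM k G := by
  set T : ℝ := (4 / 3 + δ) * (Fintype.card V : ℝ) ^ 2 with hT
  set N : ℝ := (Fintype.card V : ℝ) with hN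
  let S : Finset V := univ.filter fun v => 2 * (dg G v : ℝ) < T
  have hS : ∀ v, v ∈ S ↔ 2 * (dg G v : ℝ) < T := fun v => by simp [S]
  have hSS : ∀ {v w x}, v ∈ S → w ∈ S → ¬ G v w x := by
    intro v w x hv hw e
    have := hO.le e
    rw [hS] at hv hw
    linarith
  obtain ⟨D, hDcard, hDS, hDgood⟩ : ∃ D : Finset V, 2 * #S ≤ #D ∧ (∀ w ∈ D, w ∉ S) ∧
      ∀ w ∈ D, ∀ s ∈ S, T ≤ dg G w + dg G s := by
    rcases S.eq_empty_or_nonempty with hem | hne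
    · exact ⟨∅, by simp [hem], by simp, by simp⟩
    -- `D` is the neighbourhood of a light vertex of minimum degree, so its members are good with
    -- every light vertex.
    obtain ⟨s₀, hs₀, hmin⟩ := S.exists_min_image (fun v => dg G v) hne
    let D : Finset V := univ.filter fun w => ∃ x, G s₀ w x
    have hD : ∀ w, w ∈ D ↔ ∃ x, G s₀ w x := fun w => by simp [D]
    have hDS : ∀ w ∈ D, w ∉ S := by
      intro w hw hwS
      obtain ⟨x, hx⟩ := (hD w).1 hw
      exact hSS hs₀ hwS hx
    refine ⟨D, ?_, hDS, ?_⟩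
    · obtain ⟨w, x, hwx⟩ := hO.exists_edge s₀
      have h1 : dg G s₀ ≤ #D ^ 2 := by
        rw [sq, ← Finset.card_product]
        apply Finset.card_le_card
        rintro ⟨a, b⟩ hab
        simp only [mem_filter, mem_univ, true_and] at hab
        rw [mem_product, hD, hD]
        exact ⟨⟨b, hab⟩, ⟨a, h3.swap₂ hab⟩⟩
      have h2 : dg G w + #S ^ 2 ≤ Fintype.card V ^ 2 := by
        have hdisj : Disjoint (univ.filter fun p : V × V => G w p.1 p.2) (S ×ˢ S) := by
          rw [Finset.disjoint_left]
          rintro ⟨a, b⟩ hab hS2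
          simp only [mem_filter, mem_univ, true_and] at hab
          rw [mem_product] at hS2
          exact hSS hS2.1 hS2.2 (h3.rot hab)
        have := Finset.card_le_univ ((univ.filter fun p : V × V => G w p.1 p.2) ∪ (S ×ˢ S))
        rw [Finset.card_union_of_disjoint hdisj, Finset.card_product, Fintype.card_prod] at this
        unfold dg
        nlinarith
      have h3' := hO.le hwx
      have h4 : #D + #S ≤ Fintype.card V := by
        rw [← Finset.card_union_of_disjoint (Finset.disjoint_left.2 hDS)]
        exact Finset.card_le_univ _
      have h1' : (dg G s₀ : ℝ) ≤ (#D : ℝ) ^ 2 := by exact_mod_cast h1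
      have h2' : (dg G w : ℝ) + (#S : ℝ) ^ 2 ≤ N ^ 2 := by rw [hN]; exact_mod_cast h2
      have h4' : (#D : ℝ) + #S ≤ N := by rw [hN]; exact_mod_cast h4
      have hSpos : (0 : ℝ) < #S := by exact_mod_cast hne.card_pos
      by_contra hlt
      push Not at hlt
      have hlt' : (#D : ℝ) < 2 * #S := by exact_mod_cast hlt
      have hD0 : (0 : ℝ) ≤ #D := by positivity
      have hsq : ((#D : ℝ) + #S) ^ 2 ≤ N ^ 2 := by gcongr
      have hδN : 0 ≤ δ * N ^ 2 := by positivity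
      have hprod : ((#D : ℝ) - 2 * #S) * (#D + #S) < 0 :=
        mul_neg_of_neg_of_pos (by linarith) (by linarith)
      change T ≤ _ at h3'
      rw [hT] at h3'
      nlinarith
    · intro w hw s hs
      obtain ⟨x, hx⟩ := (hD w).1 hw
      have h1 := hO.le hx
      have h2 : (dg G s₀ : ℝ) ≤ dg G s := by exact_mod_cast hmin s hs
      change T ≤ _ at h1
      linarith
  have hK : ∀ {v w}, v ∉ S → w ∉ S → T ≤ dg G v + dg G w := by
    intro v w hv hw
    rw [hS, not_lt] at hv hw
    linarith
  obtain ⟨D', hD'D, hD'card⟩ := Finset.exists_subset_card_eq hDcard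
  have hSD' : Disjoint S D' := Finset.disjoint_left.2 fun v hv hv' => hDS v (hD'D hv') hv
  let R : Finset V := univ \ (S ∪ D')
  have hRcard : #R + 3 * #S = 3 * k := by
    have h1 : #R + #(S ∪ D') = Fintype.card V := by
      rw [← Finset.card_univ, Finset.card_sdiff_add_card_eq_card (Finset.subset_univ _)]
    rw [Finset.card_union_of_disjoint hSD', hD'card] at h1
    omega
  have hσ : #S ≤ k := by omega
  have hRS : ∀ v ∈ R, v ∉ S := fun v hv hS' => by simp [R, hS'] at hv
  have hRD : ∀ v ∈ R, v ∉ D' := fun v hv hS' => by simp [R, hS'] at hv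
  let eS : Fin #S ≃ S := (Fintype.equivFinOfCardEq (by simp)).symm
  let eD : Fin #S × Fin 2 ≃ D' := Fintype.equivOfCardEq (by simp [hD'card, mul_comm])
  let eR : Fin (k - #S) × Fin 3 ≃ R := Fintype.equivOfCardEq (by simp; omega)
  let ψ : (Fin #S ⊕ Fin (k - #S)) × Fin 3 → V := fun p =>
    Sum.elim (fun i => ![(eS i : V), eD (i, 0), eD (i, 1)] p.2) (fun i => (eR (i, p.2) : V)) p.1
  have hψ : Function.Injective ψ := by
    rintro ⟨i | i, s⟩ ⟨j | j, t⟩ hij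
    · have hSDne : ∀ (a : S) (b : D'), (a : V) ≠ b := fun a b hab =>
        hDS b (hD'D b.2) (hab ▸ a.2)
      fin_cases s <;> fin_cases t <;>
        simp [ψ, hSDne, (hSDne _ _).symm] at hij ⊢ <;> exact hij
    · exfalso
      have : ψ (Sum.inl i, s) ∈ S ∪ D' := by
        fin_cases s <;> simp [ψ]
      rw [hij] at this
      have h2 : ψ (Sum.inr j, t) ∈ R := by simp [ψ]
      simp only [R, mem_sdiff] at h2
      exact h2.2 this
    · exfalso
      have : ψ (Sum.inl j, t) ∈ S ∪ D' := by
        fin_cases t <;> simp [ψ]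
      rw [← hij] at this
      have h2 : ψ (Sum.inr i, s) ∈ R := by simp [ψ]
      simp only [R, mem_sdiff] at h2
      exact h2.2 this
    · simp only [ψ, Sum.elim_inr] at hij
      have := eR.injective (Subtype.ext hij)
      simp only [Prod.mk.injEq] at this
      simp [this]
  have hbij : Function.Bijective ψ := by
    rw [Fintype.bijective_iff_injective_and_card]
    refine ⟨hψ, ?_⟩
    simp [hV]
    omega
  let e₁ : Fin k ≃ Fin #S ⊕ Fin (k - #S) := Fintype.equivOfCardEq (by simp; omega)
  refine ⟨(e₁.prodCongr (Equiv.refl _)).trans (Equiv.ofBijective ψ hbij), fun i => ?_⟩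
  simp only [Equiv.trans_apply, Equiv.prodCongr_apply, Prod.map, Equiv.ofBijective_apply,
    Equiv.refl_apply]
  have hne : ∀ s t : Fin 3, s ≠ t → ψ (e₁ i, s) ≠ ψ (e₁ i, t) := fun s t hst h =>
    hst (by simpa using hψ h)
  apply hsat _ _ _ (hne _ _ (by decide)) (hne _ _ (by decide)) (hne _ _ (by decide))
  all_goals
    rcases e₁ i with i | i
  · have := hDgood (eD (i, 0)) (hD'D (eD (i, 0)).2) (eS i) (eS i).2
    exact this.trans (add_comm _ _).le
  · exact hK (hRS _ (eR (i, 0)).2) (hRS _ (eR (i, 1)).2)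
  · have := hDgood (eD (i, 1)) (hD'D (eD (i, 1)).2) (eS i) (eS i).2
    exact this.trans (add_comm _ _).le
  · exact hK (hRS _ (eR (i, 0)).2) (hRS _ (eR (i, 2)).2)
  · exact hK (hDS _ (hD'D (eD (i, 0)).2)) (hDS _ (hD'D (eD (i, 1)).2))
  · exact hK (hRS _ (eR (i, 1)).2) (hRS _ (eR (i, 2)).2)

/-- A 3-graph on `3k` vertices satisfying the Ore condition has a perfect matching, for `k`
large. Missing edges with pairwise good vertices are added one by one; each of them can be
eliminated from a perfect matching by `exchange`. -/
theorem single_pm {δ : ℝ} (hδ : 0 < δ) {k : ℕ} (hk : 18 < δ * (3 * k)) {V : Type} [Fintype V]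
    (hV : Fintype.card V = 3 * k) (G : V → V → V → Prop) (h3 : IsThreeGraph G) (hO : Ore δ G) :
    HasPM k G := by
  induction hm : #(univ.filter fun p : V × V × V => ¬ G p.1 p.2.1 p.2.2) using
    Nat.strong_induction_on generalizing G with
  | _ m ih =>
  by_cases hsat : ∀ a b c, a ≠ b → a ≠ c → b ≠ c →
      (4 / 3 + δ) * (Fintype.card V : ℝ) ^ 2 ≤ dg G a + dg G b →
      (4 / 3 + δ) * (Fintype.card V : ℝ) ^ 2 ≤ dg G a + dg G c →
      (4 / 3 + δ) * (Fintype.card V : ℝ) ^ 2 ≤ dg G b + dg G c → G a b c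
  · exact saturated_pm hδ hV h3 hO hsat
  push Not at hsat
  obtain ⟨a, b, c, hab, hac, hbc, gab, gac, gbc, hnot⟩ := hsat
  -- `{a, b, c}` is a missing triple of pairwise good vertices; adding it preserves the Ore
  -- condition.
  let G' : V → V → V → Prop := fun x y z => G x y z ∨ ({x, y, z} : Finset V) = {a, b, c}
  have hset : ∀ {x y z : V}, ({x, y, z} : Finset V) = {a, b, c} → x ≠ y := by
    rintro x y z h rfl
    have h1 : #({x, x, z} : Finset V) ≤ 2 := by
      rw [Finset.insert_eq_of_mem (by simp)]
      exact Finset.card_le_two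
    rw [h, Finset.card_eq_three.2 ⟨a, b, c, hab, hac, hbc, rfl⟩] at h1
    omega
  have h3' : IsThreeGraph G' := by
    refine ⟨?_, ?_, ?_⟩
    · rintro x y z (h | h)
      · exact Or.inl (h3.swap₁ h)
      · exact Or.inr (by rw [← h, Finset.insert_comm])
    · rintro x y z (h | h)
      · exact Or.inl (h3.swap₂ h)
      · exact Or.inr (by rw [← h, Finset.pair_comm z y])
    · rintro x y z (h | h)
      · exact h3.ne h
      · exact hset h
  have hmono : ∀ v, (dg G v : ℝ) ≤ dg G' v := fun v => by
    exact_mod_cast dg_mono (fun _ _ _ h => Or.inl h) v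
  have hO' : Ore δ G' := by
    refine ⟨fun v => ?_, ?_⟩
    · obtain ⟨x, y, h⟩ := hO.exists_edge v
      exact ⟨x, y, Or.inl h⟩
    · intro x y z h
      refine le_trans ?_ (add_le_add (hmono x) (hmono y))
      rcases h with h | h
      · exact hO.le h
      · have hxy := hset h
        have hx : x ∈ ({a, b, c} : Finset V) := by rw [← h]; simp
        have hy : y ∈ ({a, b, c} : Finset V) := by rw [← h]; simp
        simp only [mem_insert, mem_singleton] at hx hy
        rcases hx with rfl | rfl | rfl <;> rcases hy with rfl | rfl | rfl <;>
          first | exact absurd rfl hxy | assumption | linarith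
  have hlt : #(univ.filter fun p : V × V × V => ¬ G' p.1 p.2.1 p.2.2) < m := by
    rw [← hm]
    apply Finset.card_lt_card
    rw [Finset.ssubset_iff_of_subset]
    · refine ⟨(a, b, c), by simpa using hnot, by simp [G']⟩
    · intro p
      simp only [mem_filter, mem_univ, true_and, G']
      tauto
  obtain ⟨φ, hφ⟩ := ih _ hlt G' h3' hO' (by congr!)
  by_contra hno
  have hex : ∃ i₀, ¬ G (φ (i₀, 0)) (φ (i₀, 1)) (φ (i₀, 2)) := by
    by_contra hall
    push Not at hall
    exact hno ⟨φ, hall⟩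
  obtain ⟨i₀, hi₀⟩ := hex
  have hU : ({φ (i₀, 0), φ (i₀, 1), φ (i₀, 2)} : Finset V) = {a, b, c} :=
    (hφ i₀).resolve_left hi₀
  have hG : ∀ i, i ≠ i₀ → G (φ (i, 0)) (φ (i, 1)) (φ (i, 2)) := by
    intro i hi
    refine (hφ i).resolve_right fun h => ?_
    have : φ (i, 0) ∈ ({φ (i₀, 0), φ (i₀, 1), φ (i₀, 2)} : Finset V) := by rw [hU, ← h]; simp
    simp [hi] at this
  -- Summing the goodness of the three pairs gives `dg a + dg b + dg c ≥ (3/2)(4/3 + δ)(3k)²`,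
  -- against `exchange`.
  have hle := exchange φ i₀ hG hno
  have hsum : ∑ r, dg G (φ (i₀, r)) = dg G a + dg G b + dg G c := by
    have h1 : ∑ v ∈ ({φ (i₀, 0), φ (i₀, 1), φ (i₀, 2)} : Finset V), dg G v
        = ∑ r, dg G (φ (i₀, r)) := by
      rw [Finset.sum_insert (by simp), Finset.sum_insert (by simp), Finset.sum_singleton,
        Fin.sum_univ_three, add_assoc]
    rw [← h1, hU, Finset.sum_insert (by simp [hab, hac]), Finset.sum_insert (by simp [hbc]),
      Finset.sum_singleton, add_assoc]
  rw [hsum] at hle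
  have hle' : (dg G a : ℝ) + dg G b + dg G c ≤ 18 * k ^ 2 + 27 * k := by exact_mod_cast hle
  have hVr : (Fintype.card V : ℝ) = 3 * k := by exact_mod_cast hV
  rw [hVr] at gab gac gbc
  have hk0 : (0 : ℝ) < k := by
    by_contra h
    have : (k : ℝ) = 0 := le_antisymm (not_lt.1 h) (by positivity)
    rw [this] at hk
    linarith
  nlinarith [mul_lt_mul_of_pos_right hk hk0]

/-! ### Random samples of vertices -/

theorem exp_neg_le_quad {y : ℝ} (h0 : 0 ≤ y) (h1 : y ≤ 1) : Real.exp (-y) ≤ 1 - y + y ^ 2 := by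
  have h := Real.abs_exp_sub_one_sub_id_le (x := -y) (by rw [abs_neg, abs_of_nonneg h0]; exact h1)
  have := (abs_le.1 h).2
  nlinarith

/-- Chernoff bound for the lower tail, for a uniformly random `f : ι → V`: the sampled sum
`∑ c, h (f c)` is rarely much below its mean. The function `h` may depend on two of the sampled
points, `f a` and `f b`. -/
theorem tail_bound {V ι : Type} [Fintype V] [Fintype ι] [DecidableEq ι] [Nonempty V] (h : V → V → V → ℝ)
    (h0 : ∀ v w x, 0 ≤ h v w x) (h1 : ∀ v w x, h v w x ≤ 1) {a b : ι} (hab : a ≠ b) {ε : ℝ}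
    (hε : 0 < ε) (hε1 : ε ≤ 1) :
    (#(univ.filter fun f : ι → V => ∑ c, h (f a) (f b) (f c) <
      ((∑ x, h (f a) (f b) x) / Fintype.card V - ε) * Fintype.card ι) : ℝ) ≤
    Real.exp 1 * Real.exp (-(ε ^ 2 / 4) * Fintype.card ι) *
      (Fintype.card V : ℝ) ^ Fintype.card ι := by
  set n : ℝ := (Fintype.card V : ℝ) with hn
  set L := Fintype.card ι with hL
  have hn0 : 0 < n := by rw [hn]; exact_mod_cast Fintype.card_pos
  have hL2 : 2 ≤ L := by
    have : #({a, b} : Finset ι) ≤ L := Finset.card_le_univ _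
    rwa [Finset.card_pair hab] at this
  set l : ℝ := ε / 2 with hl
  have hl0 : 0 < l := by positivity
  -- The contribution of the event that the two special points are `v` and `w`.
  have key : ∀ v w : V,
      (#(univ.filter fun f : ι → V => (∑ c, h (f a) (f b) (f c) <
        ((∑ x, h (f a) (f b) x) / n - ε) * L) ∧ f a = v ∧ f b = w) : ℝ) ≤
      Real.exp 1 * Real.exp (-(ε ^ 2 / 4) * L) * n ^ (L - 2) := by
    intro v w
    set p : ℝ := (∑ x, h v w x) / n with hp
    have hp0 : 0 ≤ p := div_nonneg (Finset.sum_nonneg fun x _ => h0 _ _ _) hn0.le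
    have hp1 : p ≤ 1 := by
      rw [hp, div_le_one hn0, hn]
      calc ∑ x, h v w x ≤ ∑ x : V, (1 : ℝ) := by gcongr; exact h1 _ _ _
        _ = _ := by simp
    -- The factors of the exponential moment, with `f a = v` and `f b = w` built in as indicators.
    let g : ι → V → ℝ := fun c x => if c = a then (if x = v then 1 else 0) else
      if c = b then (if x = w then 1 else 0) else Real.exp (-(l * h v w x))
    have hg0 : ∀ c x, 0 ≤ g c x := by
      intro c x
      simp only [g]
      split_ifs <;> positivity
    have hlow : ∀ f ∈ (univ.filter fun f : ι → V => (∑ c, h (f a) (f b) (f c) <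
        ((∑ x, h (f a) (f b) x) / n - ε) * L) ∧ f a = v ∧ f b = w),
        Real.exp (-(l * ((p - ε) * L))) ≤ ∏ c, g c (f c) := by
      intro f hf
      simp only [mem_filter, mem_univ, true_and] at hf
      obtain ⟨hlt, rfl, rfl⟩ := hf
      calc Real.exp (-(l * ((p - ε) * L)))
          ≤ Real.exp (-(l * ∑ c, h (f a) (f b) (f c))) := by gcongr
        _ = ∏ c, Real.exp (-(l * h (f a) (f b) (f c))) := by
          rw [← Real.exp_sum, Finset.mul_sum, Finset.sum_neg_distrib]
        _ ≤ ∏ c, g c (f c) := by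
          refine Finset.prod_le_prod (fun _ _ => (Real.exp_pos _).le) fun c _ => ?_
          have hle : Real.exp (-(l * h (f a) (f b) (f c))) ≤ 1 := by
            rw [Real.exp_le_one_iff]
            have := mul_nonneg hl0.le (h0 (f a) (f b) (f c))
            linarith
          simp only [g]
          split_ifs with h1 h2 h3 h4
          · exact hle
          · exact absurd (by rw [h1]) h2
          · exact hle
          · exact absurd (by rw [h3]) h4
          · exact le_rfl
    have hsum : ∑ f : ι → V, ∏ c, g c (f c) = ∏ c, ∑ x, g c x := by
      rw [Finset.prod_univ_sum]
      simp
    set q : ℝ := Real.exp (-(l * p) + l ^ 2) with hq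
    have hcol : ∀ c, ∑ x, g c x ≤ if c = a ∨ c = b then 1 else n * q := by
      intro c
      by_cases hca : c = a
      · simp [g, hca]
      by_cases hcb : c = b
      · subst hcb
        simp [g, hca]
      simp only [g, hca, hcb, if_false, or_self]
      calc ∑ x, Real.exp (-(l * h v w x)) ≤ ∑ x, (1 - l * h v w x + l ^ 2) := by
            gcongr with x
            have hx0 := h0 v w x
            have hx1 := h1 v w x
            have hy1 : l * h v w x ≤ l := by nlinarith
            have hy0 : 0 ≤ l * h v w x := by positivity
            refine (exp_neg_le_quad hy0 (by linarith)).trans ?_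
            have : (l * h v w x) ^ 2 ≤ l ^ 2 := by gcongr
            linarith
        _ = n * (-(l * p) + l ^ 2 + 1) := by
            have hps : ∑ x, h v w x = n * p := by rw [hp]; field_simp
            rw [Finset.sum_add_distrib, Finset.sum_sub_distrib, ← Finset.mul_sum, hps]
            simp only [sum_const, card_univ, nsmul_eq_mul, ← hn]
            ring
        _ ≤ n * q := by
            gcongr
            exact Real.add_one_le_exp _
    have hprod : ∏ c, ∑ x, g c x ≤ (n * q) ^ (L - 2) := by
      calc ∏ c, ∑ x, g c x ≤ ∏ c : ι, (if c = a ∨ c = b then 1 else n * q) :=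
            Finset.prod_le_prod (fun c _ => Finset.sum_nonneg fun x _ => hg0 c x)
              fun c _ => hcol c
        _ = (n * q) ^ (L - 2) := by
            rw [Finset.prod_ite, Finset.prod_const_one, one_mul, Finset.prod_const]
            congr 1
            have : (univ.filter fun c : ι => ¬ (c = a ∨ c = b)) = univ \ {a, b} := by
              ext c; simp
            rw [this, Finset.card_sdiff_of_subset (Finset.subset_univ _), Finset.card_pair hab,
              Finset.card_univ]
    have hcnt : (#(univ.filter fun f : ι → V => (∑ c, h (f a) (f b) (f c) <
        ((∑ x, h (f a) (f b) x) / n - ε) * L) ∧ f a = v ∧ f b = w) : ℝ) *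
        Real.exp (-(l * ((p - ε) * L))) ≤ (n * q) ^ (L - 2) := by
      rw [← nsmul_eq_mul]
      refine (Finset.card_nsmul_le_sum _ _ _ hlow).trans (le_trans ?_ (hsum.le.trans hprod))
      exact Finset.sum_le_sum_of_subset_of_nonneg (Finset.subset_univ _)
        fun f _ _ => Finset.prod_nonneg fun c _ => hg0 c _
    rw [← le_div_iff₀ (Real.exp_pos _)] at hcnt
    refine hcnt.trans ?_
    rw [div_le_iff₀ (Real.exp_pos _), mul_pow, hq, ← Real.exp_nat_mul, mul_comm (n ^ (L - 2)),
      mul_right_comm, ← Real.exp_add, ← Real.exp_add]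
    gcongr
    rw [Nat.cast_sub hL2, hl]
    push_cast
    have hpe : ε * p ≤ 1 := by nlinarith
    nlinarith [sq_nonneg ε]
  have hun : (univ.filter fun f : ι → V => ∑ c, h (f a) (f b) (f c) <
      ((∑ x, h (f a) (f b) x) / n - ε) * L) ⊆ (univ : Finset (V × V)).biUnion fun vw =>
      (univ.filter fun f : ι → V => (∑ c, h (f a) (f b) (f c) <
        ((∑ x, h (f a) (f b) x) / n - ε) * L) ∧ f a = vw.1 ∧ f b = vw.2) := by
    intro f hf
    simp only [mem_filter, mem_univ, true_and] at hf
    simp only [mem_biUnion, mem_filter, mem_univ, true_and]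
    exact ⟨(f a, f b), hf, rfl, rfl⟩
  have h2 := (Finset.card_le_card hun).trans Finset.card_biUnion_le
  have h3 : (#(univ.filter fun f : ι → V => ∑ c, h (f a) (f b) (f c) <
      ((∑ x, h (f a) (f b) x) / n - ε) * L) : ℝ) ≤
      ∑ vw : V × V, (#(univ.filter fun f : ι → V => (∑ c, h (f a) (f b) (f c) <
        ((∑ x, h (f a) (f b) x) / n - ε) * L) ∧ f a = vw.1 ∧ f b = vw.2) : ℝ) := by
    exact_mod_cast h2
  refine h3.trans ((Finset.sum_le_sum fun vw _ => key vw.1 vw.2).trans ?_)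
  rw [Finset.sum_const, Finset.card_univ, Fintype.card_prod, nsmul_eq_mul, Nat.cast_mul, ← hn]
  have : n ^ L = n * n * n ^ (L - 2) := by
    rw [← sq, ← pow_add]; congr 1; omega
  rw [this]
  exact le_of_eq (by ring)

theorem dg_eq_sum_ite {V : Type} [Fintype V] (G : V → V → V → Prop) (v : V) :
    (dg G v : ℝ) = ∑ x, ∑ y, if G v x y then 1 else 0 := by
  unfold dg
  rw [Finset.card_filter, Fintype.sum_prod_type]
  push_cast
  rfl

/-- The neighbour of `v` in an edge has degree at most `|V|²`. -/
theorem Ore.dg_ge {V : Type} [Fintype V] {δ : ℝ} {G : V → V → V → Prop} (hO : Ore δ G) (v : V) :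
    (1 / 3 + δ) * (Fintype.card V : ℝ) ^ 2 ≤ dg G v := by
  obtain ⟨a, b, e⟩ := hO.exists_edge v
  have h1 := hO.le e
  have h2 : (dg G a : ℝ) ≤ (Fintype.card V : ℝ) ^ 2 := by exact_mod_cast dg_le G a
  linarith

theorem IsThreeGraph.pull {V W : Type} {G : V → V → V → Prop} (h : IsThreeGraph G) (f : W → V) :
    IsThreeGraph fun a b c => G (f a) (f b) (f c) :=
  ⟨fun e => h.swap₁ e, fun e => h.swap₂ e, fun e hab => h.ne e (by rw [hab])⟩

/-- A large random sample of the vertices inherits the Ore condition, with a smaller surplus. -/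
theorem sample_ore {V ι : Type} [Fintype V] [Fintype ι] [DecidableEq ι] [Nonempty V] [Nontrivial ι]
    {G : V → V → V → Prop} {δ : ℝ} (hδ : 0 < δ) (hδ1 : δ ≤ 1) (h3 : IsThreeGraph G)
    (hO : Ore δ G) :
    (#(univ.filter fun f : ι → V => ¬ Ore (δ / 2) fun a b c => G (f a) (f b) (f c)) : ℝ) ≤
    2 * (Fintype.card ι : ℝ) ^ 2 * (Real.exp 1 *
      Real.exp (-((δ / 8) ^ 2 / 4) * Fintype.card ι)) *
      (Fintype.card V : ℝ) ^ Fintype.card ι := by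
  set n : ℝ := (Fintype.card V : ℝ) with hn
  have hn0 : 0 < n := by rw [hn]; exact_mod_cast Fintype.card_pos
  set L : ℝ := (Fintype.card ι : ℝ) with hL
  have hL0 : 0 < L := by rw [hL]; exact_mod_cast Fintype.card_pos
  set ε := δ / 8 with hε
  have hε0 : 0 < ε := by positivity
  let cod : V → V → ℝ := fun v w => ∑ y, if G v w y then 1 else 0
  have hcod0 : ∀ v w, 0 ≤ cod v w := fun v w => Finset.sum_nonneg fun y _ => by split_ifs <;> simp
  have hcodn : ∀ v w, cod v w ≤ n := by
    intro v w
    calc cod v w ≤ ∑ y : V, (1 : ℝ) := by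
          simp only [cod]; gcongr; split_ifs <;> simp
      _ = n := by simp [hn]
  -- The degree in the sample is controlled in two steps: the codegrees of the pairs `f a, f b` in
  -- the sample follow those in `G` (events `E₂`), and the sampled `b` have the right average
  -- codegree with `f a` (events `E₁`).
  let h₁ : V → V → V → ℝ := fun v _ x => cod v x / n
  let h₂ : V → V → V → ℝ := fun v w x => if G v w x then 1 else 0
  choose nb hnb using fun a : ι => exists_ne a
  let E₁ : ι → Finset (ι → V) := fun a => univ.filter fun f : ι → V =>
    ∑ c, h₁ (f a) (f (nb a)) (f c) <
      ((∑ x, h₁ (f a) (f (nb a)) x) / Fintype.card V - ε) * Fintype.card ι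
  let E₂ : ι × ι → Finset (ι → V) := fun p => if p.1 = p.2 then ∅ else
    univ.filter fun f : ι → V => ∑ c, h₂ (f p.1) (f p.2) (f c) <
      ((∑ x, h₂ (f p.1) (f p.2) x) / Fintype.card V - ε) * Fintype.card ι
  set B : ℝ := Real.exp 1 * Real.exp (-(ε ^ 2 / 4) * L) * n ^ Fintype.card ι with hB
  have hB0 : 0 ≤ B := by positivity
  have hE₁ : ∀ a, (#(E₁ a) : ℝ) ≤ B := fun a =>
    tail_bound h₁ (fun v w x => div_nonneg (hcod0 _ _) hn0.le)
      (fun v w x => (div_le_one hn0).2 (hcodn _ _)) (hnb a).symm hε0 (by linarith)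
  have hE₂ : ∀ p, (#(E₂ p) : ℝ) ≤ B := by
    intro p
    simp only [E₂]
    split_ifs with hp
    · simpa using hB0
    · exact tail_bound h₂ (fun v w x => by simp only [h₂]; split_ifs <;> simp)
        (fun v w x => by simp only [h₂]; split_ifs <;> simp) hp hε0 (by linarith)
  have hsub : (univ.filter fun f : ι → V => ¬ Ore (δ / 2) fun a b c => G (f a) (f b) (f c)) ⊆
      univ.biUnion E₁ ∪ univ.biUnion E₂ := by
    intro f hf
    by_contra hnot
    simp only [mem_union, mem_biUnion, mem_univ, true_and, not_or, not_exists] at hnot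
    obtain ⟨hn1, hn2⟩ := hnot
    simp only [mem_filter, mem_univ, true_and] at hf
    apply hf
    have hdeg : ∀ a : ι, L ^ 2 * (dg G (f a) / n ^ 2 - 2 * ε) ≤
        dg (fun a b c => G (f a) (f b) (f c)) a := by
      intro a
      have e1 : L * (dg G (f a) / n ^ 2 - ε) ≤ ∑ b, cod (f a) (f b) / n := by
        have := hn1 a
        simp only [E₁, mem_filter, mem_univ, true_and, not_lt, h₁] at this
        refine le_trans (le_of_eq ?_) this
        rw [dg_eq_sum_ite, ← Finset.sum_div, div_div, ← sq, mul_comm]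
      have e2 : ∀ b, L * (cod (f a) (f b) / n - ε) ≤
          ∑ c, if G (f a) (f b) (f c) then (1 : ℝ) else 0 := by
        intro b
        by_cases hb : a = b
        · subst hb
          have hz : ∀ y, ¬ G (f a) (f a) y := fun y e => h3.ne e rfl
          simp only [cod, hz, if_false, sum_const_zero, zero_div, zero_sub]
          nlinarith
        · have := hn2 (a, b)
          simp only [E₂, if_neg hb, mem_filter, mem_univ, true_and, not_lt, h₂] at this
          refine le_trans (le_of_eq ?_) this
          rw [mul_comm]
      calc L ^ 2 * (dg G (f a) / n ^ 2 - 2 * ε)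
          = L * (L * (dg G (f a) / n ^ 2 - ε) - L * ε) := by ring
        _ ≤ L * (∑ b, cod (f a) (f b) / n - L * ε) := by gcongr
        _ = ∑ b, L * (cod (f a) (f b) / n - ε) := by
            rw [← Finset.mul_sum, Finset.sum_sub_distrib]
            simp [hL]
        _ ≤ _ := by
            rw [dg_eq_sum_ite]
            exact Finset.sum_le_sum fun b _ => e2 b
    refine ⟨fun a => ?_, ?_⟩
    · by_contra hiso
      push Not at hiso
      have hz : dg (fun a b c => G (f a) (f b) (f c)) a = 0 := by
        unfold dg
        rw [Finset.card_eq_zero, Finset.filter_eq_empty_iff]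
        intro p _
        exact hiso _ _
      have h1 := hdeg a
      rw [hz] at h1
      have h2 : 1 / 3 + δ ≤ dg G (f a) / n ^ 2 := by
        rw [le_div_iff₀ (by positivity)]
        exact hO.dg_ge _
      have h4 : 0 < L ^ 2 * (dg G (f a) / n ^ 2 - 2 * ε) :=
        mul_pos (by positivity) (by linarith)
      push_cast at h1
      linarith
    · intro v w x e
      have h1 := hdeg v
      have h2 := hdeg w
      have h4 : 4 / 3 + δ ≤ dg G (f v) / n ^ 2 + dg G (f w) / n ^ 2 := by
        rw [← add_div, le_div_iff₀ (by positivity)]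
        exact hO.le e
      have h5 : (4 / 3 + δ / 2) * L ^ 2 ≤ L ^ 2 * (dg G (f v) / n ^ 2 - 2 * ε) +
          L ^ 2 * (dg G (f w) / n ^ 2 - 2 * ε) := by
        have h6 := mul_le_mul_of_nonneg_left h4 (sq_nonneg L)
        have h7 : L ^ 2 * ε = L ^ 2 * δ / 8 := by rw [hε]; ring
        linarith
      linarith
  have hc : (#(univ.filter fun f : ι → V => ¬ Ore (δ / 2) fun a b c => G (f a) (f b) (f c)) : ℝ)
      ≤ ∑ a, (#(E₁ a) : ℝ) + ∑ p, (#(E₂ p) : ℝ) := by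
    have h1 := (Finset.card_le_card hsub).trans ((Finset.card_union_le _ _).trans
      (add_le_add Finset.card_biUnion_le Finset.card_biUnion_le))
    exact_mod_cast h1
  have hL1 : 1 ≤ L := by rw [hL]; exact_mod_cast Fintype.card_pos
  calc _ ≤ _ := hc
    _ ≤ ∑ a : ι, B + ∑ p : ι × ι, B := by
      gcongr
      · exact hE₁ _
      · exact hE₂ _
    _ = L * B + L * L * B := by simp [hL]
    _ ≤ L * L * B + L * L * B := by
      gcongr
      nlinarith
    _ = _ := by rw [hB]; ring

/-- For a suitable constant `K`, almost all samples of `3 K` vertices span a perfect matching. -/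
theorem exists_sample_size {δ ε : ℝ} (hδ : 0 < δ) (hδ1 : δ ≤ 1) (hε : 0 < ε) :
    ∃ K : ℕ, 0 < K ∧ ∀ {V : Type} [Fintype V] [Nonempty V] (G : V → V → V → Prop),
      IsThreeGraph G → Ore δ G →
      (#(univ.filter fun f : Fin (3 * K) → V =>
        ¬ HasPM K fun a b c => G (f a) (f b) (f c)) : ℝ) ≤
        ε * (Fintype.card V : ℝ) ^ (3 * K) := by
  have hlim : Filter.Tendsto (fun L : ℝ => 2 * Real.exp 1 *
      (L ^ 2 * Real.exp (-((δ / 8) ^ 2 / 4) * L))) Filter.atTop (nhds (2 * Real.exp 1 * 0)) := by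
    refine Filter.Tendsto.const_mul _ ?_
    have := tendsto_rpow_mul_exp_neg_mul_atTop_nhds_zero 2 ((δ / 8) ^ 2 / 4) (by positivity)
    simpa using this
  rw [mul_zero] at hlim
  have hlim2 : Filter.Tendsto (fun K : ℕ => (3 * K : ℝ)) Filter.atTop Filter.atTop :=
    Filter.Tendsto.const_mul_atTop (by norm_num) tendsto_natCast_atTop_atTop
  have h1 := (hlim.comp hlim2).eventually (gt_mem_nhds hε)
  have h2 := hlim2.eventually (Filter.eventually_gt_atTop (18 / (δ / 2)))
  obtain ⟨K, hK1, hK2, hK3⟩ := (h1.and (h2.and (Filter.eventually_gt_atTop 0))).exists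
  refine ⟨K, hK3, ?_⟩
  intro V _ _ G h3 hO
  have : Nontrivial (Fin (3 * K)) := Fin.nontrivial_iff_two_le.2 (by omega)
  have hs := sample_ore (ι := Fin (3 * K)) hδ hδ1 h3 hO
  have hsub : (univ.filter fun f : Fin (3 * K) → V =>
        ¬ HasPM K fun a b c => G (f a) (f b) (f c)) ⊆
      (univ.filter fun f : Fin (3 * K) → V =>
        ¬ Ore (δ / 2) fun a b c => G (f a) (f b) (f c)) := by
    intro f
    simp only [mem_filter, mem_univ, true_and]
    refine mt fun hOre => ?_
    refine single_pm (half_pos hδ) ?_ (by simp) _ (h3.pull f) hOre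
    rw [div_lt_iff₀ (half_pos hδ)] at hK2
    linarith
  have hle : (#(univ.filter fun f : Fin (3 * K) → V =>
        ¬ HasPM K fun a b c => G (f a) (f b) (f c)) : ℝ) ≤ _ :=
    (Nat.cast_le.2 (Finset.card_le_card hsub)).trans hs
  refine hle.trans ?_
  simp only [Fintype.card_fin]
  gcongr
  simp only [Function.comp] at hK1
  push_cast
  linarith

/-! ### Almost perfect rainbow matchings -/

/-- The random injection `σ ∘ j` is at most `n ^ L / (n)_L` times as likely to be in a given set as
a random function. -/
theorem card_perm_le {V : Type} [Fintype V] {L : ℕ} (j : Fin L ↪ V) (P : (Fin L → V) → Prop) :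
    #(univ.filter fun σ : Equiv.Perm V => P (σ ∘ j)) * (Fintype.card V).descFactorial L ≤
      #(univ.filter P) * (Fintype.card V).factorial := by
  have key : ∀ f : Fin L → V, #(univ.filter fun σ : Equiv.Perm V => σ ∘ j = f) *
      (Fintype.card V).descFactorial L ≤ (Fintype.card V).factorial := by
    intro f
    by_cases hf : Function.Injective f
    · have hτ : ∀ g : Fin L ↪ V, ∃ τ : Equiv.Perm V, ⇑τ ∘ f = g := by
        intro g
        obtain ⟨τ, hτ⟩ := Equiv.Perm.exists_extending_pair f g hf g.injective
        exact ⟨τ, funext hτ⟩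
      choose τ hτ using hτ
      have h1 : #((univ.filter fun σ : Equiv.Perm V => σ ∘ j = f) ×ˢ
          (univ : Finset (Fin L ↪ V))) ≤ #(univ : Finset (Equiv.Perm V)) := by
        refine Finset.card_le_card_of_injOn (fun p => τ p.2 * p.1) (by simp) ?_
        rintro ⟨σ, g⟩ h ⟨σ', g'⟩ h' he
        simp only [coe_product, Set.mem_prod, coe_filter, mem_univ, true_and,
          Set.mem_ofPred_eq, coe_univ, Set.mem_univ, and_true] at h h' he
        have hg : g = g' := by
          apply DFunLike.coe_injective
          rw [← hτ g, ← hτ g', ← h]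
          conv_rhs => rw [h, ← h']
          rw [← Function.comp_assoc, ← Function.comp_assoc, ← Equiv.Perm.coe_mul,
            ← Equiv.Perm.coe_mul, he]
        subst hg
        rw [mul_left_cancel he]
      simpa [Fintype.card_perm] using h1
    · rw [Finset.filter_false_of_mem]
      · simp
      · intro σ _ h
        apply hf
        rw [← h]
        exact σ.injective.comp j.injective
  have h2 : (univ.filter fun σ : Equiv.Perm V => P (σ ∘ j)) ⊆
      (univ.filter P).biUnion fun f => univ.filter fun σ : Equiv.Perm V => σ ∘ j = f := by
    intro σ h
    simp only [mem_filter, mem_univ, true_and] at h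
    simpa using h
  calc _ ≤ (∑ f ∈ univ.filter P, #(univ.filter fun σ : Equiv.Perm V => σ ∘ j = f)) *
        (Fintype.card V).descFactorial L :=
        Nat.mul_le_mul_right _ ((Finset.card_le_card h2).trans Finset.card_biUnion_le)
    _ ≤ ∑ f ∈ univ.filter P, (Fintype.card V).factorial := by
        rw [Finset.sum_mul]
        exact Finset.sum_le_sum fun f _ => key f
    _ = _ := by simp

theorem half_pow_le_descFactorial {n L : ℕ} (h : 2 * L ^ 2 ≤ n) :
    (n : ℝ) ^ L / 2 ≤ n.descFactorial L := by
  rcases Nat.eq_zero_or_pos L with rfl | hL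
  · simp; norm_num
  have hn : 0 < n := by nlinarith
  have hLn : L ≤ n := by nlinarith
  have hn' : (0 : ℝ) < n := by exact_mod_cast hn
  have h1 : (((n + 1 - L : ℕ) : ℝ)) ^ L ≤ n.descFactorial L := by
    exact_mod_cast Nat.pow_sub_le_descFactorial n L
  refine le_trans ?_ h1
  have h2 : ((n + 1 - L : ℕ) : ℝ) = n * (1 + -((L - 1) / n)) := by
    rw [Nat.cast_sub (by omega)]
    push_cast
    field_simp
    ring
  rw [h2, mul_pow, div_eq_mul_inv]
  gcongr
  have hL1 : (1 : ℝ) ≤ L := by exact_mod_cast hL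
  have h' : 2 * (L : ℝ) ^ 2 ≤ n := by exact_mod_cast h
  have h3 : ((L : ℝ) - 1) / n ≤ 1 / (2 * L) := by
    rw [div_le_div_iff₀ hn' (by positivity)]
    nlinarith
  have h4 : (L : ℝ) * (1 / (2 * L)) = 1 / 2 := by field_simp
  have h6 : 1 / (2 * (L : ℝ)) ≤ 1 := by
    rw [div_le_one (by positivity)]
    linarith
  have h5 := one_add_mul_le_pow (a := -(((L : ℝ) - 1) / n)) (by linarith) L
  refine le_trans ?_ h5
  have h7 := mul_le_mul_of_nonneg_left h3 (by positivity : (0 : ℝ) ≤ L)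
  linarith

/-- Some injection places `B` disjoint blocks of `3 K` vertices so that most pairs of a block and
a colour are good, in the sense that the colour has a perfect matching of the block. -/
theorem exists_blocks {ε : ℝ} {K B : ℕ} {Q V : Type} [Fintype Q] [Fintype V]
    [Nonempty V] (hB : B * (3 * K) ≤ Fintype.card V) (hn : 2 * (3 * K) ^ 2 ≤ Fintype.card V)
    {G : Q → V → V → V → Prop}
    (hG : ∀ i, (#(univ.filter fun f : Fin (3 * K) → V =>
        ¬ HasPM K fun a b c => G i (f a) (f b) (f c)) : ℝ) ≤
        ε * (Fintype.card V : ℝ) ^ (3 * K)) :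
    ∃ f : Fin B × Fin (3 * K) → V, Function.Injective f ∧
      (#(univ.filter fun p : Fin B × Q =>
        ¬ HasPM K fun x y z => G p.2 (f (p.1, x)) (f (p.1, y)) (f (p.1, z))) : ℝ) ≤
        2 * ε * B * Fintype.card Q := by
  obtain ⟨j⟩ : Nonempty (Fin B × Fin (3 * K) ↪ V) := by
    apply Function.Embedding.nonempty_of_card_le
    simpa using hB
  set n := Fintype.card V with hnd
  have hn0 : 0 < n := Fintype.card_pos
  let jb : Fin B → Fin (3 * K) ↪ V := fun b => ⟨fun x => j (b, x), fun x y h => by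
    simpa using j.injective h⟩
  let bad : Equiv.Perm V → Fin B × Q → Prop := fun σ p =>
    ¬ HasPM K fun x y z => G p.2 (σ (j (p.1, x))) (σ (j (p.1, y))) (σ (j (p.1, z)))
  have hp : ∀ p : Fin B × Q, (#(univ.filter fun σ : Equiv.Perm V => bad σ p) : ℝ) ≤
      2 * ε * n.factorial := by
    intro p
    have h1 := card_perm_le (jb p.1) fun f => ¬ HasPM K fun a b c => G p.2 (f a) (f b) (f c)
    have h2 : (#(univ.filter fun σ : Equiv.Perm V => bad σ p) : ℝ) * n.descFactorial (3 * K) ≤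
        #(univ.filter fun f : Fin (3 * K) → V =>
        ¬ HasPM K fun a b c => G p.2 (f a) (f b) (f c)) * n.factorial := by
      have h1' : #(univ.filter fun σ : Equiv.Perm V => bad σ p) * n.descFactorial (3 * K) ≤
          #(univ.filter fun f : Fin (3 * K) → V =>
            ¬ HasPM K fun a b c => G p.2 (f a) (f b) (f c)) * n.factorial := by
        convert h1 <;> rfl
      exact_mod_cast h1'
    have h3 := half_pow_le_descFactorial hn
    have h4 := hG p.2
    have h5 : (0 : ℝ) < (n : ℝ) ^ (3 * K) / 2 := by positivity
    refine le_of_mul_le_mul_right (a := (n : ℝ) ^ (3 * K) / 2) ?_ h5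
    calc _ ≤ (#(univ.filter fun σ : Equiv.Perm V => bad σ p) : ℝ) * n.descFactorial (3 * K) := by
          gcongr
      _ ≤ _ := h2
      _ ≤ (ε * (n : ℝ) ^ (3 * K)) * n.factorial := by gcongr
      _ = _ := by ring
  have hsum : ∑ σ : Equiv.Perm V, (#(univ.filter fun p => bad σ p) : ℝ) ≤
      ∑ σ : Equiv.Perm V, 2 * ε * B * Fintype.card Q := by
    have : ∑ σ : Equiv.Perm V, (#(univ.filter fun p => bad σ p) : ℝ) =
        ∑ p, (#(univ.filter fun σ : Equiv.Perm V => bad σ p) : ℝ) := by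
      simp only [Finset.card_filter, Nat.cast_sum]
      exact Finset.sum_comm
    rw [this]
    calc _ ≤ ∑ p : Fin B × Q, 2 * ε * (n.factorial : ℝ) := Finset.sum_le_sum fun p _ => hp p
      _ = _ := by
        simp only [sum_const, card_univ, Fintype.card_prod, Fintype.card_fin, nsmul_eq_mul,
          Fintype.card_perm, ← hnd, Nat.cast_mul]
        ring
  obtain ⟨σ, -, hσ⟩ := Finset.exists_le_of_sum_le Finset.univ_nonempty hsum
  exact ⟨fun p => σ (j p), σ.injective.comp j.injective, hσ⟩

/-- Greedy assignment of `K` colours each to `S` of the `B` blocks: as long as the good pairs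
are dense among the remaining blocks and colours, some block has `K` remaining colours with a
common perfect matching. -/
theorem greedy_blocks {K B S : ℕ} {Q V : Type} [Fintype Q] [Nonempty Q]
    {G : Q → V → V → V → Prop} (f : Fin B × Fin (3 * K) → V) (D : ℝ)
    (hD : (#(univ.filter fun p : Fin B × Q =>
        ¬ HasPM K fun x y z => G p.2 (f (p.1, x)) (f (p.1, y)) (f (p.1, z))) : ℝ) ≤ D)
    (hS : ∀ s : ℕ, s < S → s ≤ B ∧ D < ((B : ℝ) - s) * (Fintype.card Q - s * K -
      K * Fintype.card (Fin K × Fin 3 ≃ Fin (3 * K)))) :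
    ∀ s ≤ S, ∃ (A : Finset (Fin B)) (C : Fin B → Fin K → Q)
      (ψ : Fin B → (Fin K × Fin 3 ≃ Fin (3 * K))), #A = s ∧
      (∀ b ∈ A, ∀ b' ∈ A, ∀ k k', C b k = C b' k' → b = b' ∧ k = k') ∧
      ∀ b ∈ A, ∀ k, G (C b k) (f (b, ψ b (k, 0))) (f (b, ψ b (k, 1))) (f (b, ψ b (k, 2))) := by
  set ℓ := Fintype.card (Fin K × Fin 3 ≃ Fin (3 * K)) with hℓ
  have lab0 : Nonempty (Fin K × Fin 3 ≃ Fin (3 * K)) :=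
    ⟨(Fintype.equivFinOfCardEq (by simp [mul_comm]))⟩
  intro s
  induction s with
  | zero =>
    intro _
    exact ⟨∅, fun _ _ => Classical.arbitrary _, fun _ => Classical.arbitrary _, by simp⟩
  | succ s ih =>
    intro hs
    obtain ⟨A, C, ψ, hA, hC, hψ⟩ := ih (by omega)
    obtain ⟨hsB, hlt⟩ := hS s (by omega)
    let U : Finset Q := (A ×ˢ (univ : Finset (Fin K))).image fun p => C p.1 p.2
    have hU : #U ≤ s * K := by
      refine Finset.card_image_le.trans ?_
      rw [Finset.card_product, hA]
      simp
    let good : Fin B → Q → Prop := fun b i =>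
      HasPM K fun x y z => G i (f (b, x)) (f (b, y)) (f (b, z))
    obtain ⟨b, hbA, hb⟩ : ∃ b, b ∉ A ∧ ℓ * K ≤ #(Uᶜ.filter fun i => good b i) := by
      by_contra hno
      push Not at hno
      have h1 : ∀ b ∈ Aᶜ, ((Fintype.card Q : ℝ) - s * K - K * ℓ) ≤
          #(Uᶜ.filter fun i => ¬ good b i) := by
        intro b hb
        have h2 := hno b (by simpa using hb)
        have h3 := Finset.card_filter_add_card_filter_not (s := Uᶜ) (fun i => good b i)
        have h4 := Finset.card_compl_add_card U
        have h2' : (#(Uᶜ.filter fun i => good b i) : ℝ) < ℓ * K := by exact_mod_cast h2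
        have h3' : (#(Uᶜ.filter fun i => good b i) : ℝ) + #(Uᶜ.filter fun i => ¬ good b i) = #Uᶜ := by
          exact_mod_cast h3
        have h4' : (#Uᶜ : ℝ) + #U = Fintype.card Q := by exact_mod_cast h4
        have hU' : (#U : ℝ) ≤ s * K := by exact_mod_cast hU
        nlinarith
      have h5 : ∑ b ∈ Aᶜ, #(Uᶜ.filter fun i => ¬ good b i) ≤
          #(univ.filter fun p : Fin B × Q => ¬ good p.1 p.2) := by
        rw [← Finset.card_sigma]
        refine Finset.card_le_card_of_injOn (fun p => (p.1, p.2)) ?_ ?_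
        · rintro ⟨b, i⟩ h
          simp only [coe_sigma, Set.mem_sigma_iff, mem_coe, mem_filter] at h
          simpa using h.2.2
        · rintro ⟨b, i⟩ _ ⟨b', i'⟩ _ h
          simp only [Prod.mk.injEq] at h
          obtain ⟨rfl, rfl⟩ := h
          rfl
      have h6 := Finset.card_nsmul_le_sum _ _ _ h1
      have h7 : (#Aᶜ : ℝ) = B - s := by
        rw [Finset.card_compl, hA, Fintype.card_fin, Nat.cast_sub hsB]
      rw [nsmul_eq_mul, h7] at h6
      have h8 : (∑ b ∈ Aᶜ, (#(Uᶜ.filter fun i => ¬ good b i) : ℝ)) ≤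
          #(univ.filter fun p : Fin B × Q => ¬ good p.1 p.2) := by exact_mod_cast h5
      linarith [h8.trans hD]
    have hlab : ∀ i : Q, ∃ φ : Fin K × Fin 3 ≃ Fin (3 * K), good b i →
        ∀ k, G i (f (b, φ (k, 0))) (f (b, φ (k, 1))) (f (b, φ (k, 2))) := by
      intro i
      by_cases h : good b i
      · obtain ⟨φ, hφ⟩ := h
        exact ⟨φ, fun _ => hφ⟩
      · exact ⟨Classical.arbitrary _, fun hcon => absurd hcon h⟩
    -- There are only `ℓ` labellings of a block, so `K` of the `ℓ K` good colours share one.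
    choose lab hlab using hlab
    obtain ⟨φ, -, hφ⟩ := Finset.exists_le_card_fiber_of_mul_le_card_of_maps_to
      (s := Uᶜ.filter fun i => good b i) (t := univ) (f := lab) (n := K) (by simp)
      Finset.univ_nonempty (by simpa [hℓ] using hb)
    obtain ⟨e⟩ : Nonempty (Fin K ↪ ((Uᶜ.filter fun i => good b i).filter fun i => lab i = φ)) := by
      apply Function.Embedding.nonempty_of_card_le
      rw [Fintype.card_coe, Fintype.card_fin]
      exact hφ
    have he : ∀ k, (e k : Q) ∉ U ∧ good b (e k) ∧ lab (e k) = φ := by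
      intro k
      have h := (e k).2
      rw [mem_filter, mem_filter, mem_compl, and_assoc] at h
      exact h
    have hUm : ∀ b' ∈ A, ∀ k, C b' k ∈ U := fun b' hb' k =>
      Finset.mem_image.2 ⟨(b', k), by simpa using hb', rfl⟩
    refine ⟨insert b A, Function.update C b fun k => e k, Function.update ψ b φ, ?_, ?_, ?_⟩
    · rw [Finset.card_insert_of_notMem hbA, hA]
    · intro b₁ h₁ b₂ h₂ k k' h
      rw [mem_insert] at h₁ h₂
      by_cases e₁ : b₁ = b <;> by_cases e₂ : b₂ = b
      · subst e₁ e₂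
        simp only [Function.update_self] at h
        exact ⟨rfl, e.injective (Subtype.ext h)⟩
      · subst e₁
        rw [Function.update_self, Function.update_of_ne e₂] at h
        exact absurd (h ▸ hUm b₂ (by tauto) k') (he k).1
      · subst e₂
        rw [Function.update_self, Function.update_of_ne e₁] at h
        exact absurd (h ▸ hUm b₁ (by tauto) k) (he k').1
      · rw [Function.update_of_ne e₁, Function.update_of_ne e₂] at h
        exact hC b₁ (by tauto) b₂ (by tauto) k k' h
    · intro b₁ h₁ k
      rw [mem_insert] at h₁
      by_cases e₁ : b₁ = b
      · subst e₁
        simp only [Function.update_self]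
        obtain ⟨-, hg, hl⟩ := he k
        have := hlab _ hg k
        rwa [hl] at this
      · simp only [Function.update_of_ne e₁]
        exact hψ b₁ (by tauto) k

/-- Rainbow matchings covering all but an `η`-fraction of the colours. -/
theorem near_perfect {δ η : ℝ} (hδ : 0 < δ) (hδ1 : δ ≤ 1) (hη : 0 < η) (hη1 : η ≤ 1) :
    ∃ m₀ : ℕ, ∀ m ≥ m₀, ∀ {Q V : Type} [Fintype Q] [Fintype V], Fintype.card Q = m →
      Fintype.card V = 3 * m → ∀ G : Q → V → V → V → Prop, (∀ i, IsThreeGraph (G i)) →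
      (∀ i, Ore δ (G i)) → ∃ (t : ℕ) (c : Fin t → Q) (φ : Fin t × Fin 3 → V),
        Function.Injective c ∧ Function.Injective φ ∧
        (∀ i, G (c i) (φ (i, 0)) (φ (i, 1)) (φ (i, 2))) ∧ (m : ℝ) - t ≤ η * m := by
  have hε : 0 < η ^ 2 / 32 := by positivity
  obtain ⟨K, hK, hKG⟩ := exists_sample_size hδ hδ1 hε
  set ℓ := Fintype.card (Fin K × Fin 3 ≃ Fin (3 * K)) with hℓ
  have hℓ1 : 1 ≤ ℓ := by
    have : Nonempty (Fin K × Fin 3 ≃ Fin (3 * K)) :=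
      ⟨(Fintype.equivFinOfCardEq (by simp [mul_comm]))⟩
    exact Fintype.card_pos
  obtain ⟨m₀, hm₀⟩ := exists_nat_gt (4 * K * ℓ / η + 6 * K ^ 2)
  refine ⟨m₀, ?_⟩
  intro m hm Q V _ _ hQ hV G h3 hO
  have hm' : 4 * K * ℓ / η + 6 * K ^ 2 < (m : ℝ) := hm₀.trans_le (by exact_mod_cast hm)
  have hK' : (0 : ℝ) < K := by exact_mod_cast hK
  have hℓ' : (1 : ℝ) ≤ ℓ := by exact_mod_cast hℓ1
  have hq : 0 < 4 * K * ℓ / η := by positivity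
  have hm1 : 6 * (K : ℝ) ^ 2 < m := by linarith
  have hm2 : 4 * K * ℓ < η * m := by
    have : 4 * K * ℓ / η < m := by nlinarith
    rw [div_lt_iff₀ hη] at this
    linarith
  have hm1' : 6 * K ^ 2 < m := by exact_mod_cast hm1
  have hm0 : 0 < m := by omega
  have : Nonempty Q := Fintype.card_pos_iff.1 (by omega)
  have : Nonempty V := Fintype.card_pos_iff.1 (by omega)
  set B := m / K with hB
  have hBK : B * K ≤ m := Nat.div_mul_le_self m K
  have hBK2 : m < (B + 1) * K := by
    rw [hB, add_mul, one_mul, mul_comm]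
    exact Nat.lt_mul_div_succ m hK |>.trans_eq (by ring)
  have hB0 : 0 < B := Nat.div_pos (by nlinarith) hK
  obtain ⟨f, hf, hbad⟩ := exists_blocks (B := B) (K := K) (by rw [hV]; nlinarith)
    (by rw [hV]; nlinarith) (fun i => hKG (G i) (h3 i) (hO i))
  set S := ⌊(1 - η / 2) * B⌋₊ with hS
  have hSle : (S : ℝ) ≤ (1 - η / 2) * B :=
    Nat.floor_le (mul_nonneg (by linarith) (by positivity))
  have hSge : (1 - η / 2) * B < S + 1 := Nat.lt_floor_add_one _
  have hBr : (0 : ℝ) < B := by exact_mod_cast hB0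
  have hBKr : (B : ℝ) * K ≤ m := by exact_mod_cast hBK
  have hBK2r : (m : ℝ) < (B + 1) * K := by exact_mod_cast hBK2
  have hmr : (0 : ℝ) < m := by exact_mod_cast hm0
  obtain ⟨A, C, ψ, hA, hC, hψ⟩ := greedy_blocks (S := S) f _ hbad (by
    intro s hs
    have hs' : (s : ℝ) < S := by exact_mod_cast hs
    have h1 : η / 2 * B ≤ B - s := by nlinarith
    refine ⟨by
      have : (s : ℝ) ≤ B := by nlinarith
      exact_mod_cast this, ?_⟩
    have h2 : η / 4 * m ≤ (m : ℝ) - s * K - K * ℓ := by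
      have : (s : ℝ) * K ≤ (1 - η / 2) * m := by
        calc (s : ℝ) * K ≤ ((1 - η / 2) * B) * K := by gcongr; linarith
          _ = (1 - η / 2) * (B * K) := by ring
          _ ≤ (1 - η / 2) * m := by
            apply mul_le_mul_of_nonneg_left hBKr
            linarith
      nlinarith
    rw [hQ]
    calc 2 * (η ^ 2 / 32) * B * (m : ℝ) < (η / 2 * B) * (η / 4 * m) := by
          have : 0 < η ^ 2 * B * m := by positivity
          nlinarith
      _ ≤ _ := mul_le_mul h1 h2 (by positivity) ((by positivity : 0 ≤ η / 2 * B).trans h1)) S le_rfl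
  let e : Fin S ≃ A := (Fintype.equivFinOfCardEq (by simp [hA])).symm
  let e2 : Fin (S * K) ≃ A × Fin K := finProdFinEquiv.symm.trans (e.prodCongr (Equiv.refl _))
  refine ⟨S * K, fun i => C (e2 i).1 (e2 i).2,
    fun p => f ((e2 p.1).1, ψ (e2 p.1).1 ((e2 p.1).2, p.2)), ?_, ?_, ?_, ?_⟩
  · intro i i' h
    have := hC _ (e2 i).1.2 _ (e2 i').1.2 _ _ h
    exact e2.injective (Prod.ext (Subtype.ext this.1) this.2)
  · rintro ⟨i, r⟩ ⟨i', r'⟩ h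
    have h1 := hf h
    simp only [Prod.mk.injEq] at h1
    obtain ⟨h1, h2⟩ := h1
    rw [h1] at h2
    have h3 := (ψ _).injective h2
    simp only [Prod.mk.injEq] at h3
    have := e2.injective (Prod.ext (Subtype.ext h1) h3.1)
    rw [this, h3.2]
  · intro i
    exact hψ _ (e2 i).1.2 _
  · push_cast
    have h1 : ((1 - η / 2) * B) * K ≤ (S + 1) * K := by gcongr
    have h2 : (η / 2) * (B * K) ≤ η / 2 * m := by gcongr
    have h3 : K * (1 : ℝ) ≤ K * ℓ := by gcongr
    linarith

/-! ### Deleting few vertices -/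

theorem dg_le_dg_pull {V W : Type} [Fintype V] [Fintype W] (G : V → V → V → Prop) {f : W → V}
    (hf : Function.Injective f) (w : W) :
    (dg G (f w) : ℝ) ≤ dg (fun a b c => G (f a) (f b) (f c)) w +
      2 * ((Fintype.card V : ℝ) - Fintype.card W) * Fintype.card V := by
  let I : Finset V := univ.image f
  have hI : #I = Fintype.card W := by
    rw [Finset.card_image_of_injective _ hf, Finset.card_univ]
  have hsub : (univ.filter fun p : V × V => G (f w) p.1 p.2) ⊆
      ((univ.filter fun p : W × W => G (f w) (f p.1) (f p.2)).image (Prod.map f f)) ∪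
      (Iᶜ ×ˢ univ ∪ univ ×ˢ Iᶜ) := by
    rintro ⟨a, b⟩ h
    simp only [mem_filter, mem_univ, true_and] at h
    by_cases ha : a ∈ I
    · by_cases hb : b ∈ I
      · obtain ⟨a', -, rfl⟩ := Finset.mem_image.1 ha
        obtain ⟨b', -, rfl⟩ := Finset.mem_image.1 hb
        apply Finset.mem_union_left
        exact Finset.mem_image.2 ⟨(a', b'), by simpa using h, rfl⟩
      · simp [hb]
    · simp [ha]
  have h1 : dg G (f w) ≤ dg (fun a b c => G (f a) (f b) (f c)) w +
      (#Iᶜ * Fintype.card V + Fintype.card V * #Iᶜ) := by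
    refine (Finset.card_le_card hsub).trans ((Finset.card_union_le _ _).trans
      (add_le_add Finset.card_image_le ((Finset.card_union_le _ _).trans ?_)))
    simp only [Finset.card_product, Finset.card_univ, le_refl]
  have h2 : (#Iᶜ : ℝ) = Fintype.card V - Fintype.card W := by
    have := Finset.card_compl_add_card I
    rw [hI] at this
    rw [← this]
    push_cast
    ring
  have h3 : (dg G (f w) : ℝ) ≤ dg (fun a b c => G (f a) (f b) (f c)) w +
      (#Iᶜ * Fintype.card V + Fintype.card V * #Iᶜ) := by exact_mod_cast h1
  rw [h2] at h3
  linarith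

theorem Ore.restrict {V W : Type} [Fintype V] [Fintype W] [Nonempty V] {δ : ℝ} (hδ : 0 < δ)
    {G : V → V → V → Prop} (hO : Ore δ G) {f : W → V} (hf : Function.Injective f)
    (hR : 4 * ((Fintype.card V : ℝ) - Fintype.card W) ≤ δ / 2 * Fintype.card V) :
    Ore (δ / 2) fun a b c => G (f a) (f b) (f c) := by
  have hWV : (Fintype.card W : ℝ) ≤ Fintype.card V := by
    exact_mod_cast Fintype.card_le_of_injective f hf
  set N : ℝ := (Fintype.card V : ℝ) with hN
  have hN0 : 0 < N := by rw [hN]; exact_mod_cast Fintype.card_pos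
  have hRN := mul_le_mul_of_nonneg_right hR hN0.le
  refine ⟨fun w => ?_, ?_⟩
  · by_contra hiso
    push Not at hiso
    have hz : dg (fun a b c => G (f a) (f b) (f c)) w = 0 := by
      unfold dg
      rw [Finset.card_eq_zero, Finset.filter_eq_empty_iff]
      intro p _
      exact hiso _ _
    have h1 := dg_le_dg_pull G hf w
    have h2 := hO.dg_ge (f w)
    rw [hz] at h1
    push_cast at h1
    have h5 : 0 < δ * N ^ 2 := by positivity
    have h6 : 0 < N ^ 2 := by positivity
    nlinarith
  · intro v w x e
    have h1 := dg_le_dg_pull G hf v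
    have h2 := dg_le_dg_pull G hf w
    have h3 := hO.le e
    have h4 : (Fintype.card W : ℝ) ^ 2 ≤ N ^ 2 := by gcongr
    have h5 := mul_le_mul_of_nonneg_left h4 (by positivity : 0 ≤ 4 / 3 + δ / 2)
    nlinarith

/-! ### Counting absorbers -/

/-- The light vertices: at most about two thirds of all pairs lie in the link. -/
noncomputable def light {V : Type} [Fintype V] (δ : ℝ) (G : V → V → V → Prop) : Finset V :=
  univ.filter fun v => (dg G v : ℝ) < (2 / 3 + δ / 2) * (Fintype.card V : ℝ) ^ 2

theorem le_dg_of_notMem_light {V : Type} [Fintype V] {δ : ℝ} {G : V → V → V → Prop} {v : V}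
    (h : v ∉ light δ G) : (2 / 3 + δ / 2) * (Fintype.card V : ℝ) ^ 2 ≤ dg G v := by
  simpa [light] using h

/-- By the Ore condition no edge contains two light vertices, which bounds the degrees of both
ends of an edge through a light vertex. -/
theorem card_light_le {V : Type} [Fintype V] {δ : ℝ} {G : V → V → V → Prop}
    (h3 : IsThreeGraph G) (hO : Ore δ G) (hδ : δ ≤ 2 / 3) :
    (#(light δ G) : ℝ) ≤ (1 / 3 - δ / 2) * Fintype.card V := by
  set N : ℝ := (Fintype.card V : ℝ) with hN
  have hN0 : 0 ≤ N := by positivity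
  set S := light δ G with hS
  have hSS : ∀ {v w x}, v ∈ S → w ∈ S → ¬ G v w x := by
    intro v w x hv hw e
    have := hO.le e
    simp only [hS, light, mem_filter, mem_univ, true_and] at hv hw
    linarith
  rcases S.eq_empty_or_nonempty with hem | ⟨s, hs⟩
  · rw [hem]
    simp only [card_empty, Nat.cast_zero]
    exact mul_nonneg (by linarith) hN0
  obtain ⟨w, x, e⟩ := hO.exists_edge s
  have hsc : (#Sᶜ : ℝ) = N - #S := by
    rw [eq_sub_iff_add_eq, hN]
    exact_mod_cast Finset.card_compl_add_card S
  have h1 : (dg G s : ℝ) ≤ (N - #S) ^ 2 := by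
    rw [sq, ← hsc]
    have : dg G s ≤ #(Sᶜ ×ˢ Sᶜ) := by
      refine Finset.card_le_card ?_
      rintro ⟨a, b⟩ h
      simp only [mem_filter, mem_univ, true_and] at h
      simp only [mem_product, mem_compl]
      exact ⟨fun ha => hSS hs ha h, fun hb => hSS hs hb (h3.swap₂ h)⟩
    rw [Finset.card_product] at this
    exact_mod_cast this
  have h2 : (dg G w : ℝ) + #S ^ 2 ≤ N ^ 2 := by
    have : dg G w + #(S ×ˢ S) ≤ Fintype.card (V × V) := by
      unfold dg
      rw [← Finset.card_union_of_disjoint]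
      · exact Finset.card_le_univ _
      · rw [Finset.disjoint_left]
        rintro ⟨a, b⟩ h h'
        simp only [mem_filter, mem_univ, true_and] at h
        rw [mem_product] at h'
        exact hSS h'.1 h'.2 (h3.rot h)
    rw [Finset.card_product, Fintype.card_prod] at this
    rw [sq, sq, hN]
    exact_mod_cast this
  have h4 := hO.le e
  rw [← hN] at h4
  have hNpos : 0 < N := by
    rw [hN]
    exact_mod_cast Fintype.card_pos_iff.2 ⟨s⟩
  have h5 : N * #S ≤ N * ((1 / 3 - δ / 2) * N) := by nlinarith
  exact le_of_mul_le_mul_left h5 hNpos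

theorem card_inter_ge {α : Type} [Fintype α] (p q : α → Prop) [DecidablePred p]
    [DecidablePred q] :
    (#(univ.filter p) : ℝ) + #(univ.filter q) - Fintype.card α ≤
      #(univ.filter fun x => p x ∧ q x) := by
  have h1 := Finset.card_union_add_card_inter (univ.filter p) (univ.filter q)
  have h2 := Finset.card_le_univ (univ.filter p ∪ univ.filter q)
  rw [← Finset.filter_and] at h1
  have h1' : (#(univ.filter p ∪ univ.filter q) : ℝ) + #(univ.filter fun x => p x ∧ q x) =
    #(univ.filter p) + #(univ.filter q) := by exact_mod_cast h1
  have h2' : (#(univ.filter p ∪ univ.filter q) : ℝ) ≤ Fintype.card α := by exact_mod_cast h2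
  linarith

/-- Light vertices have degree at least a third and the others at least two thirds of `|V|²`, and at
most a third of the vertices are light. -/
theorem card_edges_ge {V : Type} [Fintype V] {δ : ℝ} {G : V → V → V → Prop}
    (h3 : IsThreeGraph G) (hO : Ore δ G) (hδ0 : 0 < δ) (hδ : δ ≤ 2 / 3) :
    5 / 9 * (Fintype.card V : ℝ) ^ 3 ≤
      #(univ.filter fun t : V × V × V => G t.1 t.2.1 t.2.2) := by
  set N : ℝ := (Fintype.card V : ℝ) with hN
  have h1 : (#(univ.filter fun t : V × V × V => G t.1 t.2.1 t.2.2) : ℝ) = ∑ v, (dg G v : ℝ) := by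
    simp only [dg, Finset.card_filter]
    rw [Fintype.sum_prod_type]
    push_cast
    rfl
  rw [h1, ← Finset.sum_add_sum_compl (light δ G)]
  have h2 : #(light δ G) * (1 / 3 * N ^ 2) ≤ ∑ v ∈ light δ G, (dg G v : ℝ) := by
    rw [← nsmul_eq_mul]
    refine Finset.card_nsmul_le_sum _ _ _ fun v _ => ?_
    have := hO.dg_ge v
    rw [← hN] at this
    have h5 : 0 ≤ δ * N ^ 2 := by positivity
    linarith
  have h4 : #(light δ G)ᶜ * (2 / 3 * N ^ 2) ≤ ∑ v ∈ (light δ G)ᶜ, (dg G v : ℝ) := by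
    rw [← nsmul_eq_mul]
    refine Finset.card_nsmul_le_sum _ _ _ fun v hv => ?_
    have := le_dg_of_notMem_light (mem_compl.1 hv)
    rw [← hN] at this
    have h5 : 0 ≤ δ * N ^ 2 := by positivity
    linarith
  have hsc : (#(light δ G)ᶜ : ℝ) = N - #(light δ G) := by
    rw [eq_sub_iff_add_eq, hN]
    exact_mod_cast Finset.card_compl_add_card (light δ G)
  rw [hsc] at h4
  have h6 := card_light_le h3 hO hδ
  rw [← hN] at h6
  have h7 : (#(light δ G) : ℝ) * N ^ 2 ≤ (1 / 3 * N) * N ^ 2 := by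
    gcongr
    have : 0 ≤ δ * N := by positivity
    linarith
  nlinarith

/-- The vertices that are light in all but a `δ`-fraction of the colours. -/
noncomputable def mostlyLight {Q V : Type} [Fintype Q] [Fintype V] (δ : ℝ)
    (G : Q → V → V → V → Prop) : Finset V :=
  univ.filter fun v => (#(univ.filter fun i => v ∉ light δ (G i)) : ℝ) < δ * Fintype.card Q

theorem card_mostlyLight_le {Q V : Type} [Fintype Q] [Nonempty Q] [Fintype V] {δ : ℝ}
    (hδ0 : 0 < δ) (hδ : δ ≤ 1 / 2)
    {G : Q → V → V → V → Prop} (h3 : ∀ i, IsThreeGraph (G i)) (hO : ∀ i, Ore δ (G i)) :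
    (#(mostlyLight δ G) : ℝ) ≤ 1 / 3 * Fintype.card V := by
  set N : ℝ := (Fintype.card V : ℝ) with hN
  set m : ℝ := (Fintype.card Q : ℝ) with hm
  have hm0 : 0 < m := by rw [hm]; exact_mod_cast Fintype.card_pos
  have hN0 : 0 ≤ N := by positivity
  have h1 : #(mostlyLight δ G) * ((1 - δ) * m) ≤
      ∑ v ∈ mostlyLight δ G, (#(univ.filter fun i => v ∈ light δ (G i)) : ℝ) := by
    rw [← nsmul_eq_mul]
    refine Finset.card_nsmul_le_sum _ _ _ fun v hv => ?_
    simp only [mostlyLight, mem_filter, mem_univ, true_and] at hv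
    have h2 := Finset.card_filter_add_card_filter_not (s := (univ : Finset Q))
      (fun i => v ∈ light δ (G i))
    have h2' : (#(univ.filter fun i => v ∈ light δ (G i)) : ℝ) +
        #(univ.filter fun i => v ∉ light δ (G i)) = m := by
      rw [hm]
      exact_mod_cast h2
    linarith
  have h2 : ∑ v ∈ mostlyLight δ G, (#(univ.filter fun i => v ∈ light δ (G i)) : ℝ) ≤
      ∑ v, (#(univ.filter fun i => v ∈ light δ (G i)) : ℝ) :=
    Finset.sum_le_sum_of_subset_of_nonneg (Finset.subset_univ _) fun _ _ _ => by positivity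
  have h4 : ∑ v, (#(univ.filter fun i => v ∈ light δ (G i)) : ℝ) =
      ∑ i, (#(light δ (G i)) : ℝ) := by
    simp only [Finset.card_filter]
    push_cast
    rw [Finset.sum_comm]
    refine Finset.sum_congr rfl fun i _ => ?_
    simp
  have h5 : ∑ i, (#(light δ (G i)) : ℝ) ≤ m * ((1 / 3 - δ / 2) * N) := by
    rw [hm, ← Finset.card_univ, ← nsmul_eq_mul]
    exact Finset.sum_le_card_nsmul _ _ _ fun i _ => card_light_le (h3 i) (hO i) (by linarith)
  have h6 : m * ((1 - δ) * #(mostlyLight δ G)) ≤ m * ((1 / 3 - δ / 2) * N) := by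
    calc _ = #(mostlyLight δ G) * ((1 - δ) * m) := by ring
      _ ≤ _ := h1.trans (h2.trans (h4.le.trans h5))
  have h7 := le_of_mul_le_mul_left h6 hm0
  have h8 : 0 ≤ δ * N := by positivity
  have h9 : (1 - δ) * #(mostlyLight δ G) ≤ (1 - δ) * (1 / 3 * N) := by linarith
  exact le_of_mul_le_mul_left h9 (by linarith)

/-- Many edges of all colours avoid the mostly light vertices. -/
theorem card_core_ge {Q V : Type} [Fintype Q] [Nonempty Q] [Fintype V] {δ : ℝ}
    (hδ0 : 0 < δ) (hδ : δ ≤ 1 / 2)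
    {G : Q → V → V → V → Prop} (h3 : ∀ i, IsThreeGraph (G i)) (hO : ∀ i, Ore δ (G i)) :
    (Fintype.card Q : ℝ) * (1 / 27 * (Fintype.card V : ℝ) ^ 3) ≤
      #(univ.filter fun t : Q × V × V × V => G t.1 t.2.1 t.2.2.1 t.2.2.2 ∧
        t.2.1 ∉ mostlyLight δ G ∧ t.2.2.1 ∉ mostlyLight δ G ∧ t.2.2.2 ∉ mostlyLight δ G) := by
  set N : ℝ := (Fintype.card V : ℝ) with hN
  have hN0 : 0 ≤ N := by positivity
  set B := mostlyLight δ G with hB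
  have hBc : (#B : ℝ) ≤ 1 / 3 * N := card_mostlyLight_le hδ0 hδ h3 hO
  let T : Q → V → Finset (V × V) := fun i v =>
    univ.filter fun p : V × V => G i v p.1 p.2 ∧ p.1 ∉ B ∧ p.2 ∉ B
  let A : Q → Finset V := fun i => (light δ (G i) ∪ B)ᶜ
  have hA : ∀ i, 1 / 3 * N ≤ #(A i) := by
    intro i
    have h1 : (#(A i) : ℝ) + #(light δ (G i) ∪ B) = N := by
      rw [hN]
      exact_mod_cast Finset.card_compl_add_card (light δ (G i) ∪ B)
    have h2 : (#(light δ (G i) ∪ B) : ℝ) ≤ #(light δ (G i)) + #B := by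
      exact_mod_cast Finset.card_union_le _ _
    have h4 := card_light_le (h3 i) (hO i) (by linarith)
    rw [← hN] at h4
    have h5 : 0 ≤ δ * N := by positivity
    linarith
  have hT : ∀ i, ∀ v ∈ A i, 1 / 9 * N ^ 2 ≤ #(T i v) := by
    intro i v hv
    simp only [A, mem_compl, mem_union, not_or] at hv
    have h1 := le_dg_of_notMem_light hv.1
    rw [← hN] at h1
    have h2 := card_inter_ge (fun p : V × V => G i v p.1 p.2) (fun p => p.1 ∉ B ∧ p.2 ∉ B)
    have h4 : (#(univ.filter fun p : V × V => p.1 ∉ B ∧ p.2 ∉ B) : ℝ) = (N - #B) ^ 2 := by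
      have : (univ.filter fun p : V × V => p.1 ∉ B ∧ p.2 ∉ B) = Bᶜ ×ˢ Bᶜ := by
        ext p; simp
      rw [this, Finset.card_product, Nat.cast_mul, ← sq]
      congr 1
      rw [eq_sub_iff_add_eq, hN]
      exact_mod_cast Finset.card_compl_add_card B
    have h5 : (2 / 3 * N) ^ 2 ≤ (N - #B) ^ 2 := by
      gcongr
      linarith
    rw [h4, Fintype.card_prod, Nat.cast_mul, ← hN] at h2
    have h6 : 0 ≤ δ * N ^ 2 := by positivity
    have h7 : (dg (G i) v : ℝ) + (N - #B) ^ 2 - N * N ≤ #(T i v) := h2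
    nlinarith
  have hsub : ∑ i, ∑ v ∈ A i, #(T i v) ≤
      #(univ.filter fun t : Q × V × V × V => G t.1 t.2.1 t.2.2.1 t.2.2.2 ∧
        t.2.1 ∉ B ∧ t.2.2.1 ∉ B ∧ t.2.2.2 ∉ B) := by
    simp only [← Finset.card_sigma]
    refine Finset.card_le_card_of_injOn (fun p => (p.1, p.2.1, p.2.2)) ?_ ?_
    · rintro ⟨i, v, p⟩ h
      simp only [coe_sigma, Set.mem_sigma_iff, mem_coe, mem_univ, true_and, A, T, mem_compl,
        mem_union, not_or, mem_filter] at h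
      simp only [coe_filter, mem_univ, true_and, Set.mem_ofPred_eq]
      tauto
    · rintro ⟨i, v, p⟩ _ ⟨i', v', p'⟩ _ h
      simp only [Prod.mk.injEq] at h
      obtain ⟨rfl, rfl, rfl⟩ := h
      rfl
  have hsub' : ∑ i, ∑ v ∈ A i, (#(T i v) : ℝ) ≤
      #(univ.filter fun t : Q × V × V × V => G t.1 t.2.1 t.2.2.1 t.2.2.2 ∧
        t.2.1 ∉ B ∧ t.2.2.1 ∉ B ∧ t.2.2.2 ∉ B) := by exact_mod_cast hsub
  refine le_trans ?_ hsub'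
  rw [← Finset.card_univ, ← nsmul_eq_mul]
  refine Finset.card_nsmul_le_sum _ _ _ fun i _ => ?_
  refine le_trans ?_ (Finset.card_nsmul_le_sum _ _ _ (hT i))
  rw [nsmul_eq_mul]
  calc 1 / 27 * N ^ 3 = (1 / 3 * N) * (1 / 9 * N ^ 2) := by ring
    _ ≤ _ := by gcongr; exact hA i

/-- Two colours have many common edges, since each has density at least `5/9`. -/
theorem card_common_edges_ge {V : Type} [Fintype V] {δ : ℝ} {G G' : V → V → V → Prop}
    (h3 : IsThreeGraph G) (hO : Ore δ G) (h3' : IsThreeGraph G') (hO' : Ore δ G')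
    (hδ0 : 0 < δ) (hδ : δ ≤ 2 / 3) :
    1 / 9 * (Fintype.card V : ℝ) ^ 3 ≤
      #(univ.filter fun t : V × V × V => G t.1 t.2.1 t.2.2 ∧ G' t.1 t.2.1 t.2.2) := by
  have h1 := card_inter_ge (fun t : V × V × V => G t.1 t.2.1 t.2.2)
    (fun t => G' t.1 t.2.1 t.2.2)
  have h2 := card_edges_ge h3 hO hδ0 hδ
  have h4 := card_edges_ge h3' hO' hδ0 hδ
  rw [Fintype.card_prod, Fintype.card_prod] at h1
  push_cast at h1
  linarith [pow_succ (Fintype.card V : ℝ) 2, sq (Fintype.card V : ℝ),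
    mul_comm (Fintype.card V : ℝ) ((Fintype.card V : ℝ) ^ 2)]

/-- A vertex that is not mostly light shares many link pairs with every other vertex. -/
theorem card_common_links_ge {Q V : Type} [Fintype Q] [Fintype V] {δ : ℝ}
    (hδ0 : 0 < δ) {G : Q → V → V → V → Prop} (hO : ∀ i, Ore δ (G i))
    {v : V} (hv : v ∉ mostlyLight δ G) (u : V) :
    δ ^ 2 * (Fintype.card Q * (Fintype.card V : ℝ) ^ 2) ≤
      #(univ.filter fun t : Q × V × V => G t.1 v t.2.1 t.2.2 ∧ G t.1 u t.2.1 t.2.2) := by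
  set N : ℝ := (Fintype.card V : ℝ) with hN
  simp only [mostlyLight, mem_filter, mem_univ, true_and, not_lt] at hv
  let T : Q → Finset (V × V) := fun i =>
    univ.filter fun p : V × V => G i v p.1 p.2 ∧ G i u p.1 p.2
  have hT : ∀ i ∈ univ.filter fun i => v ∉ light δ (G i), δ * N ^ 2 ≤ #(T i) := by
    intro i hi
    simp only [mem_filter, mem_univ, true_and] at hi
    have h1 := le_dg_of_notMem_light hi
    have h2 := (hO i).dg_ge u
    have h4 := card_inter_ge (fun p : V × V => G i v p.1 p.2) (fun p : V × V => G i u p.1 p.2)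
    rw [Fintype.card_prod, Nat.cast_mul, ← hN] at h4
    rw [← hN] at h1 h2
    have h5 : (dg (G i) v : ℝ) + dg (G i) u - N * N ≤ #(T i) := h4
    have h6 : 0 ≤ δ * N ^ 2 := by positivity
    nlinarith
  have hsub : ∑ i ∈ univ.filter fun i => v ∉ light δ (G i), #(T i) ≤
      #(univ.filter fun t : Q × V × V => G t.1 v t.2.1 t.2.2 ∧ G t.1 u t.2.1 t.2.2) := by
    simp only [← Finset.card_sigma]
    refine Finset.card_le_card_of_injOn (fun p => (p.1, p.2)) ?_ ?_
    · rintro ⟨i, p⟩ h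
      simp only [coe_sigma, Set.mem_sigma_iff, mem_coe, mem_univ, true_and, T, mem_filter] at h
      simpa using h.2
    · rintro ⟨i, p⟩ _ ⟨i', p'⟩ _ h
      simp only [Prod.mk.injEq] at h
      obtain ⟨rfl, rfl⟩ := h
      rfl
  have hsub' : ∑ i ∈ univ.filter fun i => v ∉ light δ (G i), (#(T i) : ℝ) ≤
      #(univ.filter fun t : Q × V × V => G t.1 v t.2.1 t.2.2 ∧ G t.1 u t.2.1 t.2.2) := by
    exact_mod_cast hsub
  refine le_trans ?_ hsub'
  refine le_trans ?_ (Finset.card_nsmul_le_sum _ _ _ hT)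
  rw [nsmul_eq_mul]
  calc _ = (δ * Fintype.card Q) * (δ * N ^ 2) := by ring
    _ ≤ _ := by gcongr

/-- Four colours together with four disjoint triples of vertices (for injective `T.1`, `T.2`). -/
abbrev Gadget (Q V : Type) : Type := (Fin 4 → Q) × (Fin 4 × Fin 3 → V)

/-- The gadget `T` absorbs the colour `y.1` and the three vertices `y.2`: its four triples are
edges of its four colours, and the five colours and 15 vertices of `T` and `y` together also
allow the following rainbow matching. The colour `y.1` takes over row `0`; for `l = 1, 2, 3` the
new vertex `y.2 (l - 1)` replaces the first vertex of row `l`; the three replaced vertices form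
an edge of the colour of row `0`. -/
def Absorbs {Q V : Type} (G : Q → V → V → V → Prop) (T : Gadget Q V) (y : Q × (Fin 3 → V)) :
    Prop :=
  (∀ j, G (T.1 j) (T.2 (j, 0)) (T.2 (j, 1)) (T.2 (j, 2))) ∧
  G y.1 (T.2 (0, 0)) (T.2 (0, 1)) (T.2 (0, 2)) ∧
  (∀ l : Fin 3, G (T.1 l.succ) (y.2 l) (T.2 (l.succ, 1)) (T.2 (l.succ, 2))) ∧
  G (T.1 0) (T.2 (1, 0)) (T.2 (2, 0)) (T.2 (3, 0))

/-- A positive proportion of all gadgets absorbs `y`. Choose first an edge avoiding the mostly light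
vertices together with its colour `q`, as the last edge in `Absorbs`; then a common edge of `q` and
`y.1` as row `0`; then for each vertex `v` of the first edge a common link pair of `v` and the
corresponding vertex of `y`. -/
theorem card_absorbs_ge {Q V : Type} [Fintype Q] [Fintype V] {δ : ℝ}
    (hδ0 : 0 < δ) (hδ : δ ≤ 1 / 2)
    {G : Q → V → V → V → Prop} (h3 : ∀ i, IsThreeGraph (G i)) (hO : ∀ i, Ore δ (G i))
    (y : Q × (Fin 3 → V)) :
    δ ^ 6 / 243 * Fintype.card (Gadget Q V) ≤ #(univ.filter fun T => Absorbs G T y) := by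
  have : Nonempty Q := ⟨y.1⟩
  set N : ℝ := (Fintype.card V : ℝ) with hN
  set m : ℝ := (Fintype.card Q : ℝ) with hm
  let core : Finset (Q × V × V × V) :=
    univ.filter fun t : Q × V × V × V => G t.1 t.2.1 t.2.2.1 t.2.2.2 ∧
        t.2.1 ∉ mostlyLight δ G ∧ t.2.2.1 ∉ mostlyLight δ G ∧ t.2.2.2 ∉ mostlyLight δ G
  let trip : Q → Finset (V × V × V) := fun q =>
    univ.filter fun t : V × V × V => G q t.1 t.2.1 t.2.2 ∧ G y.1 t.1 t.2.1 t.2.2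
  let link : V → V → Finset (Q × V × V) := fun v u =>
    univ.filter fun t : Q × V × V => G t.1 v t.2.1 t.2.2 ∧ G t.1 u t.2.1 t.2.2
  let X : Finset (Σ _ : Q × V × V × V, (V × V × V) × (Q × V × V) × (Q × V × V) × (Q × V × V)) :=
    core.sigma fun t => trip t.1 ×ˢ link t.2.1 (y.2 0) ×ˢ link t.2.2.1 (y.2 1) ×ˢ
      link t.2.2.2 (y.2 2)
  have hX : (δ ^ 6 / 243 * (m ^ 4 * N ^ 12) : ℝ) ≤ #X := by
    have h1 : ∀ t ∈ core, (1 / 9 * N ^ 3) * ((δ ^ 2 * (m * N ^ 2)) * ((δ ^ 2 * (m * N ^ 2)) *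
        (δ ^ 2 * (m * N ^ 2)))) ≤ (#(trip t.1 ×ˢ link t.2.1 (y.2 0) ×ˢ link t.2.2.1 (y.2 1) ×ˢ
      link t.2.2.2 (y.2 2)) : ℝ) := by
      intro t ht
      simp only [core, mem_filter, mem_univ, true_and] at ht
      simp only [Finset.card_product, Nat.cast_mul]
      gcongr
      · exact card_common_edges_ge (h3 _) (hO _) (h3 _) (hO _) hδ0 (by linarith)
      · exact card_common_links_ge hδ0 hO ht.2.1 _
      · exact card_common_links_ge hδ0 hO ht.2.2.1 _
      · exact card_common_links_ge hδ0 hO ht.2.2.2 _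
    have h2 := Finset.card_nsmul_le_sum _ _ _ h1
    have h4 : (#X : ℝ) = ∑ t ∈ core, (#(trip t.1 ×ˢ link t.2.1 (y.2 0) ×ˢ
        link t.2.2.1 (y.2 1) ×ˢ link t.2.2.2 (y.2 2)) : ℝ) := by
      simp only [X, Finset.card_sigma, Nat.cast_sum]
    rw [h4]
    refine le_trans ?_ h2
    rw [nsmul_eq_mul]
    have h5 : m * (1 / 27 * N ^ 3) ≤ #core := card_core_ge hδ0 hδ h3 hO
    calc _ = (m * (1 / 27 * N ^ 3)) * ((1 / 9 * N ^ 3) * ((δ ^ 2 * (m * N ^ 2)) *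
        ((δ ^ 2 * (m * N ^ 2)) * (δ ^ 2 * (m * N ^ 2))))) := by ring
      _ ≤ _ := by gcongr
  have hcard : (Fintype.card (Gadget Q V) : ℝ) = m ^ 4 * N ^ 12 := by
    simp [Gadget, hm, hN]
  rw [hcard]
  refine hX.trans ?_
  norm_cast
  refine Finset.card_le_card_of_injOn (fun p => (![p.1.1, p.2.2.1.1, p.2.2.2.1.1, p.2.2.2.2.1],
    fun jr => ![![p.2.1.1, p.2.1.2.1, p.2.1.2.2], ![p.1.2.1, p.2.2.1.2.1, p.2.2.1.2.2],
      ![p.1.2.2.1, p.2.2.2.1.2.1, p.2.2.2.1.2.2],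
      ![p.1.2.2.2, p.2.2.2.2.2.1, p.2.2.2.2.2.2]] jr.1 jr.2)) ?_ ?_
  · rintro ⟨⟨q, v₁, v₂, v₃⟩, ⟨a, b, c⟩, ⟨q₁, a₁, b₁⟩, ⟨q₂, a₂, b₂⟩, q₃, a₃, b₃⟩ h
    simp only [X, core, trip, link, coe_sigma, Set.mem_sigma_iff, mem_coe, mem_filter, mem_univ,
      true_and, mem_product] at h
    simp only [coe_filter, mem_univ, true_and, Set.mem_ofPred_eq]
    obtain ⟨⟨hc, -⟩, ⟨ht, ht'⟩, ⟨h1, h1'⟩, ⟨h2, h2'⟩, h3, h3'⟩ := h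
    refine ⟨?_, ht', ?_, hc⟩
    · intro j
      fin_cases j
      exacts [ht, h1, h2, h3]
    · intro l
      fin_cases l
      exacts [h1', h2', h3']
  · rintro ⟨⟨q, v₁, v₂, v₃⟩, ⟨a, b, c⟩, ⟨q₁, a₁, b₁⟩, ⟨q₂, a₂, b₂⟩, q₃, a₃, b₃⟩ -
      ⟨⟨q', v₁', v₂', v₃'⟩, ⟨a', b', c'⟩, ⟨q₁', a₁', b₁'⟩, ⟨q₂', a₂', b₂'⟩, q₃', a₃', b₃'⟩ - h
    simp only [Prod.mk.injEq] at h
    obtain ⟨hq, hx⟩ := h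
    have hq0 := congrFun hq 0
    have hq1 := congrFun hq 1
    have hq2 := congrFun hq 2
    have hq3 := congrFun hq 3
    have hx' : ∀ j r, _ := fun j r => congrFun hx (j, r)
    have x00 := hx' 0 0
    have x01 := hx' 0 1
    have x02 := hx' 0 2
    have x10 := hx' 1 0
    have x11 := hx' 1 1
    have x12 := hx' 1 2
    have x20 := hx' 2 0
    have x21 := hx' 2 1
    have x22 := hx' 2 2
    have x30 := hx' 3 0
    have x31 := hx' 3 1
    have x32 := hx' 3 2
    simp at hq0 hq1 hq2 hq3 x00 x01 x02 x10 x11 x12 x20 x21 x22 x30 x31 x32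
    subst hq0 hq1 hq2 hq3 x00 x01 x02 x10 x11 x12 x20 x21 x22 x30 x31 x32
    rfl

/-! ### Selecting a family of disjoint absorbers -/

/-- Derandomised choice of a sequence of elements of `Ω` which lies in `Gd`, avoids bad elements
(`Bd`) and conflicts (`Cf`), and in which every `x` is served (`Abs`) often: the elements are chosen
one by one so as to decrease the potential `∑ x, 2 ^ (- number of chosen elements serving x)`. -/
theorem select {Ω X : Type} [Fintype Ω] [Nonempty Ω] [Fintype X] [Nonempty X]
    (Abs : Ω → X → Prop) (Gd Bd : Ω → Prop) (Cf : Ω → Ω → Prop) {γ κ : ℝ} (hγ0 : 0 < γ)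
    (hκ : 0 ≤ κ) {N : ℕ}
    (hGd : ∀ ω x, Abs ω x → Gd ω)
    (hγ : ∀ x, γ * Fintype.card Ω ≤ #(univ.filter fun ω => Abs ω x))
    (hBd : (#(univ.filter Bd) : ℝ) ≤ κ * Fintype.card Ω)
    (hCf : ∀ ω', (#(univ.filter (Cf ω')) : ℝ) ≤ κ * Fintype.card Ω)
    (hN : (N + 1) * κ ≤ γ / 2) :
    ∀ k ≤ N, ∃ T : Fin k → Ω, (∀ j, Gd (T j)) ∧ (∀ j, ¬ Bd (T j)) ∧ (∀ i j, i < j → ¬ Cf (T i) (T j)) ∧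
      ∑ x, (1 / 2 : ℝ) ^ (∑ j, if Abs (T j) x then 1 else 0) ≤
        Fintype.card X * (1 - γ / 4) ^ k := by
  set n : ℝ := (Fintype.card Ω : ℝ) with hn
  have hn0 : 0 < n := by rw [hn]; exact_mod_cast Fintype.card_pos
  intro k
  induction k with
  | zero =>
    intro _
    exact ⟨Fin.elim0, fun j => j.elim0, fun j => j.elim0, fun i => i.elim0, by simp⟩
  | succ k ih =>
    intro hk
    obtain ⟨T, hT0, hT1, hT2, hT3⟩ := ih (by omega)
    set w : X → ℝ := fun x => (1 / 2 : ℝ) ^ (∑ j, if Abs (T j) x then 1 else 0) with hw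
    have hw0 : ∀ x, 0 ≤ w x := fun x => by positivity
    -- The forbidden choices for the next element.
    let F : Finset Ω := univ.filter Bd ∪ univ.biUnion fun j => univ.filter (Cf (T j))
    have hF : (#F : ℝ) ≤ γ / 2 * n := by
      have h1 : (#F : ℝ) ≤ #(univ.filter Bd) + ∑ j, (#(univ.filter (Cf (T j))) : ℝ) := by
        have := (Finset.card_union_le (univ.filter Bd)
          (univ.biUnion fun j => univ.filter (Cf (T j)))).trans
          (Nat.add_le_add_left Finset.card_biUnion_le _)
        exact_mod_cast this
      have h2 : ∑ j, (#(univ.filter (Cf (T j))) : ℝ) ≤ k * (κ * n) := by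
        refine (Finset.sum_le_card_nsmul _ _ _ fun j _ => hCf (T j)).trans ?_
        simp
      have hkN : (k : ℝ) ≤ N := by exact_mod_cast (by omega : k ≤ N)
      calc (#F : ℝ) ≤ κ * n + k * (κ * n) := by linarith
        _ = ((k + 1) * κ) * n := by ring
        _ ≤ ((N + 1) * κ) * n := by gcongr
        _ ≤ γ / 2 * n := by gcongr
    let A : Finset Ω := Fᶜ.filter Gd
    have hgood : ∀ x, γ / 2 * n ≤ #(A.filter fun ω => Abs ω x) := by
      intro x
      have h1 : #(univ.filter fun ω => Abs ω x) ≤ #(A.filter fun ω => Abs ω x) + #F := by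
        rw [← Finset.card_union_of_disjoint]
        · refine Finset.card_le_card fun ω h => ?_
          simp only [mem_filter, mem_univ, true_and] at h
          simp only [A, mem_union, mem_filter, mem_compl, h, and_true, hGd ω x h]
          tauto
        · rw [Finset.disjoint_left]
          intro ω h
          simp only [A, mem_filter, mem_compl] at h
          exact h.1.1
      have h1' : (#(univ.filter fun ω => Abs ω x) : ℝ) ≤
        #(A.filter fun ω => Abs ω x) + #F := by exact_mod_cast h1
      linarith [hγ x]
    have hne : A.Nonempty := by
      obtain ⟨x⟩ := (inferInstance : Nonempty X)
      have h1 : (0 : ℝ) < #(A.filter fun ω => Abs ω x) :=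
        lt_of_lt_of_le (by positivity) (hgood x)
      have h2 : 0 < #(A.filter fun ω => Abs ω x) := by exact_mod_cast h1
      exact (Finset.card_pos.1 h2).mono (Finset.filter_subset _ _)
    have hFn : (#A : ℝ) ≤ n := by rw [hn]; exact_mod_cast Finset.card_le_univ _
    have havg : ∑ ω ∈ A, ∑ x, w x * (if Abs ω x then 1 / 2 else 1) ≤
        ∑ ω ∈ A, (∑ x, w x) * (1 - γ / 4) := by
      rw [Finset.sum_comm, Finset.sum_const, nsmul_eq_mul, Finset.sum_mul, Finset.mul_sum]
      refine Finset.sum_le_sum fun x _ => ?_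
      have h1 : ∑ ω ∈ A, (if Abs ω x then (1 / 2 : ℝ) else 1) =
          #A - 1 / 2 * #(A.filter fun ω => Abs ω x) := by
        have : ∀ ω, (if Abs ω x then (1 / 2 : ℝ) else 1) =
            1 - 1 / 2 * (if Abs ω x then 1 else 0) := by
          intro ω; split_ifs <;> norm_num
        simp only [this, Finset.sum_sub_distrib, ← Finset.mul_sum, Finset.sum_boole]
        simp
      rw [← Finset.mul_sum, h1]
      have h2 := hgood x
      have h3 : γ / 4 * #A ≤ γ / 4 * n := by gcongr
      calc _ ≤ w x * (#A * (1 - γ / 4)) := by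
            apply mul_le_mul_of_nonneg_left _ (hw0 x)
            linarith
        _ = _ := by ring
    obtain ⟨ω, hω, hle⟩ := Finset.exists_le_of_sum_le hne havg
    simp only [A, F, mem_compl, mem_union, mem_filter, mem_univ, true_and, mem_biUnion, not_or,
      not_exists] at hω
    obtain ⟨hω, hωG⟩ := hω
    refine ⟨Fin.snoc T ω, ?_, ?_, ?_, ?_⟩
    · intro j
      refine Fin.lastCases ?_ (fun j => ?_) j
      · simpa using hωG
      · simpa using hT0 j
    · intro j
      refine Fin.lastCases ?_ (fun j => ?_) j
      · simpa using hω.1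
      · simpa using hT1 j
    · intro i j
      refine Fin.lastCases ?_ (fun j => ?_) j
      · refine Fin.lastCases ?_ (fun i => ?_) i
        · intro h; exact absurd h (lt_irrefl _)
        · intro _; simpa using hω.2 i
      · refine Fin.lastCases ?_ (fun i => ?_) i
        · intro h; exact absurd h (not_lt.2 (Fin.le_last _))
        · intro h; simpa using hT2 i j (by simpa using h)
    · have h1 : ∀ x, (1 / 2 : ℝ) ^ (∑ j, if Abs ((Fin.snoc T ω : Fin (k + 1) → Ω) j) x then 1 else 0)
          = w x * (if Abs ω x then 1 / 2 else 1) := by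
        intro x
        rw [Fin.sum_univ_castSucc, pow_add]
        simp only [Fin.snoc_castSucc, Fin.snoc_last, hw]
        congr 1
        split_ifs <;> simp
      simp only [h1]
      refine hle.trans ?_
      have hγ1 : γ ≤ 1 := by
        obtain ⟨x⟩ := (inferInstance : Nonempty X)
        have h2 : (#(univ.filter fun ω => Abs ω x) : ℝ) ≤ n := by
          rw [hn]; exact_mod_cast Finset.card_le_univ _
        have h3 : γ * n ≤ 1 * n := by linarith [hγ x]
        exact le_of_mul_le_mul_right h3 hn0
      calc (∑ x, w x) * (1 - γ / 4) ≤ (Fintype.card X * (1 - γ / 4) ^ k) * (1 - γ / 4) := by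
            apply mul_le_mul_of_nonneg_right hT3
            linarith
        _ = _ := by ring

/-- Prescribing one coordinate of a function by the other coordinates costs a factor `|α|`. -/
theorem card_coord_eq_mul_le {ι α : Type} [Fintype ι] [Fintype α] (a : ι)
    (h : (ι → α) → α) (hh : ∀ f w, h (Function.update f a w) = h f) :
    #(univ.filter fun f : ι → α => f a = h f) * Fintype.card α ≤ Fintype.card (ι → α) := by
  rw [← Finset.card_univ (α := α), ← Finset.card_product, ← Finset.card_univ]
  refine Finset.card_le_card_of_injOn (fun p => Function.update p.1 a p.2) (by simp) ?_
  rintro ⟨f, w⟩ hf ⟨f', w'⟩ hf' he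
  simp only [coe_product, Set.mem_prod, coe_filter, mem_univ, true_and, Set.mem_ofPred_eq,
    coe_univ, Set.mem_univ, and_true] at hf hf' he
  have h1 : f a = f' a := by rw [hf, hf', ← hh f w, he, hh]
  have h2 : f = f' := by
    funext b
    by_cases hb : b = a
    · rw [hb, h1]
    · have := congrFun he b
      rwa [Function.update_of_ne hb, Function.update_of_ne hb] at this
  have h3 : w = w' := by simpa using congrFun he a
  rw [h2, h3]

theorem card_not_injective_mul_le {ι α : Type} [Fintype ι] [Fintype α] :
    #(univ.filter fun f : ι → α => ¬ Function.Injective f) * Fintype.card α ≤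
      Fintype.card ι ^ 2 * Fintype.card (ι → α) := by
  have hsub : (univ.filter fun f : ι → α => ¬ Function.Injective f) ⊆
      (univ : Finset (ι × ι)).biUnion fun p =>
        univ.filter fun f : ι → α => f p.1 = f p.2 ∧ p.1 ≠ p.2 := by
    intro f hf
    simp only [mem_filter, mem_univ, true_and, Function.Injective, not_forall] at hf
    obtain ⟨a, b, h, hab⟩ := hf
    simp only [mem_biUnion, mem_univ, true_and, mem_filter]
    exact ⟨(a, b), h, hab⟩
  calc _ ≤ (∑ p : ι × ι, #(univ.filter fun f : ι → α => f p.1 = f p.2 ∧ p.1 ≠ p.2)) *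
        Fintype.card α :=
        Nat.mul_le_mul_right _ ((Finset.card_le_card hsub).trans Finset.card_biUnion_le)
    _ ≤ ∑ p : ι × ι, Fintype.card (ι → α) := by
        rw [Finset.sum_mul]
        refine Finset.sum_le_sum fun p _ => ?_
        by_cases hp : p.1 = p.2
        · simp [hp]
        · simp only [hp, ne_eq, not_false_eq_true, and_true]
          exact card_coord_eq_mul_le p.1 (fun f => f p.2) fun f w =>
            Function.update_of_ne (Ne.symm hp) _ _
    _ = _ := by simp [sq]

theorem card_meets_mul_le {ι α : Type} [Fintype ι] [Fintype α] (g : ι → α) :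
    #(univ.filter fun f : ι → α => ∃ a b, g a = f b) * Fintype.card α ≤
      Fintype.card ι ^ 2 * Fintype.card (ι → α) := by
  have hsub : (univ.filter fun f : ι → α => ∃ a b, g a = f b) ⊆
      (univ : Finset (ι × ι)).biUnion fun p =>
        univ.filter fun f : ι → α => f p.2 = g p.1 := by
    intro f hf
    simp only [mem_filter, mem_univ, true_and] at hf
    obtain ⟨a, b, h⟩ := hf
    simp only [mem_biUnion, mem_univ, true_and, mem_filter]
    exact ⟨(a, b), h.symm⟩
  calc _ ≤ (∑ p : ι × ι, #(univ.filter fun f : ι → α => f p.2 = g p.1)) * Fintype.card α :=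
        Nat.mul_le_mul_right _ ((Finset.card_le_card hsub).trans Finset.card_biUnion_le)
    _ ≤ ∑ p : ι × ι, Fintype.card (ι → α) := by
        rw [Finset.sum_mul]
        exact Finset.sum_le_sum fun p _ =>
          card_coord_eq_mul_le p.2 (fun _ => g p.1) fun f w => rfl
    _ = _ := by simp [sq]

/-- The bounds for colours and for vertices combine to a bound for gadgets. -/
theorem card_gadget_or_le {Q V : Type} [Fintype Q] [Fintype V] {m : ℕ} (hm : 0 < m)
    (hQ : Fintype.card Q = m) (hV : Fintype.card V = 3 * m)
    (P : (Fin 4 → Q) → Prop) (R : (Fin 4 × Fin 3 → V) → Prop)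
    (hP : #(univ.filter P) * Fintype.card Q ≤
      Fintype.card (Fin 4) ^ 2 * Fintype.card (Fin 4 → Q))
    (hR : #(univ.filter R) * Fintype.card V ≤
      Fintype.card (Fin 4 × Fin 3) ^ 2 * Fintype.card (Fin 4 × Fin 3 → V)) :
    (#(univ.filter fun T : Gadget Q V => P T.1 ∨ R T.2) : ℝ) ≤
      64 / m * Fintype.card (Gadget Q V) := by
  have hsub : (univ.filter fun T : Gadget Q V => P T.1 ∨ R T.2) ⊆
      univ.filter P ×ˢ univ ∪ univ ×ˢ univ.filter R := by
    intro T hT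
    simpa using hT
  have h1 := (Finset.card_le_card hsub).trans (Finset.card_union_le _ _)
  rw [Finset.card_product, Finset.card_product, Finset.card_univ, Finset.card_univ] at h1
  have hc : Fintype.card (Gadget Q V) =
    Fintype.card (Fin 4 → Q) * Fintype.card (Fin 4 × Fin 3 → V) := Fintype.card_prod _ _
  rw [hc]
  rw [hQ] at hP
  rw [hV] at hR
  have hm' : (0 : ℝ) < m := by exact_mod_cast hm
  rw [div_mul_eq_mul_div, le_div_iff₀ hm']
  have c12 : Fintype.card (Fin 4 × Fin 3) = 12 := by simp
  rw [c12] at hR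
  rw [Fintype.card_fin] at hP
  set a := Fintype.card (Fin 4 → Q)
  set b := Fintype.card (Fin 4 × Fin 3 → V)
  norm_cast
  have h2 := Nat.mul_le_mul_right b hP
  have h3 := Nat.mul_le_mul_left a hR
  have h4 := Nat.mul_le_mul_right m h1
  nlinarith

/-- A linear-size family of disjoint gadgets in which every colour together with every triple of
vertices has linearly many absorbers. -/
theorem exists_absorbers {δ β : ℝ} (hδ0 : 0 < δ) (hδ : δ ≤ 1 / 2) (hβ : 0 < β)
    (hβγ : 256 * β ≤ δ ^ 6 / 243) :
    ∃ ρ > (0 : ℝ), ∃ m₀ : ℕ, ∀ m ≥ m₀, ∀ {Q V : Type} [Fintype Q] [Fintype V],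
      Fintype.card Q = m → Fintype.card V = 3 * m → ∀ G : Q → V → V → V → Prop,
      (∀ i, IsThreeGraph (G i)) → (∀ i, Ore δ (G i)) →
      ∃ (N : ℕ) (T : Fin N → Gadget Q V), (N : ℝ) ≤ β * m ∧
        (∀ i j, G ((T i).1 j) ((T i).2 (j, 0)) ((T i).2 (j, 1)) ((T i).2 (j, 2))) ∧
        (Function.Injective fun p : Fin N × Fin 4 => (T p.1).1 p.2) ∧
        (Function.Injective fun p : Fin N × (Fin 4 × Fin 3) => (T p.1).2 p.2) ∧
        ∀ y, ρ * m ≤ #(univ.filter fun j => Absorbs G (T j) y) := by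
  set γ := δ ^ 6 / 243 with hγ
  have hγ0 : 0 < γ := by positivity
  refine ⟨γ * β / 8, by positivity, ?_⟩
  have hlim : Filter.Tendsto (fun x : ℝ => 27 * Real.exp (γ / 4) *
      (x ^ 4 * Real.exp (-(γ * β / 8) * x))) Filter.atTop
      (nhds (27 * Real.exp (γ / 4) * 0)) := by
    refine Filter.Tendsto.const_mul _ ?_
    have := tendsto_rpow_mul_exp_neg_mul_atTop_nhds_zero 4 (γ * β / 8) (by positivity)
    refine this.congr fun x => ?_
    norm_cast
  rw [mul_zero] at hlim
  have h1 := (hlim.comp tendsto_natCast_atTop_atTop).eventually (gt_mem_nhds one_pos)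
  have h2 := (tendsto_natCast_atTop_atTop (R := ℝ)).eventually
    (Filter.eventually_gt_atTop (256 / γ))
  obtain ⟨m₀, hm₀⟩ := Filter.eventually_atTop.1 (h1.and h2)
  refine ⟨m₀, ?_⟩
  intro m hm Q V _ _ hQ hV G h3 hO
  obtain ⟨hm1, hm2⟩ := hm₀ m hm
  simp only [Function.comp] at hm1
  have hm' : (0 : ℝ) < m := lt_trans (by positivity) hm2
  have hm0 : 0 < m := by exact_mod_cast hm'
  have : Nonempty Q := Fintype.card_pos_iff.1 (by omega)
  have : Nonempty V := Fintype.card_pos_iff.1 (by omega)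
  set N := ⌊β * m⌋₊ with hN
  have hNle : (N : ℝ) ≤ β * m := Nat.floor_le (by positivity)
  have hNge : β * m < N + 1 := Nat.lt_floor_add_one _
  have hκ : ((N : ℝ) + 1) * (64 / m) ≤ γ / 2 := by
    rw [mul_div_assoc', div_le_iff₀ hm']
    rw [div_lt_iff₀ hγ0] at hm2
    have h5 : 256 * β * m ≤ γ * m := by gcongr
    linarith
  obtain ⟨T, hT0, hT1, hT2, hT3⟩ := select (Ω := Gadget Q V) (X := Q × (Fin 3 → V)) (Absorbs G)
    (fun T => ∀ j, G (T.1 j) (T.2 (j, 0)) (T.2 (j, 1)) (T.2 (j, 2)))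
    (fun T => ¬ Function.Injective T.1 ∨ ¬ Function.Injective T.2)
    (fun T T' => (∃ a b, T.1 a = T'.1 b) ∨ ∃ a b, T.2 a = T'.2 b) hγ0
    (by positivity) (N := N) (fun _ _ h => h.1) (fun y => card_absorbs_ge hδ0 hδ h3 hO y)
    (by
      have := card_gadget_or_le hm0 hQ hV (fun f => ¬ Function.Injective f)
        (fun f => ¬ Function.Injective f) (by convert card_not_injective_mul_le)
        (by convert card_not_injective_mul_le)
      convert this)
    (fun T => by
      have := card_gadget_or_le hm0 hQ hV (fun f => ∃ a b, T.1 a = f b)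
        (fun f => ∃ a b, T.2 a = f b) (by convert card_meets_mul_le T.1)
        (by convert card_meets_mul_le T.2)
      convert this) hκ N le_rfl
  push Not at hT1 hT2
  refine ⟨N, T, hNle, hT0, ?_, ?_, ?_⟩
  · rintro ⟨i, a⟩ ⟨j, b⟩ h
    rcases lt_trichotomy i j with hij | rfl | hij
    · exact absurd h ((hT2 i j hij).1 a b)
    · exact Prod.ext rfl ((hT1 i).1 h)
    · exact absurd h.symm ((hT2 j i hij).1 b a)
  · rintro ⟨i, a⟩ ⟨j, b⟩ h
    rcases lt_trichotomy i j with hij | rfl | hij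
    · exact absurd h ((hT2 i j hij).2 a b)
    · exact Prod.ext rfl ((hT1 i).2 h)
    · exact absurd h.symm ((hT2 j i hij).2 b a)
  · intro y
    -- A single `y` contributes `2 ^ (-cnt)` to the exponentially small final potential.
    set cnt := #(univ.filter fun j => Absorbs G (T j) y) with hcnt
    have h4 : (1 / 2 : ℝ) ^ cnt ≤
        Fintype.card (Q × (Fin 3 → V)) * (1 - γ / 4) ^ N := by
      refine le_trans ?_ hT3
      rw [hcnt, Finset.card_filter]
      exact Finset.single_le_sum
        (f := fun x => (1 / 2 : ℝ) ^ (∑ j, if Absorbs G (T j) x then 1 else 0))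
        (fun x _ => by positivity) (mem_univ y)
    have hγ1 : γ ≤ 1 := by
      rw [hγ]
      have : δ ^ 6 ≤ 1 := pow_le_one₀ hδ0.le (by linarith)
      linarith
    have h5 : (1 - γ / 4) ^ N ≤ Real.exp (γ / 4) * Real.exp (-(γ * β / 4) * m) := by
      calc (1 - γ / 4) ^ N ≤ (Real.exp (-(γ / 4))) ^ N := by
            gcongr
            · linarith
            · exact Real.one_sub_le_exp_neg _
        _ = Real.exp (-(γ / 4) * N) := by rw [← Real.exp_nat_mul]; congr 1; ring
        _ ≤ Real.exp (γ / 4 + -(γ * β / 4) * m) := by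
            gcongr
            nlinarith
        _ = _ := Real.exp_add _ _
    have h6 : (Fintype.card (Q × (Fin 3 → V)) : ℝ) = 27 * (m : ℝ) ^ 4 := by
      simp [hQ, hV]
      ring
    have h7 : Real.exp (-(cnt : ℝ)) ≤ (1 / 2 : ℝ) ^ cnt := by
      rw [← neg_one_mul, mul_comm, Real.exp_nat_mul]
      gcongr
      have := Real.exp_neg_one_lt_half
      linarith
    have h8 : Real.exp (-(γ * β / 4) * m) =
        Real.exp (-(γ * β / 8) * m) * Real.exp (-(γ * β / 8) * m) := by
      rw [← Real.exp_add]; congr 1; ring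
    have h9 : Real.exp (-(cnt : ℝ)) ≤ Real.exp (-(γ * β / 8) * m) := by
      calc _ ≤ _ := h7
        _ ≤ _ := h4
        _ ≤ (27 * (m : ℝ) ^ 4) * (Real.exp (γ / 4) * Real.exp (-(γ * β / 4) * m)) := by
          rw [h6]; gcongr
        _ = (27 * Real.exp (γ / 4) * (m ^ 4 * Real.exp (-(γ * β / 8) * m))) *
            Real.exp (-(γ * β / 8) * m) := by rw [h8]; ring
        _ ≤ 1 * Real.exp (-(γ * β / 8) * m) := by gcongr
        _ = _ := one_mul _
    rw [Real.exp_le_exp] at h9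
    linarith

/-! ### Assembling the perfect rainbow matching -/

/-- A partial rainbow matching, a family of gadgets and leftover tuples `y k`, each absorbed by its
own gadget `T (a k)`, together yield a perfect rainbow matching, provided they cover everything and
have the right total size. -/
theorem assemble {Q V : Type} [Fintype Q] [Fintype V] (G : Q → V → V → V → Prop) {t r N : ℕ}
    (c : Fin t → Q) (φ : Fin t × Fin 3 → V) (T : Fin N → Gadget Q V)
    (y : Fin r → Q × (Fin 3 → V)) (a : Fin r → Fin N) (ha : Function.Injective a)
    (hc : ∀ i, G (c i) (φ (i, 0)) (φ (i, 1)) (φ (i, 2)))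
    (hT : ∀ i j, G ((T i).1 j) ((T i).2 (j, 0)) ((T i).2 (j, 1)) ((T i).2 (j, 2)))
    (hy : ∀ k, Absorbs G (T (a k)) (y k))
    (hQ : ∀ q, (∃ i, c i = q) ∨ (∃ k, (y k).1 = q) ∨ ∃ j l, (T j).1 l = q)
    (hV : ∀ v, (∃ i, φ i = v) ∨ (∃ k l, (y k).2 l = v) ∨ ∃ j l, (T j).2 l = v)
    (hcQ : Fintype.card Q = t + (r + N * 4)) (hcV : Fintype.card V = (t + (r + N * 4)) * 3) :
    ∃ (ι : Type) (c : ι → Q) (φ : ι × Fin 3 → V), Function.Bijective c ∧ Function.Bijective φ ∧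
      ∀ i, G (c i) (φ (i, 0)) (φ (i, 1)) (φ (i, 2)) := by
  obtain ⟨inv, hinv⟩ : ∃ inv : Fin N → Option (Fin r), ∀ k j, inv j = some k ↔ a k = j :=
    ⟨_, ha.isPartialInv⟩
  -- Each used gadget `T (a k)` is switched from its own four edges to the five edges
  -- that also cover `y k`; the fifth edge is indexed by `k` itself.
  let C : Fin t ⊕ (Fin r ⊕ (Fin N × Fin 4)) → Q := Sum.elim c (Sum.elim (fun k => (T (a k)).1 0)
    fun p => Fin.cases ((inv p.1).elim ((T p.1).1 0) fun k => (y k).1)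
      (fun l => (T p.1).1 l.succ) p.2)
  let Φ : (Fin t ⊕ (Fin r ⊕ (Fin N × Fin 4))) × Fin 3 → V := fun x =>
    Sum.elim (fun i => φ (i, x.2)) (Sum.elim (fun k => (T (a k)).2 (x.2.succ, 0))
      fun p => Fin.cases ((T p.1).2 (0, x.2))
        (fun l => Fin.cases ((inv p.1).elim ((T p.1).2 (l.succ, 0)) fun k => (y k).2 l)
          (fun s => (T p.1).2 (l.succ, s.succ)) x.2) p.2) x.1
  refine ⟨_, C, Φ, ?_, ?_, ?_⟩
  · rw [Fintype.bijective_iff_surjective_and_card]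
    refine ⟨fun q => ?_, by simp [hcQ]⟩
    rcases hQ q with ⟨i, rfl⟩ | ⟨k, rfl⟩ | ⟨j, l, rfl⟩
    · exact ⟨.inl i, rfl⟩
    · exact ⟨.inr (.inr (a k, 0)), by simp [C, (hinv k (a k)).2 rfl]⟩
    · cases l using Fin.cases with
      | zero =>
        cases h : inv j with
        | none => exact ⟨.inr (.inr (j, 0)), by simp [C, h]⟩
        | some k => exact ⟨.inr (.inl k), by simp [C, (hinv k j).1 h]⟩
      | succ l => exact ⟨.inr (.inr (j, l.succ)), by simp [C]⟩
  · rw [Fintype.bijective_iff_surjective_and_card]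
    refine ⟨fun v => ?_, by simp [hcV]⟩
    rcases hV v with ⟨i, rfl⟩ | ⟨k, l, rfl⟩ | ⟨j, ⟨l, s⟩, rfl⟩
    · exact ⟨(.inl i.1, i.2), rfl⟩
    · exact ⟨(.inr (.inr (a k, l.succ)), 0), by simp [Φ, (hinv k (a k)).2 rfl]⟩
    · cases l using Fin.cases with
      | zero => exact ⟨(.inr (.inr (j, 0)), s), by simp [Φ]⟩
      | succ l =>
        cases s using Fin.cases with
        | zero =>
          cases h : inv j with
          | none => exact ⟨(.inr (.inr (j, l.succ)), 0), by simp [Φ, h]⟩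
          | some k => exact ⟨(.inr (.inl k), l), by simp [Φ, (hinv k j).1 h]⟩
        | succ s => exact ⟨(.inr (.inr (j, l.succ)), s.succ), by simp [Φ]⟩
  · rintro (i | k | ⟨j, l⟩)
    · exact hc i
    · exact (hy k).2.2.2
    · cases h : inv j with
      | none =>
        have := hT j l
        cases l using Fin.cases with
        | zero => simpa [C, Φ, h] using this
        | succ l =>
          have e1 : (1 : Fin 3) = Fin.succ 0 := rfl
          have e2 : (2 : Fin 3) = Fin.succ 1 := rfl
          rw [e1, e2] at this ⊢
          simpa only [C, Φ, h, Sum.elim_inr, Fin.cases_succ, Fin.cases_zero, Option.elim] using this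
      | some k =>
        have hk := (hinv k j).1 h
        have hyk := hy k
        rw [hk] at hyk
        cases l using Fin.cases with
        | zero => simpa [C, Φ, h] using hyk.2.1
        | succ l =>
          have := hyk.2.2.1 l
          have e1 : (1 : Fin 3) = Fin.succ 0 := rfl
          have e2 : (2 : Fin 3) = Fin.succ 1 := rfl
          rw [e1, e2] at this ⊢
          simpa only [C, Φ, h, Sum.elim_inr, Fin.cases_succ, Fin.cases_zero, Option.elim] using this

/-- If each of the `r` tuples is absorbed by at least `r` gadgets, the tuples can be absorbed by pairwise distinct gadgets. -/
theorem exists_assignment {Q V : Type} (G : Q → V → V → V → Prop) {r N : ℕ}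
    (T : Fin N → Gadget Q V) (y : Fin r → Q × (Fin 3 → V))
    (h : ∀ k, r ≤ #(univ.filter fun j => Absorbs G (T j) (y k))) :
    ∃ a : Fin r → Fin N, Function.Injective a ∧ ∀ k, Absorbs G (T (a k)) (y k) := by
  have := (Finset.all_card_le_biUnion_card_iff_exists_injective
    (fun k => univ.filter fun j => Absorbs G (T j) (y k))).1 (by
    intro s
    rcases s.eq_empty_or_nonempty with rfl | ⟨k, hk⟩
    · simp
    · calc #s ≤ r := by simpa using s.card_le_univ
        _ ≤ _ := h k
        _ ≤ _ := Finset.card_le_card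
          (Finset.subset_biUnion_of_mem (fun k => univ.filter fun j => Absorbs G (T j) (y k)) hk))
  obtain ⟨a, ha, hm⟩ := this
  exact ⟨a, ha, fun k => by simpa using hm k⟩

/-- The complement of the image of an injective map, as a type `W` embedded by `g`. -/
theorem exists_compl_range {α β : Type} [Fintype α] [Fintype β] {f : α → β}
    (hf : Function.Injective f) :
    ∃ (W : Type) (_ : Fintype W) (g : W → β), Function.Injective g ∧
      (∀ b, (∃ x, f x = b) ∨ ∃ x, g x = b) ∧ Fintype.card W + Fintype.card α = Fintype.card β := by
  refine ⟨{b // b ∉ univ.image f}, inferInstance, Subtype.val, Subtype.val_injective, ?_, ?_⟩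
  · intro b
    by_cases h : b ∈ univ.image f
    · exact .inl (by simpa using h)
    · exact .inr ⟨⟨b, h⟩, rfl⟩
  · have h1 : #(univ.image f)ᶜ + #(univ.image f) = Fintype.card β := by
      rw [add_comm, Finset.card_add_card_compl]
    rw [Finset.card_image_of_injective _ hf, Finset.card_univ] at h1
    rw [← h1, Fintype.card_of_subtype (univ.image f)ᶜ (by simp)]

/-- A family of `m` 3-graphs on `3 m` common vertices, each satisfying the Ore-type condition, has a
perfect rainbow matching: disjoint edges `φ (i, ·)` covering all vertices, one from each member
`c i` of the family. -/
theorem rainbow_pm {δ : ℝ} (hδ0 : 0 < δ) (hδ : δ ≤ 1 / 2) :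
    ∃ m₀ : ℕ, ∀ m ≥ m₀, ∀ {Q V : Type} [Fintype Q] [Fintype V], Fintype.card Q = m →
      Fintype.card V = 3 * m → ∀ G : Q → V → V → V → Prop, (∀ i, IsThreeGraph (G i)) →
      (∀ i, Ore δ (G i)) →
      ∃ (ι : Type) (c : ι → Q) (φ : ι × Fin 3 → V), Function.Bijective c ∧ Function.Bijective φ ∧
        ∀ i, G (c i) (φ (i, 0)) (φ (i, 1)) (φ (i, 2)) := by
  have hδ6 : δ ^ 6 ≤ δ := by
    calc δ ^ 6 ≤ δ ^ 1 := pow_le_pow_of_le_one hδ0.le (by linarith) (by norm_num)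
      _ = δ := pow_one δ
  have hδ60 : 0 < δ ^ 6 := by positivity
  -- The largest value allowed in `exists_absorbers`; it is far below `δ / 32`, so that removing
  -- the absorbers costs at most half of the surplus `δ`.
  set β : ℝ := δ ^ 6 / 243 / 256 with hβ
  obtain ⟨ρ, hρ, m₀, h₀⟩ := exists_absorbers (β := β) hδ0 hδ (by positivity) (by linarith)
  obtain ⟨m₁, h₁⟩ := near_perfect (δ := δ / 2) (η := min ρ 1) (by linarith) (by linarith)
    (by positivity) (min_le_right _ _)
  refine ⟨max (max m₀ (2 * m₁)) 1, ?_⟩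
  intro m hm Q V _ _ hQ hV G hG hO
  have hm0 : m₀ ≤ m := le_trans (le_trans (le_max_left _ _) (le_max_left _ _)) hm
  have hm1 : 2 * m₁ ≤ m := le_trans (le_trans (le_max_right _ _) (le_max_left _ _)) hm
  have hm2 : 1 ≤ m := le_trans (le_max_right _ _) hm
  have hmR : (1 : ℝ) ≤ m := by exact_mod_cast hm2
  have : Nonempty V := Fintype.card_pos_iff.1 (by omega)
  obtain ⟨N, T, hN, hT, hT1, hT2, hTy⟩ := h₀ m hm0 hQ hV G hG hO
  have hβδ : 32 * β ≤ δ := by rw [hβ]; linarith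
  have hN' : 32 * (N : ℝ) ≤ δ * m := by nlinarith
  have hN8 : 8 * N ≤ m := by
    have : 8 * (N : ℝ) ≤ m := by nlinarith
    exact_mod_cast this
  obtain ⟨Q1, _, gQ, hgQ, covQ1, cQ1⟩ := exists_compl_range hT1
  obtain ⟨V1, _, gV, hgV, covV1, cV1⟩ := exists_compl_range hT2
  simp only [Fintype.card_prod, Fintype.card_fin, hQ, hV] at cQ1 cV1
  have hres : ∀ i : Q1, Ore (δ / 2) fun a b c : V1 => G (gQ i) (gV a) (gV b) (gV c) := fun i =>
    (hO _).restrict hδ0 hgV (by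
      have : (Fintype.card V1 : ℝ) + N * (4 * 3) = 3 * m := by exact_mod_cast cV1
      rw [hV]; push_cast
      nlinarith)
  obtain ⟨t, c, φ, hc, hφ, he, ht⟩ := h₁ (m - 4 * N) (by omega) (Q := Q1) (V := V1) (by omega)
    (by omega) (fun i a b c => G (gQ i) (gV a) (gV b) (gV c)) (fun i => (hG _).pull _) hres
  obtain ⟨Q2, _, gQ', -, covQ2, cQ2⟩ := exists_compl_range hc
  obtain ⟨V2, _, gV', -, covV2, cV2⟩ := exists_compl_range hφ
  simp only [Fintype.card_prod, Fintype.card_fin] at cQ2 cV2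
  let eQ : Fin (Fintype.card Q2) ≃ Q2 := (Fintype.equivFin Q2).symm
  let eV : Fin (Fintype.card Q2) × Fin 3 ≃ V2 := Fintype.equivOfCardEq (by simp; omega)
  let y : Fin (Fintype.card Q2) → Q × (Fin 3 → V) :=
    fun k => (gQ (gQ' (eQ k)), fun l => gV (gV' (eV (k, l))))
  have hr : (Fintype.card Q2 : ℝ) ≤ ρ * m := by
    have h1 : ((m - 4 * N : ℕ) : ℝ) = Fintype.card Q2 + t := by
      have : m - 4 * N = Fintype.card Q2 + t := by omega
      exact_mod_cast this
    have h2 : ((m - 4 * N : ℕ) : ℝ) ≤ m := by exact_mod_cast Nat.sub_le _ _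
    have h3 : min ρ 1 * ((m - 4 * N : ℕ) : ℝ) ≤ ρ * m :=
      mul_le_mul (min_le_left _ _) h2 (by positivity) hρ.le
    linarith
  obtain ⟨a, ha, hay⟩ := exists_assignment G T y fun k => by exact_mod_cast hr.trans (hTy (y k))
  refine assemble G (fun i => gQ (c i)) (fun i => gV (φ i)) T y a ha he hT hay ?_ ?_ ?_ ?_
  · intro q
    rcases covQ1 q with ⟨⟨j, l⟩, h⟩ | ⟨q, rfl⟩
    · exact .inr (.inr ⟨j, l, h⟩)
    · rcases covQ2 q with ⟨i, rfl⟩ | ⟨q, rfl⟩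
      · exact .inl ⟨i, rfl⟩
      · exact .inr (.inl ⟨eQ.symm q, by simp [y]⟩)
  · intro v
    rcases covV1 v with ⟨⟨j, l⟩, h⟩ | ⟨v, rfl⟩
    · exact .inr (.inr ⟨j, l, h⟩)
    · rcases covV2 v with ⟨i, rfl⟩ | ⟨v, rfl⟩
      · exact .inl ⟨i, rfl⟩
      · exact .inr (.inl ⟨(eV.symm v).1, (eV.symm v).2, by simp [y]⟩)
  · omega
  · omega

/-! ### Translation to `(1,3)`-partite 4-graphs -/

/-- The link of `u ∈ Q` in the `(1,3)`-partite 4-graph `H`, as an edge relation. -/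
def link {k n : ℕ} (H : Finset (Fin k × Finset (Fin n))) (u : Fin k) (a b c : Fin n) : Prop :=
  a ≠ b ∧ a ≠ c ∧ b ≠ c ∧ (u, {a, b, c}) ∈ H

theorem link_isThreeGraph {k n : ℕ} (H : Finset (Fin k × Finset (Fin n))) (u : Fin k) :
    IsThreeGraph (link H u) where
  swap₁ := by
    rintro a b c ⟨h1, h2, h3, h⟩
    exact ⟨h1.symm, h3, h2, by rwa [Finset.insert_comm]⟩
  swap₂ := by
    rintro a b c ⟨h1, h2, h3, h⟩
    exact ⟨h2, h1, h3.symm, by rwa [Finset.pair_comm]⟩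
  ne := fun h => h.1

theorem exists_link {k n : ℕ} {H : Finset (Fin k × Finset (Fin n))}
    (hH : ∀ p ∈ H, p.2.card = 3) {p : Fin k × Finset (Fin n)} (hp : p ∈ H) {v : Fin n}
    (hv : v ∈ p.2) : ∃ a b, p.2 = {v, a, b} ∧ link H p.1 v a b := by
  have h2 : #(p.2.erase v) = 2 := by rw [Finset.card_erase_of_mem hv, hH p hp]
  obtain ⟨a, b, hab, he⟩ := Finset.card_eq_two.1 h2
  have hs : p.2 = {v, a, b} := by rw [← he, Finset.insert_erase hv]
  have ha : a ∈ p.2.erase v := by rw [he]; simp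
  have hb : b ∈ p.2.erase v := by rw [he]; simp
  refine ⟨a, b, hs, (Finset.ne_of_mem_erase ha).symm, (Finset.ne_of_mem_erase hb).symm, hab, ?_⟩
  rw [← hs]; exact hp

/-- `dg` counts ordered pairs, so every edge through `u` and `v` is counted twice. -/
theorem two_mul_deg_le_dg {k n : ℕ} {H : Finset (Fin k × Finset (Fin n))}
    (hH : ∀ p ∈ H, p.2.card = 3) (u : Fin k) (v : Fin n) :
    2 * #(H.filter (fun p => p.1 = u ∧ v ∈ p.2)) ≤ dg (link H u) v := by
  unfold dg
  rw [Finset.card_eq_sum_card_fiberwise (f := fun q : Fin n × Fin n => (u, {v, q.1, q.2}))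
    (t := H.filter (fun p => p.1 = u ∧ v ∈ p.2)), mul_comm, ← smul_eq_mul]
  · apply Finset.card_nsmul_le_sum
    rintro ⟨u', s⟩ hp
    rw [mem_filter] at hp
    obtain ⟨hp, rfl, hv⟩ := hp
    obtain ⟨a, b, hs, hl⟩ := exists_link (p := (u', s)) hH hp hv
    dsimp only at hs hl
    have hl' := (link_isThreeGraph H u').swap₂ hl
    have hne : ((a, b) : Fin n × Fin n) ≠ (b, a) := fun h => hl.2.2.1 (Prod.ext_iff.1 h).1
    rw [← Finset.card_pair hne]
    apply Finset.card_le_card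
    intro q hq
    simp only [mem_insert, mem_singleton] at hq
    rcases hq with rfl | rfl
    · simp [hl, hs]
    · simp [hl', hs, Finset.pair_comm]
  · intro q hq
    have hq : link H u v q.1 q.2 := by simpa using hq
    simpa using hq.2.2.2

/-- `rainbow_pm` for the links of the vertices of `Q`. The side `Q` has an independent size `k`, so
that the division `n / 3` does not occur. -/
theorem partite_pm {δ : ℝ} (hδ : 0 < δ) :
    ∃ m₀ : ℕ, ∀ n k : ℕ, m₀ ≤ k → n = 3 * k →
    ∀ H : Finset (Fin k × Finset (Fin n)),
      (∀ p ∈ H, p.2.card = 3) →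
      (∀ u : Fin k, ∀ v : Fin n, ∃ p ∈ H, p.1 = u ∧ v ∈ p.2) →
      (∀ u : Fin k, ∀ v v' : Fin n, v ≠ v' →
        0 < (H.filter (fun p => p.1 = u ∧ v ∈ p.2 ∧ v' ∈ p.2)).card →
        (((H.filter (fun p => p.1 = u ∧ v ∈ p.2)).card
          + (H.filter (fun p => p.1 = u ∧ v' ∈ p.2)).card : ℝ)
            > (2 / 3 + δ) * (n : ℝ) ^ 2)) →
      ∃ M ⊆ H, (∀ p ∈ M, ∀ r ∈ M, p ≠ r → p.1 ≠ r.1 ∧ Disjoint p.2 r.2) ∧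
        (∀ u : Fin k, ∃ p ∈ M, p.1 = u) ∧ (∀ v : Fin n, ∃ p ∈ M, v ∈ p.2) := by
  obtain ⟨m₀, h₀⟩ := rainbow_pm (δ := min (2 * δ) (1 / 2)) (by positivity) (min_le_right _ _)
  refine ⟨m₀, ?_⟩
  intro n k hk hn H hH hadj hdeg
  obtain ⟨ι, c, φ, hc, hφ, he⟩ := h₀ k hk (Q := Fin k) (V := Fin n) (by simp) (by simp [hn])
    (link H) (link_isThreeGraph H) fun u => by
      refine ⟨fun v => ?_, fun {v w x} h => ?_⟩
      · obtain ⟨p, hp, rfl, hv⟩ := hadj u v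
        obtain ⟨a, b, -, h⟩ := exists_link hH hp hv
        exact ⟨a, b, h⟩
      · have h1 := hdeg u v w h.1 (Finset.card_pos.2 ⟨_, by
          rw [mem_filter]; exact ⟨h.2.2.2, rfl, by simp, by simp⟩⟩)
        have h2 : (2 : ℝ) * #(H.filter (fun p => p.1 = u ∧ v ∈ p.2)) ≤
            dg (link H u) v := by exact_mod_cast two_mul_deg_le_dg hH u v
        have h3 : (2 : ℝ) * #(H.filter (fun p => p.1 = u ∧ w ∈ p.2)) ≤
            dg (link H u) w := by exact_mod_cast two_mul_deg_le_dg hH u w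
        have h4 : min (2 * δ) (1 / 2) * (n : ℝ) ^ 2 ≤ 2 * δ * (n : ℝ) ^ 2 :=
          mul_le_mul_of_nonneg_right (min_le_left _ _) (by positivity)
        rw [Fintype.card_fin]
        linarith
  have : Fintype ι := Fintype.ofInjective c hc.1
  let E : ι → Fin k × Finset (Fin n) := fun i => (c i, {φ (i, 0), φ (i, 1), φ (i, 2)})
  have hE : ∀ i v, v ∈ (E i).2 ↔ ∃ r, φ (i, r) = v := by
    intro i v
    simp [E, Fin.exists_fin_succ, eq_comm]
  refine ⟨univ.image E, ?_, ?_, ?_, ?_⟩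
  · intro p hp
    obtain ⟨i, -, rfl⟩ := Finset.mem_image.1 hp
    exact (he i).2.2.2
  · intro p hp q hq hpq
    obtain ⟨i, -, rfl⟩ := Finset.mem_image.1 hp
    obtain ⟨j, -, rfl⟩ := Finset.mem_image.1 hq
    have hij : i ≠ j := fun h => hpq (by rw [h])
    refine ⟨fun h => hij (hc.1 h), ?_⟩
    rw [Finset.disjoint_left]
    intro v hv hv'
    obtain ⟨r, h1⟩ := (hE _ _).1 hv
    obtain ⟨s, h2⟩ := (hE _ _).1 hv'
    exact hij (Prod.ext_iff.1 (hφ.1 (h1.trans h2.symm))).1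
  · intro u
    obtain ⟨i, rfl⟩ := hc.2 u
    exact ⟨E i, Finset.mem_image_of_mem _ (mem_univ _), rfl⟩
  · intro v
    obtain ⟨⟨i, r⟩, h⟩ := hφ.2 v
    exact ⟨E i, Finset.mem_image_of_mem _ (mem_univ _), (hE _ _).2 ⟨r, h⟩⟩

end RainbowOre

/-- A `(1,3)`-partite 4-graph `H` with classes `Q = Fin (n/3)` and
`P = Fin n` is encoded as a finset of pairs `(u, s)` with `u ∈ Q` and `s ⊆ P`,
`|s| = 3`.  If every vertex of `Q` is adjacent to every vertex of `P`, and
`deg({u,v}) + deg({u,v'}) > (2/3 + δ)n²` whenever `deg({u,v,v'}) > 0`, then `H`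
has a perfect matching. -/
theorem stmt_2 (δ : ℝ) (hδ : 0 < δ) :
    ∃ n₀ : ℕ, ∀ n : ℕ, n₀ ≤ n → 3 ∣ n →
    ∀ H : Finset (Fin (n / 3) × Finset (Fin n)),
      (∀ p ∈ H, p.2.card = 3) →
      (∀ u : Fin (n / 3), ∀ v : Fin n, ∃ p ∈ H, p.1 = u ∧ v ∈ p.2) →
      (∀ u : Fin (n / 3), ∀ v v' : Fin n, v ≠ v' →
        0 < (H.filter (fun p => p.1 = u ∧ v ∈ p.2 ∧ v' ∈ p.2)).card →
        (((H.filter (fun p => p.1 = u ∧ v ∈ p.2)).card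
          + (H.filter (fun p => p.1 = u ∧ v' ∈ p.2)).card : ℝ)
            > (2 / 3 + δ) * (n : ℝ) ^ 2)) →
      ∃ M ⊆ H, (∀ p ∈ M, ∀ r ∈ M, p ≠ r → p.1 ≠ r.1 ∧ Disjoint p.2 r.2) ∧
        (∀ u : Fin (n / 3), ∃ p ∈ M, p.1 = u) ∧ (∀ v : Fin n, ∃ p ∈ M, v ∈ p.2) := by
  obtain ⟨m₀, h₀⟩ := RainbowOre.partite_pm hδ
  exact ⟨3 * m₀, fun n hn h3 => h₀ n (n / 3) (by omega) (by omega)⟩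
end

section
/- Let 0 < ρ′ ≪ ρ ≪ ε ≪ 1 be constants and let n be sufficiently large and divisible by 3. Let H be a (1,3)-partite 4-graph with partition classes Q and P, 3|Q| = |P| = n, such that every vertex of Q is adjacent to every vertex of P. Suppose that for any u ∈ Q and v, v′ ∈ P with deg({u,v,v′}) > 0 we have deg({u,v}) + deg({u,v′}) > (1/2 + ε)n². Then H contains a matching M′ with |M′| < ρn such that for every balanced subset S ⊆ V(H)∖V(M′) with |S| < ρ′n, the induced subhypergraph H[S ∪ V(M′)] has a perfect matching. -/
/-!
For `u ∈ Q` write `D u v` for the set of ordered pairs `(a, b)` with `(u, {a, b, v})` an edge, so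
`|D u v|` is twice `deg({u, v})`. The degree condition says that if `v, v'` lie in a common edge
with `u`, then `|D u v| + |D u v'| ≥ (1 + 2ε)n²`, hence `D u v` and `D u v'` share at least `2εn²`
pairs (`Linked`). Call `v` *large* for `u` if `|D u v| ≥ (1/2 + ε)n²`; any two large vertices are
linked. An edge at `u` has at most one vertex which is not large, so every `v` is linked to at
least `εn` large vertices (`Hyp.W_ge`).

Consequently, for all `y, z ∈ P` and all `u ∈ Q` there are at least `(εn)²` paths
`y – w – w' – z` of linked pairs. Averaging over `u` (power mean inequality) gives a positive
proportion of all *chains* from `y` to `z` (`Hyp.chain_ge`): three edges `u₁a₁b₁w`, `u₂a₂b₂w'`,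
`u₃a₃b₃z` such that also `u₁a₁b₁y`, `u₂a₂b₂w`, `u₃a₃b₃w'` are edges. If the three edges of a chain
are in the matching, switching to the other three edges covers `y` and frees `z`. For a balanced
quadruple `(x, y₁, y₂, y₃)`, three chains from the `yᵢ` to vertices `zᵢ` such that `x z₁ z₂ z₃` is
an edge form an absorber: its nine edges have a perfect matching, and so do its vertices together
with the quadruple (`absorb_pm`). Every quadruple has a positive proportion `ε²⁸` of all
nine-tuples of pointed edges as absorbers (`Hyp.absorbers_ge`), and only `O(1/n)` of these
nine-tuples are degenerate or meet a given one (`avail_ge`).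

A linear-size family of pairwise disjoint absorbers containing linearly many absorbers for each
quadruple is then chosen greedily: the potential `∑ₜ 2^(-number of chosen absorbers of t)` can be
decreased by a constant factor in each step (`greedy`), so that after `θn` steps it is
exponentially small, while there are only `O(n⁴)` quadruples `t`. A small balanced set `S` is cut
into quadruples, these are assigned to distinct absorbers, and each is absorbed (`assemble`).
-/

set_option linter.unusedSectionVars false

namespace Absorb
open Finset

/-! ### Links, chains and absorbers -/

section Counting
variable {Q P : Type*} [Fintype Q] [DecidableEq Q] [Fintype P] [DecidableEq P]

/-- The ordered link of `{u, v}`: the pairs `(a, b)` such that `(u, {a, b, v})` is an edge. -/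
def D (H : Finset (Q × Finset P)) (u : Q) (v : P) : Finset (P × P) :=
  univ.filter (fun p => (u, ({p.1, p.2, v} : Finset P)) ∈ H)

/-- Each edge containing `u` and `v` contributes both orderings of its two remaining vertices to
`D H u v`. -/
lemma two_deg_le (H : Finset (Q × Finset P)) (h3 : ∀ p ∈ H, p.2.card = 3) (u : Q) (v : P) :
    2 * (H.filter (fun p => p.1 = u ∧ v ∈ p.2)).card ≤ (D H u v).card := by
  have hmap : ∀ x ∈ D H u v, (u, ({x.1, x.2, v} : Finset P)) ∈
      H.filter (fun p => p.1 = u ∧ v ∈ p.2) := by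
    intro x hx
    simp only [D, mem_filter, mem_univ, true_and] at hx
    simp [hx]
  rw [Finset.card_eq_sum_card_fiberwise hmap, mul_comm, ← smul_eq_mul]
  apply Finset.card_nsmul_le_sum
  rintro ⟨u', s⟩ hp
  simp only [mem_filter] at hp
  obtain ⟨hH, rfl, hv⟩ := hp
  have hc := h3 _ hH
  have hc2 : (s.erase v).card = 2 := by rw [card_erase_of_mem hv, hc]
  obtain ⟨a, b, hab, hs⟩ := Finset.card_eq_two.mp hc2
  have e1 : ({a, b, v} : Finset P) = s := by
    rw [← insert_erase hv, hs]; ext; simp; tauto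
  have e2 : ({b, a, v} : Finset P) = s := by
    rw [← e1]; ext; simp; tauto
  have : ({(a, b), (b, a)} : Finset (P × P)).card = 2 := by
    apply Finset.card_pair; simp; tauto
  rw [← this]
  apply card_le_card
  intro x hx
  simp only [mem_insert, mem_singleton] at hx
  rcases hx with rfl | rfl <;> simp [D, e1, e2, hH]

variable (H : Finset (Q × Finset P)) (ε : ℝ)

/-- The hypotheses on `H` in terms of ordered links: edges have three vertices in `P`, every vertex
of `Q` is adjacent to every vertex of `P`, and the degree condition holds (in which
`|D H u v|` is twice a degree, whence the factor `1 + 2ε`). -/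
structure Hyp : Prop where
  card3 : ∀ p ∈ H, p.2.card = 3
  cover : ∀ u v, (D H u v).Nonempty
  ore : ∀ u v v' c, (u, ({v, v', c} : Finset P)) ∈ H →
    (1 + 2 * ε) * (Fintype.card P : ℝ) ^ 2 ≤ (D H u v).card + (D H u v').card

/-- `v` is large for `u` if its ordered link contains a proportion of at least `1/2 + ε` of all pairs. -/
def IsLarge (u : Q) (v : P) : Prop := (1 / 2 + ε) * (Fintype.card P : ℝ) ^ 2 ≤ (D H u v).card

/-- `v` and `w` are linked for `u` if their ordered links share at least `2ε|P|²` pairs. -/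
def Linked (u : Q) (v w : P) : Prop :=
  2 * ε * (Fintype.card P : ℝ) ^ 2 ≤ (D H u v ∩ D H u w).card

lemma D_card_le (u : Q) (v : P) : ((D H u v).card : ℝ) ≤ (Fintype.card P : ℝ) ^ 2 := by
  have : (D H u v).card ≤ Fintype.card (P × P) := Finset.card_le_univ _
  rw [Fintype.card_prod] at this
  rw [sq]; exact_mod_cast this

lemma common (u : Q) (v w : P) : ((D H u v).card + (D H u w).card : ℝ) ≤
    (Fintype.card P : ℝ) ^ 2 + (D H u v ∩ D H u w).card := by
  have h1 := Finset.card_union_add_card_inter (D H u v) (D H u w)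
  have : (D H u v ∪ D H u w).card ≤ Fintype.card (P × P) := Finset.card_le_univ _
  rw [Fintype.card_prod, ← sq] at this
  have h2 : (D H u v).card + (D H u w).card ≤
    (Fintype.card P) ^ 2 + (D H u v ∩ D H u w).card := by omega
  exact_mod_cast h2

variable {H ε}

lemma Linked.symm {u : Q} {v w : P} (h : Linked H ε u v w) : Linked H ε u w v := by
  unfold Linked at *; rwa [inter_comm]

lemma linked_of_sum {u : Q} {v w : P}
    (h : (1 + 2 * ε) * (Fintype.card P : ℝ) ^ 2 ≤ (D H u v).card + (D H u w).card) :
    Linked H ε u v w := by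
  have := common H u v w
  unfold Linked; linarith

lemma linked_of_large {u : Q} {v w : P} (hv : IsLarge H ε u v) (hw : IsLarge H ε u w) :
    Linked H ε u v w := by
  apply linked_of_sum; unfold IsLarge at *; linarith

/-- As `v` shares an edge with some `a` and `|D H u a| ≤ |P|²`, the degree condition bounds
`|D H u v|` from below. -/
lemma Hyp.D_ge (h : Hyp H ε) (u : Q) (v : P) :
    2 * ε * (Fintype.card P : ℝ) ^ 2 ≤ (D H u v).card := by
  obtain ⟨⟨a, b⟩, hab⟩ := h.cover u v
  simp only [D, mem_filter, mem_univ, true_and] at hab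
  have := h.ore u a v b (by rwa [pair_comm b v] at hab)
  have := D_card_le H u a
  linarith

open Classical in
/-- The large vertices linked to `v`. -/
noncomputable def W (H : Finset (Q × Finset P)) (ε : ℝ) (u : Q) (v : P) : Finset P :=
  univ.filter (fun w => IsLarge H ε u w ∧ Linked H ε u v w)

lemma mem_W {u : Q} {v w : P} : w ∈ W H ε u v ↔ IsLarge H ε u w ∧ Linked H ε u v w := by
  simp [W]

/-- In an edge `(u, {a, b, v})` both `a` and `b` are linked to `v` and at least one of them is
large; so every pair in `D H u v` has an entry in `W H ε u v`, and there are at least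
`2ε|P|²` such pairs by `Hyp.D_ge`. -/
lemma Hyp.W_ge (h : Hyp H ε) (u : Q) (v : P) [Nonempty P] :
    ε * (Fintype.card P : ℝ) ≤ (W H ε u v).card := by
  have hsub : D H u v ⊆ (W H ε u v ×ˢ univ) ∪ (univ ×ˢ W H ε u v) := by
    rintro ⟨a, b⟩ hab
    simp only [D, mem_filter, mem_univ, true_and] at hab
    have h1 := h.ore u a b v hab
    have h2 := h.ore u v a b (by convert hab using 2; ext; simp; tauto)
    have h3 := h.ore u v b a (by convert hab using 2; ext; simp; tauto)
    simp only [mem_union, mem_product, mem_univ, and_true, true_and, mem_W]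
    by_cases hl : IsLarge H ε u a
    · exact Or.inl ⟨hl, linked_of_sum h2⟩
    · refine Or.inr ⟨?_, linked_of_sum h3⟩
      unfold IsLarge at *; push Not at hl; linarith
  have h1 := (card_le_card hsub).trans (card_union_le _ _)
  rw [card_product, card_product, card_univ] at h1
  have h2 := h.D_ge u v
  have h3 : ((D H u v).card : ℝ) ≤ (W H ε u v).card * Fintype.card P +
    Fintype.card P * (W H ε u v).card := by exact_mod_cast h1
  have : (0 : ℝ) < Fintype.card P := by exact_mod_cast Fintype.card_pos
  by_contra hc
  push Not at hc
  nlinarith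

/-- Ordered quadruples with one vertex in `Q` and three in `P`. They serve both as the quadruples to
be absorbed and as pointed edges `(u, a, b, w)`, whose last vertex `w` is the point. -/
abbrev E (Q P : Type*) := Q × P × P × P

/-- `(u, a, b, w)` is an edge which remains an edge when its point `w` is replaced by `v`. -/
def Swap (H : Finset (Q × Finset P)) (v : P) (e : E Q P) : Prop :=
  (e.1, ({e.2.1, e.2.2.1, v} : Finset P)) ∈ H ∧
  (e.1, ({e.2.1, e.2.2.1, e.2.2.2} : Finset P)) ∈ H

open Classical in
/-- The pointed edges with point `w` in which `w` may be replaced by `v`. -/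
noncomputable def S (H : Finset (Q × Finset P)) (v w : P) : Finset (E Q P) :=
  univ.filter (fun e => Swap H v e ∧ e.2.2.2 = w)

open Classical in
/-- If `v, w` are linked for every `u ∈ U`, then each such `u` contributes at least `2ε|P|²` pointed
edges to `S H v w`. -/
lemma S_ge (v w : P) (U : Finset Q) (hU : ∀ u ∈ U, Linked H ε u v w) :
    2 * ε * (Fintype.card P : ℝ) ^ 2 * U.card ≤ (S H v w).card := by
  have h1 : (U.sigma (fun u => D H u v ∩ D H u w)).card ≤ (S H v w).card := by
    apply Finset.card_le_card_of_injOn (fun x => (x.1, x.2.1, x.2.2, w))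
    · rintro ⟨u, a, b⟩ hx
      simp only [D, coe_sigma, Set.mem_sigma_iff, mem_coe, mem_inter, mem_filter, mem_univ,
        true_and] at hx
      exact mem_coe.2 (mem_filter.2 ⟨mem_univ _, hx.2, rfl⟩)
    · rintro ⟨u, a, b⟩ _ ⟨u', a', b'⟩ _ hx
      simp at hx
      obtain ⟨rfl, rfl, rfl⟩ := hx
      rfl
  rw [card_sigma] at h1
  have h2 : ∑ u ∈ U, (2 * ε * (Fintype.card P : ℝ) ^ 2) ≤ ∑ u ∈ U, ((D H u v ∩ D H u w).card : ℝ) :=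
    Finset.sum_le_sum (fun u hu => hU u hu)
  rw [sum_const, nsmul_eq_mul] at h2
  have h3 : ∑ u ∈ U, ((D H u v ∩ D H u w).card : ℝ) ≤ (S H v w).card := by exact_mod_cast h1
  linarith

open Classical in
/-- The chains from `y` to `z`: triples of pointed edges, the last with point `z`, in which the points
may be replaced by `y`, by the point of the first and by the point of the second edge
respectively. -/
noncomputable def chain (H : Finset (Q × Finset P)) (y z : P) :
    Finset (E Q P × E Q P × E Q P) :=
  univ.filter (fun c => Swap H y c.1 ∧ Swap H c.1.2.2.2 c.2.1 ∧ Swap H c.2.1.2.2.2 c.2.2 ∧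
    c.2.2.2.2.2 = z)

open Classical in
lemma chain_sum (y z : P) :
    ∑ w : P × P, (S H y w.1).card * ((S H w.1 w.2).card * (S H w.2 z).card)
      ≤ (chain H y z).card := by
  have h1 : ((univ : Finset (P × P)).sigma
      (fun w => S H y w.1 ×ˢ S H w.1 w.2 ×ˢ S H w.2 z)).card ≤ (chain H y z).card := by
    apply Finset.card_le_card_of_injOn (fun x => x.2)
    · rintro ⟨⟨w, w'⟩, e1, e2, e3⟩ hx
      simp [S] at hx
      obtain ⟨⟨h1, rfl⟩, ⟨h2, rfl⟩, h3, rfl⟩ := hx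
      simp [chain, h1, h2, h3]
    · rintro ⟨⟨w, w'⟩, e1, e2, e3⟩ hx ⟨⟨w1, w1'⟩, e1', e2', e3'⟩ hx' h
      simp [S] at hx hx'
      obtain ⟨⟨h1, rfl⟩, ⟨h2, rfl⟩, h3, rfl⟩ := hx
      obtain ⟨⟨h1, rfl⟩, ⟨h2, rfl⟩, h3, hh⟩ := hx'
      simp at h
      obtain ⟨rfl, rfl, rfl⟩ := h
      rfl
  simpa [card_sigma, card_product] using h1

open Classical in
/-- A positive proportion of the triples of pointed edges ending in `z` are chains from `y` to `z`.
For a pair `w = (w₁, w₂)`, let `U w` be the set of `u` for which `w₁ ∈ W u y` and `w₂ ∈ W u z`. Along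
`y, w₁, w₂, z` consecutive vertices are linked for every `u ∈ U w`, which gives `(2ε|P|²|U w|)³`
chains; the sum over `w` is estimated by the power mean inequality. -/
lemma Hyp.chain_ge [Nonempty P] (h : Hyp H ε) (hε : 0 < ε) (y z : P) :
    8 * ε ^ 9 * (Fintype.card Q : ℝ) ^ 3 * (Fintype.card P : ℝ) ^ 8 ≤ (chain H y z).card := by
  set n : ℝ := (Fintype.card P : ℝ) with hn
  set q : ℝ := (Fintype.card Q : ℝ) with hq
  have hnpos : 0 < n := by simp [hn, Fintype.card_pos]
  let U : P × P → Finset Q := fun w => univ.filter (fun u => w.1 ∈ W H ε u y ∧ w.2 ∈ W H ε u z)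
  have hU : q * (ε * n) ^ 2 ≤ ∑ w, ((U w).card : ℝ) := by
    have h1 : ∑ w, (U w).card = ∑ u : Q, (W H ε u y).card * (W H ε u z).card := by
      simp only [U, card_filter]
      rw [sum_comm]
      apply sum_congr rfl
      intro u _
      rw [← card_product, ← card_filter]
      congr 1
      ext; simp
    have h2 : ∑ u : Q, (ε * n) ^ 2 ≤ ∑ u : Q, ((W H ε u y).card * (W H ε u z).card : ℝ) := by
      apply sum_le_sum
      intro u _
      rw [sq]
      exact mul_le_mul (h.W_ge u y) (h.W_ge u z) (by positivity) (by positivity)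
    rw [sum_const, nsmul_eq_mul, card_univ] at h2
    have h3 : ∑ w, ((U w).card : ℝ) = ∑ u : Q, ((W H ε u y).card * (W H ε u z).card : ℝ) := by
      exact_mod_cast h1
    rw [h3]; exact h2
  have hpow := pow_sum_div_card_le_sum_pow (s := (univ : Finset (P × P)))
    (f := fun w => ((U w).card : ℝ)) (fun _ _ => by positivity) 2
  rw [card_univ, Fintype.card_prod, Nat.cast_mul, ← hn] at hpow
  have hterm : ∀ w : P × P, (2 * ε * n ^ 2) ^ 3 * ((U w).card : ℝ) ^ 3 ≤
      (S H y w.1).card * ((S H w.1 w.2).card * (S H w.2 z).card) := by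
    intro w
    have a1 := S_ge (H := H) y w.1 (U w) (by
      intro u hu; simp only [U, mem_filter, mem_W] at hu; exact hu.2.1.2)
    have a2 := S_ge (H := H) w.1 w.2 (U w) (by
      intro u hu; simp only [U, mem_filter, mem_W] at hu
      exact linked_of_large hu.2.1.1 hu.2.2.1)
    have a3 := S_ge (H := H) w.2 z (U w) (by
      intro u hu; simp only [U, mem_filter, mem_W] at hu; exact hu.2.2.2.symm)
    calc _ = (2 * ε * n ^ 2 * (U w).card) * ((2 * ε * n ^ 2 * (U w).card) *
          (2 * ε * n ^ 2 * (U w).card)) := by ring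
      _ ≤ _ := by gcongr
  have hsum : (2 * ε * n ^ 2) ^ 3 * ∑ w, ((U w).card : ℝ) ^ 3 ≤ (chain H y z).card := by
    rw [mul_sum]
    refine (sum_le_sum (fun w _ => hterm w)).trans ?_
    exact_mod_cast chain_sum (H := H) y z
  refine le_trans ?_ hsum
  have h5 : q ^ 3 * ε ^ 6 * n ^ 2 ≤ ∑ w, ((U w).card : ℝ) ^ 3 := by
    refine le_trans ?_ hpow
    rw [le_div_iff₀ (by positivity)]
    calc _ = (q * (ε * n) ^ 2) ^ 3 := by ring
      _ ≤ _ := by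
        apply pow_le_pow_left₀ (by positivity) hU
  calc _ = (2 * ε * n ^ 2) ^ 3 * (q ^ 3 * ε ^ 6 * n ^ 2) := by ring
    _ ≤ _ := by gcongr

/-- Nine-tuples of pointed edges, thought of as three chains of length three. -/
abbrev Block (Q P : Type*) := Fin 9 → E Q P

/-- `e` is an absorber for `t = (x, y₁, y₂, y₃)`: it consists of chains from `y₁`, `y₂` and `y₃` to
vertices `z₁`, `z₂` and `z₃` that form an edge with `x`. -/
structure Absorbs (H : Finset (Q × Finset P)) (t : E Q P) (e : Block Q P) : Prop where
  s0 : Swap H t.2.1 (e 0)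
  s1 : Swap H (e 0).2.2.2 (e 1)
  s2 : Swap H (e 1).2.2.2 (e 2)
  s3 : Swap H t.2.2.1 (e 3)
  s4 : Swap H (e 3).2.2.2 (e 4)
  s5 : Swap H (e 4).2.2.2 (e 5)
  s6 : Swap H t.2.2.2 (e 6)
  s7 : Swap H (e 6).2.2.2 (e 7)
  s8 : Swap H (e 7).2.2.2 (e 8)
  s9 : (t.1, ({(e 2).2.2.2, (e 5).2.2.2, (e 8).2.2.2} : Finset P)) ∈ H

open Classical in
/-- The absorbers for `t`, not required to have pairwise disjoint edges. -/
noncomputable def absorbers (H : Finset (Q × Finset P)) (t : E Q P) : Finset (Block Q P) :=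
  univ.filter (Absorbs H t)

open Classical in
/-- A proportion of at least `ε²⁸` of all blocks are absorbers for `t`: one factor `ε` is due to the
choice of an edge `(x, {z₁, z₂, z₃})` and a factor `ε⁹` to each of the three chains. -/
lemma Hyp.absorbers_ge [Nonempty P] (h : Hyp H ε) (hε : 0 < ε) (t : E Q P) :
    ε ^ 28 * (Fintype.card (Block Q P) : ℝ) ≤ (absorbers H t).card := by
  obtain ⟨x, y1, y2, y3⟩ := t
  set n : ℝ := (Fintype.card P : ℝ) with hn
  set q : ℝ := (Fintype.card Q : ℝ) with hq
  let Z : Finset (Σ _ : P, P × P) := (univ : Finset P).sigma (fun c => D H x c)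
  have hZ : 2 * ε * n ^ 3 ≤ Z.card := by
    have : ∑ c : P, 2 * ε * n ^ 2 ≤ ∑ c : P, ((D H x c).card : ℝ) :=
      sum_le_sum (fun c _ => h.D_ge x c)
    rw [sum_const, nsmul_eq_mul, card_univ] at this
    simp only [Z, card_sigma]
    push_cast
    calc _ = n * (2 * ε * n ^ 2) := by ring
      _ ≤ _ := this
  have h1 : (Z.sigma (fun z => chain H y1 z.2.1 ×ˢ chain H y2 z.2.2 ×ˢ chain H y3 z.1)).card ≤
      (absorbers H (x, y1, y2, y3)).card := by
    apply Finset.card_le_card_of_injOn (fun s => ![s.2.1.1, s.2.1.2.1, s.2.1.2.2,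
      s.2.2.1.1, s.2.2.1.2.1, s.2.2.1.2.2, s.2.2.2.1, s.2.2.2.2.1, s.2.2.2.2.2])
    · rintro ⟨⟨c, a, b⟩, c1, c2, c3⟩ hx
      simp [Z, chain, D] at hx
      obtain ⟨h0, ⟨a1, a2, a3, rfl⟩, ⟨b1, b2, b3, rfl⟩, d1, d2, d3, rfl⟩ := hx
      exact mem_coe.2 (mem_filter.2 ⟨mem_univ _, a1, a2, a3, b1, b2, b3, d1, d2, d3, h0⟩)
    · rintro ⟨⟨c, a, b⟩, ⟨c1, c2, c3⟩, ⟨c4, c5, c6⟩, ⟨c7, c8, c9⟩⟩ hx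
        ⟨⟨c', a', b'⟩, ⟨c1', c2', c3'⟩, ⟨c4', c5', c6'⟩, ⟨c7', c8', c9'⟩⟩ hx' hh
      simp [Z, chain, D] at hx hx'
      obtain ⟨h0, ⟨a1, a2, a3, rfl⟩, ⟨b1, b2, b3, rfl⟩, d1, d2, d3, rfl⟩ := hx
      obtain ⟨h0, ⟨a1, a2, a3, rfl⟩, ⟨b1, b2, b3, rfl⟩, d1, d2, d3, rfl⟩ := hx'
      have k0 := congrFun hh 0
      have k1 := congrFun hh 1
      have k2 := congrFun hh 2
      have k3 := congrFun hh 3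
      have k4 := congrFun hh 4
      have k5 := congrFun hh 5
      have k6 := congrFun hh 6
      have k7 := congrFun hh 7
      have k8 := congrFun hh 8
      change c1 = c1' at k0
      change c2 = c2' at k1
      change c3 = c3' at k2
      change c4 = c4' at k3
      change c5 = c5' at k4
      change c6 = c6' at k5
      change c7 = c7' at k6
      change c8 = c8' at k7
      change c9 = c9' at k8
      subst k0 k1 k2 k3 k4 k5 k6 k7 k8
      rfl
  rw [card_sigma] at h1
  have h2 : ∑ z ∈ Z, (8 * ε ^ 9 * q ^ 3 * n ^ 8) ^ 3 ≤ ((absorbers H (x, y1, y2, y3)).card : ℝ) := by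
    refine le_trans (sum_le_sum (fun z _ => ?_)) (Nat.cast_le.mpr h1 |>.trans' (Nat.cast_sum _ _).ge)
    rw [card_product, card_product]
    push_cast
    have g1 := h.chain_ge hε y1 z.2.1
    have g2 := h.chain_ge hε y2 z.2.2
    have g3 := h.chain_ge hε y3 z.1
    calc _ = (8 * ε ^ 9 * q ^ 3 * n ^ 8) * ((8 * ε ^ 9 * q ^ 3 * n ^ 8) *
          (8 * ε ^ 9 * q ^ 3 * n ^ 8)) := by ring
      _ ≤ _ := by gcongr
  rw [sum_const, nsmul_eq_mul] at h2
  refine le_trans ?_ h2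
  have hcard : (Fintype.card (Block Q P) : ℝ) = (q * n ^ 3) ^ 9 := by
    simp [Block, E, hq, hn]; ring
  rw [hcard]
  have hn0 : 0 ≤ n := by positivity
  have hq0 : 0 ≤ q := by positivity
  calc _ ≤ 1024 * (ε ^ 28 * (q * n ^ 3) ^ 9) := by
        have : 0 ≤ ε ^ 28 * (q * n ^ 3) ^ 9 := by positivity
        linarith
    _ = (2 * ε * n ^ 3) * (8 * ε ^ 9 * q ^ 3 * n ^ 8) ^ 3 := by ring
    _ ≤ _ := by gcongr

/-- The three vertices of `P` in a pointed edge. -/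
def vP (e : E Q P) : Finset P := {e.2.1, e.2.2.1, e.2.2.2}

/-- Two pointed edges share a vertex. -/
def Meet (e f : E Q P) : Prop := e.1 = f.1 ∨ ¬ Disjoint (vP e) (vP f)

lemma Meet.symm {e f : E Q P} (h : Meet e f) : Meet f e := by
  unfold Meet at *; rwa [eq_comm, disjoint_comm]

lemma meet_self (e : E Q P) : Meet e e := Or.inl rfl

open Classical in
lemma meet_card (f : E Q P) : (univ.filter (fun e : E Q P => Meet e f)).card ≤
    Fintype.card P ^ 3 + 9 * (Fintype.card Q * Fintype.card P ^ 2) := by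
  have hsub : univ.filter (fun e : E Q P => Meet e f) ⊆
      ({f.1} : Finset Q) ×ˢ (univ : Finset (P × P × P)) ∪
      ((univ : Finset Q) ×ˢ (vP f ×ˢ (univ : Finset (P × P))) ∪
      ((univ : Finset Q) ×ˢ ((univ : Finset P) ×ˢ (vP f ×ˢ (univ : Finset P))) ∪
      (univ : Finset Q) ×ˢ ((univ : Finset P) ×ˢ ((univ : Finset P) ×ˢ vP f)))) := by
    rintro ⟨u, a, b, c⟩ he
    simp only [mem_filter, mem_univ, true_and, Meet, not_disjoint_iff] at he
    simp only [mem_union, mem_product, mem_univ, mem_singleton, true_and, and_true]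
    rcases he with h | ⟨v, h1, h2⟩
    · exact Or.inl h
    · right
      simp only [vP, mem_insert, mem_singleton] at h1
      rcases h1 with rfl | rfl | rfl
      · exact Or.inl h2
      · exact Or.inr (Or.inl h2)
      · exact Or.inr (Or.inr h2)
  have h3 : (vP f).card ≤ 3 := card_le_three
  refine (card_le_card hsub).trans ?_
  refine (card_union_le _ _).trans ?_
  refine (Nat.add_le_add_left (card_union_le _ _) _).trans ?_
  refine (Nat.add_le_add_left (Nat.add_le_add_left (card_union_le _ _) _) _).trans ?_
  simp only [card_product, card_univ, card_singleton, Fintype.card_prod]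
  have := Nat.mul_le_mul_left (Fintype.card Q * Fintype.card P ^ 2) h3
  nlinarith

open Classical in
/-- All but one of the nine pointed edges are free, and the remaining one has to meet a pointed edge
determined by the others. -/
lemma slot_card (i : Fin 9) (g : (Fin 8 → E Q P) → E Q P) :
    (univ.filter (fun x : Block Q P => Meet (x i) (g (i.removeNth x)))).card ≤
      Fintype.card (E Q P) ^ 8 *
        (Fintype.card P ^ 3 + 9 * (Fintype.card Q * Fintype.card P ^ 2)) := by
  have h1 : (univ.filter (fun x : Block Q P => Meet (x i) (g (i.removeNth x)))).card ≤
      ((univ : Finset (Fin 8 → E Q P)).sigma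
        (fun y => univ.filter (fun e => Meet e (g y)))).card := by
    apply Finset.card_le_card_of_injOn (fun x => ⟨i.removeNth x, x i⟩)
    · intro x hx
      simpa using hx
    · intro x _ y _ hxy
      simp only [Sigma.mk.injEq, heq_eq_eq] at hxy
      rw [← Fin.insertNth_self_removeNth i x, ← Fin.insertNth_self_removeNth i y, hxy.1, hxy.2]
  refine h1.trans ?_
  rw [card_sigma]
  refine (sum_le_sum (fun y _ => meet_card (g y))).trans ?_
  simp

/-- The nine edges of the block are pairwise disjoint. -/
def Proper (x : Block Q P) : Prop := ∀ i j, i ≠ j → ¬ Meet (x i) (x j)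

/-- Some edge of `x` shares a vertex with some edge of `y`. -/
def Conf (x y : Block Q P) : Prop := ∃ i j, Meet (x i) (y j)

open Classical in
/-- All but few blocks of `B` are proper and do not meet any block of `F`. -/
lemma avail_ge (B : Finset (Block Q P)) (F : Finset (Block Q P)) :
    B.card ≤ ((B.filter Proper).filter (fun x => ∀ y ∈ F, ¬ Conf x y)).card +
      81 * (F.card + 1) * (Fintype.card (E Q P) ^ 8 *
        (Fintype.card P ^ 3 + 9 * (Fintype.card Q * Fintype.card P ^ 2))) := by
  set μ := Fintype.card (E Q P) ^ 8 *
        (Fintype.card P ^ 3 + 9 * (Fintype.card Q * Fintype.card P ^ 2)) with hμ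
  let B1 : Fin 9 × Fin 9 → Finset (Block Q P) := fun p =>
    univ.filter (fun x => p.1 ≠ p.2 ∧ Meet (x p.1) (x p.2))
  let B2 : Block Q P × Fin 9 × Fin 9 → Finset (Block Q P) := fun p =>
    univ.filter (fun x => Meet (x p.2.1) (p.1 p.2.2))
  have c1 : ∀ p, (B1 p).card ≤ μ := by
    rintro ⟨i, j⟩
    by_cases hij : i = j
    · simp [B1, hij]
    · obtain ⟨k, hk⟩ := Fin.exists_succAbove_eq (Ne.symm hij)
      refine le_trans (card_le_card ?_) (slot_card i (fun y => y k))
      intro x hx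
      simp only [B1, mem_filter, mem_univ, true_and] at hx ⊢
      rw [Fin.removeNth_apply, hk]; exact hx.2
  have c2 : ∀ p, (B2 p).card ≤ μ := by
    rintro ⟨y, i, j⟩
    exact slot_card i (fun _ => y j)
  have hsub : B ⊆ ((B.filter Proper).filter (fun x => ∀ y ∈ F, ¬ Conf x y)) ∪
      (univ.biUnion B1 ∪ (F ×ˢ univ).biUnion B2) := by
    intro x hx
    by_cases h1 : Proper x
    · by_cases h2 : ∀ y ∈ F, ¬ Conf x y
      · exact mem_union_left _ (mem_filter.2 ⟨mem_filter.2 ⟨hx, h1⟩, h2⟩)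
      · push Not at h2
        obtain ⟨y, hy, i, j, hm⟩ := h2
        refine mem_union_right _ (mem_union_right _ (mem_biUnion.2 ⟨(y, i, j), ?_, ?_⟩))
        · simp [hy]
        · exact mem_filter.2 ⟨mem_univ _, hm⟩
    · unfold Proper at h1
      push Not at h1
      obtain ⟨i, j, hij, hm⟩ := h1
      exact mem_union_right _ (mem_union_left _ (mem_biUnion.2 ⟨(i, j), mem_univ _,
        mem_filter.2 ⟨mem_univ _, hij, hm⟩⟩))
  have d1 : (univ.biUnion B1).card ≤ 81 * μ := by
    refine (card_biUnion_le_card_mul _ _ μ (fun p _ => c1 p)).trans ?_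
    simp
  have d2 : ((F ×ˢ univ).biUnion B2).card ≤ F.card * 81 * μ := by
    refine (card_biUnion_le_card_mul _ _ μ (fun p _ => c2 p)).trans ?_
    simp
  have := card_le_card hsub
  have e1 := card_union_le ((B.filter Proper).filter (fun x => ∀ y ∈ F, ¬ Conf x y))
    (univ.biUnion B1 ∪ (F ×ˢ univ).biUnion B2)
  have e2 := card_union_le (univ.biUnion B1) ((F ×ˢ univ).biUnion B2)
  calc _ ≤ ((B.filter Proper).filter (fun x => ∀ y ∈ F, ¬ Conf x y)).card +
        (81 * μ + F.card * 81 * μ) := by omega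
    _ = _ := by ring

/-! ### Perfect matchings on vertex sets -/

/-- `H[A ∪ B]` has a perfect matching. -/
def HasPM (H : Finset (Q × Finset P)) (A : Finset Q) (B : Finset P) : Prop :=
  ∃ M ⊆ H, (∀ p ∈ M, ∀ r ∈ M, p ≠ r → p.1 ≠ r.1 ∧ Disjoint p.2 r.2) ∧
    M.image Prod.fst = A ∧ M.biUnion Prod.snd = B

lemma HasPM.single {u : Q} {s : Finset P} (h : (u, s) ∈ H) : HasPM H {u} s := by
  refine ⟨{(u, s)}, by simpa using h, ?_, by simp, by simp⟩
  intro p hp r hr hpr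
  rw [mem_singleton] at hp hr
  exact absurd (hp.trans hr.symm) hpr

open Classical in
lemma HasPM.biUnion {ι : Type*} (s : Finset ι) (A : ι → Finset Q) (B : ι → Finset P)
    (h : ∀ i ∈ s, HasPM H (A i) (B i))
    (hA : ∀ i ∈ s, ∀ j ∈ s, i ≠ j → Disjoint (A i) (A j))
    (hB : ∀ i ∈ s, ∀ j ∈ s, i ≠ j → Disjoint (B i) (B j)) :
    HasPM H (s.biUnion A) (s.biUnion B) := by
  choose! M hMH hMd hMA hMB using h
  refine ⟨s.biUnion M, biUnion_subset.2 hMH, ?_, ?_, ?_⟩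
  · intro p hp r hr hpr
    obtain ⟨i, hi, hpi⟩ := mem_biUnion.1 hp
    obtain ⟨j, hj, hrj⟩ := mem_biUnion.1 hr
    by_cases hij : i = j
    · subst hij; exact hMd i hi p hpi r hrj hpr
    · constructor
      · refine disjoint_iff_ne.1 (hA i hi j hj hij) _ ?_ _ ?_
        · rw [← hMA i hi]; exact mem_image_of_mem _ hpi
        · rw [← hMA j hj]; exact mem_image_of_mem _ hrj
      · refine (hB i hi j hj hij).mono ?_ ?_
        · rw [← hMB i hi]; exact subset_biUnion_of_mem _ hpi
        · rw [← hMB j hj]; exact subset_biUnion_of_mem _ hrj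
  · rw [biUnion_image]
    exact biUnion_congr rfl hMA
  · rw [biUnion_biUnion]
    exact biUnion_congr rfl hMB

lemma HasPM.union {A A' : Finset Q} {B B' : Finset P} (h : HasPM H A B) (h' : HasPM H A' B')
    (hA : Disjoint A A') (hB : Disjoint B B') : HasPM H (A ∪ A') (B ∪ B') := by
  have := HasPM.biUnion (H := H) (univ : Finset Bool) (fun b => if b then A else A')
    (fun b => if b then B else B') (by simp [h, h'])
    (by simp [hA, hA.symm]) (by simp [hB, hB.symm])
  simpa using this

end Counting

/-! ### Greedy selection -/

section Greedy
variable {X T : Type*} [Fintype X] [DecidableEq X] [Fintype T] [Nonempty X] [Nonempty T]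

open Classical in
/-- If after removal of everything in conflict with fewer than `K` elements each `A t` still has
density at least `δ`, then one can choose any `k ≤ K` pairwise non-conflicting elements such that the
potential `∑ₜ 2^(-|F ∩ A t|)` decays like `(1 - δ/2)^k`: a random admissible element lies in `A t`
with probability at least `δ` and then halves the summand of `t`. -/
lemma greedy (A : T → Finset X) (conf : X → X → Prop) (hrefl : ∀ x, conf x x)
    (hsymm : ∀ x y, conf x y → conf y x) (δ : ℝ) (hδ : 0 < δ) (K : ℕ)
    (hA : ∀ F : Finset X, F.card < K → ∀ t,
      δ * (Fintype.card X : ℝ) ≤ ((A t).filter (fun x => ∀ y ∈ F, ¬ conf x y)).card)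
    (k : ℕ) (hk : k ≤ K) :
    ∃ F : Finset X, F.card = k ∧ (∀ x ∈ F, ∀ y ∈ F, x ≠ y → ¬ conf x y) ∧
      (∀ x ∈ F, ∃ t, x ∈ A t) ∧
      ∑ t, ((1 / 2 : ℝ) ^ (F ∩ A t).card) ≤ (Fintype.card T : ℝ) * (1 - δ / 2) ^ k := by
  induction k with
  | zero => exact ⟨∅, by simp⟩
  | succ k ih =>
    obtain ⟨F, hFc, hFd, hFA, hFs⟩ := ih (by omega)
    set Y : Finset X := univ.filter (fun x => (∃ t, x ∈ A t) ∧ ∀ y ∈ F, ¬ conf x y) with hY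
    have hXpos : (0 : ℝ) < Fintype.card X := by exact_mod_cast Fintype.card_pos
    have hAY : ∀ t, δ * (Fintype.card X : ℝ) ≤ (Y ∩ A t).card := by
      intro t
      refine (hA F (by omega) t).trans ?_
      exact_mod_cast card_le_card (fun x hx => by
        simp only [mem_filter] at hx
        simp only [hY, mem_inter, mem_filter, mem_univ, true_and]
        exact ⟨⟨⟨t, hx.1⟩, hx.2⟩, hx.1⟩)
    have hYX : (Y.card : ℝ) ≤ Fintype.card X := by exact_mod_cast card_le_univ Y
    have hYne : Y.Nonempty := by
      obtain ⟨t⟩ := ‹Nonempty T›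
      have h0 : 0 < (Y ∩ A t).card := by
        have := hAY t
        have h1 : 0 < δ * (Fintype.card X : ℝ) := by positivity
        exact_mod_cast h1.trans_le this
      exact (card_pos.mp h0).mono inter_subset_left
    have hnot : ∀ x ∈ Y, x ∉ F := fun x hx hxF => by
      simp only [hY, mem_filter] at hx
      exact hx.2.2 x hxF (hrefl x)
    have hstep : ∀ x ∈ Y, ∀ t, ((1 / 2 : ℝ) ^ (insert x F ∩ A t).card) =
        (1 / 2 : ℝ) ^ (F ∩ A t).card * (1 - 1 / 2 * (if x ∈ A t then 1 else 0)) := by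
      intro x hx t
      by_cases h : x ∈ A t
      · rw [insert_inter_of_mem h, card_insert_of_notMem (by simp [hnot x hx])]
        simp [h]; ring
      · rw [insert_inter_of_notMem h]; simp [h]
    have havg : ∑ x ∈ Y, ∑ t, ((1 / 2 : ℝ) ^ (insert x F ∩ A t).card) ≤
        ∑ x ∈ Y, (Fintype.card T : ℝ) * (1 - δ / 2) ^ (k + 1) := by
      have h1δ : 0 ≤ 1 - δ / 2 := by
        obtain ⟨t⟩ := ‹Nonempty T›
        have h1 := hAY t
        have h2 : ((Y ∩ A t).card : ℝ) ≤ Fintype.card X := by exact_mod_cast card_le_univ _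
        nlinarith
      calc _ = ∑ x ∈ Y, ∑ t, (1 / 2 : ℝ) ^ (F ∩ A t).card *
              (1 - 1 / 2 * (if x ∈ A t then 1 else 0)) :=
            sum_congr rfl (fun x hx => sum_congr rfl (fun t _ => hstep x hx t))
        _ = ∑ t, (1 / 2 : ℝ) ^ (F ∩ A t).card * (Y.card - 1 / 2 * (Y ∩ A t).card) := by
            rw [sum_comm]
            apply sum_congr rfl
            intro t _
            rw [← mul_sum, sum_sub_distrib, ← mul_sum, sum_boole, filter_mem_eq_inter]
            simp
        _ ≤ ∑ t, (1 / 2 : ℝ) ^ (F ∩ A t).card * (Y.card * (1 - δ / 2)) := by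
            apply sum_le_sum
            intro t _
            apply mul_le_mul_of_nonneg_left _ (by positivity)
            have := hAY t
            nlinarith
        _ = (∑ t, (1 / 2 : ℝ) ^ (F ∩ A t).card) * (Y.card * (1 - δ / 2)) := by rw [sum_mul]
        _ ≤ ((Fintype.card T : ℝ) * (1 - δ / 2) ^ k) * (Y.card * (1 - δ / 2)) := by
            gcongr
        _ = _ := by rw [sum_const, nsmul_eq_mul]; ring
    obtain ⟨x, hxY, hx⟩ := exists_le_of_sum_le hYne havg
    have hxY' := hxY
    simp only [hY, mem_filter, mem_univ, true_and] at hxY'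
    refine ⟨insert x F, by rw [card_insert_of_notMem (hnot x hxY), hFc], ?_, ?_, hx⟩
    · intro a ha b hb hab
      rw [mem_insert] at ha hb
      rcases ha with rfl | ha <;> rcases hb with rfl | hb
      · exact absurd rfl hab
      · exact hxY'.2 b hb
      · exact fun h => hxY'.2 a ha (hsymm _ _ h)
      · exact hFd a ha b hb hab
    · intro a ha
      rw [mem_insert] at ha
      rcases ha with rfl | ha
      · exact hxY'.1
      · exact hFA a ha

end Greedy

/-! ### Switching along chains -/

section Assembly
variable {Q P : Type*} [Fintype Q] [DecidableEq Q] [Fintype P] [DecidableEq P]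
variable {H : Finset (Q × Finset P)}

/-- Replacing the three edges of a chain from `y` by the three alternative edges covers `y` and
uncovers the end of the chain. -/
lemma chain_pm (h3 : ∀ p ∈ H, p.2.card = 3) {e1 e2 e3 : E Q P} {y : P}
    (h12 : ¬ Meet e1 e2) (h13 : ¬ Meet e1 e3) (h23 : ¬ Meet e2 e3)
    (y1 : y ∉ vP e1) (y2 : y ∉ vP e2) (y3 : y ∉ vP e3)
    (s1 : Swap H y e1) (s2 : Swap H e1.2.2.2 e2) (s3 : Swap H e2.2.2.2 e3) :
    ∃ B, HasPM H {e1.1, e2.1, e3.1} B ∧ e3.2.2.2 ∉ B ∧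
      insert e3.2.2.2 B = insert y (vP e1 ∪ vP e2 ∪ vP e3) := by
  obtain ⟨u1, a1, b1, w1⟩ := e1
  obtain ⟨u2, a2, b2, w2⟩ := e2
  obtain ⟨u3, a3, b3, w3⟩ := e3
  have k1 := card_triple_eq_three_iff.1 (h3 _ s1.2)
  have k2 := card_triple_eq_three_iff.1 (h3 _ s2.2)
  have k3 := card_triple_eq_three_iff.1 (h3 _ s3.2)
  simp only [Meet, vP, not_or, not_not, disjoint_left, mem_insert, mem_singleton] at *
  have p1 := HasPM.single s1.1
  have p2 := HasPM.single s2.1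
  have p3 := HasPM.single s3.1
  simp only at p1 p2 p3
  refine ⟨({a1, b1, y} ∪ {a2, b2, w1}) ∪ {a3, b3, w2}, ?_, ?_, ?_⟩
  · have := (p1.union p2 ?_ ?_).union p3 ?_ ?_
    · convert this using 1
      ext; simp
    · simp [h12.1]
    · simp only [disjoint_left, mem_insert, mem_singleton]; grind
    · simp only [disjoint_left, mem_union, mem_singleton]; grind
    · simp only [disjoint_left, mem_union, mem_insert, mem_singleton]; grind
  · simp only [mem_union, mem_insert, mem_singleton]; grind
  · ext v
    simp only [mem_union, mem_insert, mem_singleton]; grind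

/-- The `Q`-vertices of a block. -/
def bQ (x : Block Q P) : Finset Q := univ.image (fun i => (x i).1)

/-- The `P`-vertices of a block. -/
def bP (x : Block Q P) : Finset P := univ.biUnion (fun i => vP (x i))

lemma vP_subset (x : Block Q P) (i : Fin 9) : vP (x i) ⊆ bP x :=
  subset_biUnion_of_mem (fun i => vP (x i)) (mem_univ i)

/-- The nine edges of a proper block form a perfect matching of its vertices. -/
lemma block_pm {x : Block Q P} (hx : Proper x) (hH : ∀ i, ((x i).1, vP (x i)) ∈ H) :
    HasPM H (bQ x) (bP x) := by
  have := HasPM.biUnion (H := H) univ (fun i => ({(x i).1} : Finset Q)) (fun i => vP (x i))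
    (fun i _ => HasPM.single (hH i))
    (fun i _ j _ hij => by
      have := hx i j hij
      simp only [Meet, not_or] at this
      simpa using this.1)
    (fun i _ j _ hij => by
      have := hx i j hij
      simp only [Meet, not_or, not_not] at this
      exact this.2)
  rwa [show (univ.biUnion fun i => ({(x i).1} : Finset Q)) = bQ x by
    ext; simp [bQ, eq_comm]] at this

lemma Absorbs.edges {x : Block Q P} {t : E Q P} (h : Absorbs H t x) (i : Fin 9) :
    ((x i).1, vP (x i)) ∈ H := by
  fin_cases i
  exacts [h.s0.2, h.s1.2, h.s2.2, h.s3.2, h.s4.2, h.s5.2, h.s6.2, h.s7.2, h.s8.2]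

lemma univ_nine : (univ : Finset (Fin 9)) = {0, 1, 2} ∪ {3, 4, 5} ∪ {6, 7, 8} := by decide

lemma triple_union (a b c : P) (A B C : Finset P) :
    {a, b, c} ∪ (A ∪ B ∪ C) = insert a A ∪ insert b B ∪ insert c C := by
  ext v
  simp only [mem_union, mem_insert, mem_singleton]
  tauto

/-- A proper absorber can absorb: switch along its three chains and add the edge
`(u, {z₁, z₂, z₃})` formed by `u` and the three freed ends. -/
lemma absorb_pm (h3 : ∀ p ∈ H, p.2.card = 3) {x : Block Q P} {u : Q} {y1 y2 y3 : P}
    (hx : Proper x) (h : Absorbs H (u, y1, y2, y3) x) (hu : u ∉ bQ x)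
    (hy1 : y1 ∉ bP x) (hy2 : y2 ∉ bP x) (hy3 : y3 ∉ bP x)
    (h12 : y1 ≠ y2) (h13 : y1 ≠ y3) (h23 : y2 ≠ y3) :
    HasPM H ({u} ∪ bQ x) ({y1, y2, y3} ∪ bP x) := by
  have ny : ∀ {y}, y ∉ bP x → ∀ i, y ∉ vP (x i) := fun hy i hi => hy (vP_subset x i hi)
  have nu : ∀ i, u ≠ (x i).1 := fun i hi => hu (by rw [hi]; exact mem_image_of_mem _ (mem_univ i))
  have dQ : ∀ i j, i ≠ j → (x i).1 ≠ (x j).1 := fun i j hij h => hx i j hij (Or.inl h)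
  have dP : ∀ i j, i ≠ j → Disjoint (vP (x i)) (vP (x j)) := fun i j hij => by
    by_contra hc; exact hx i j hij (Or.inr hc)
  obtain ⟨B1, p1, z1, i1⟩ := chain_pm h3 (hx 0 1 (by decide)) (hx 0 2 (by decide))
    (hx 1 2 (by decide)) (ny hy1 0) (ny hy1 1) (ny hy1 2) h.s0 h.s1 h.s2
  obtain ⟨B2, p2, z2, i2⟩ := chain_pm h3 (hx 3 4 (by decide)) (hx 3 5 (by decide))
    (hx 4 5 (by decide)) (ny hy2 3) (ny hy2 4) (ny hy2 5) h.s3 h.s4 h.s5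
  obtain ⟨B3, p3, z3, i3⟩ := chain_pm h3 (hx 6 7 (by decide)) (hx 6 8 (by decide))
    (hx 7 8 (by decide)) (ny hy3 6) (ny hy3 7) (ny hy3 8) h.s6 h.s7 h.s8
  have p0 := HasPM.single h.s9
  simp only at p0
  have R12 : Disjoint (insert (x 2).2.2.2 B1) (insert (x 5).2.2.2 B2) := by
    rw [i1, i2]
    simp [ny hy1, ny hy2, dP, h12.symm]
  have R13 : Disjoint (insert (x 2).2.2.2 B1) (insert (x 8).2.2.2 B3) := by
    rw [i1, i3]
    simp [ny hy1, ny hy3, dP, h13.symm]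
  have R23 : Disjoint (insert (x 5).2.2.2 B2) (insert (x 8).2.2.2 B3) := by
    rw [i2, i3]
    simp [ny hy2, ny hy3, dP, h23.symm]
  have hP : ({y1, y2, y3} ∪ bP x : Finset P) =
      {(x 2).2.2.2, (x 5).2.2.2, (x 8).2.2.2} ∪ (B1 ∪ (B2 ∪ B3)) := by
    have e1 : bP x = vP (x 0) ∪ vP (x 1) ∪ vP (x 2) ∪ (vP (x 3) ∪ vP (x 4) ∪ vP (x 5)) ∪
        (vP (x 6) ∪ vP (x 7) ∪ vP (x 8)) := by
      rw [bP, univ_nine]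
      simp only [union_biUnion, biUnion_insert, singleton_biUnion, union_assoc]
    rw [e1, triple_union, ← i1, ← i2, ← i3, ← triple_union, union_assoc]
  have hQ : ({u} ∪ bQ x : Finset Q) = {u} ∪ ({(x 0).1, (x 1).1, (x 2).1} ∪
      ({(x 3).1, (x 4).1, (x 5).1} ∪ {(x 6).1, (x 7).1, (x 8).1})) := by
    rw [bQ, univ_nine]
    simp only [image_union, image_insert, image_singleton, union_assoc]
  rw [hP, hQ]
  simp only [disjoint_insert_left, disjoint_insert_right, mem_insert, not_or] at R12 R13 R23
  refine p0.union (p1.union (p2.union p3 ?_ R23.2.2) ?_ ?_) ?_ ?_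
  · simp [dQ]
  · simp [dQ]
  · exact disjoint_union_right.2 ⟨R12.2.2, R13.2.2⟩
  · simp [nu]
  · simp only [disjoint_insert_left, disjoint_singleton_left, mem_union, not_or]
    exact ⟨⟨z1, R12.2.1, R13.2.1⟩, ⟨by tauto, z2, R23.2.1⟩, by tauto, by tauto, z3⟩

end Assembly
/-! ### The absorbing family -/

section Final
variable {Q P : Type*} [Fintype Q] [DecidableEq Q] [Fintype P] [DecidableEq P]
variable {H : Finset (Q × Finset P)}

lemma bQ_disjoint {x y : Block Q P} (h : ¬ Conf x y) : Disjoint (bQ x) (bQ y) := by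
  rw [disjoint_left]
  intro u hu hv
  simp only [bQ, mem_image, mem_univ, true_and] at hu hv
  obtain ⟨i, hi⟩ := hu
  obtain ⟨j, hj⟩ := hv
  exact h ⟨i, j, Or.inl (hi.trans hj.symm)⟩

lemma bP_disjoint {x y : Block Q P} (h : ¬ Conf x y) : Disjoint (bP x) (bP y) := by
  simp only [bP, disjoint_biUnion_left, disjoint_biUnion_right, mem_univ, true_imp_iff]
  intro j i
  by_contra hc
  exact h ⟨i, j, Or.inr hc⟩

open Classical in
/-- If a family `F` of pairwise disjoint proper blocks contains at least `|SQ|` absorbers for every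
quadruple, then the balanced set `SQ ∪ SP` can be absorbed into the vertex set of `F`. -/
lemma assemble (h3 : ∀ p ∈ H, p.2.card = 3) (F : Finset (Block Q P))
    (hprop : ∀ x ∈ F, Proper x) (hconf : ∀ x ∈ F, ∀ y ∈ F, x ≠ y → ¬ Conf x y)
    (hedge : ∀ x ∈ F, ∀ i, ((x i).1, vP (x i)) ∈ H) (SQ : Finset Q) (SP : Finset P)
    (hcard : SP.card = SQ.card * 3) (dQ : ∀ x ∈ F, Disjoint SQ (bQ x))
    (dP : ∀ x ∈ F, Disjoint SP (bP x))
    (hm : ∀ t, SQ.card ≤ (F ∩ absorbers H t).card) :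
    HasPM H (SQ ∪ F.biUnion bQ) (SP ∪ F.biUnion bP) := by
  set m := SQ.card with hmdef
  obtain ⟨u, uinj, umem, usurj⟩ : ∃ u : Fin m → Q, Function.Injective u ∧ (∀ k, u k ∈ SQ) ∧
      ∀ v ∈ SQ, ∃ k, u k = v := by
    let e : SQ ≃ Fin m := SQ.equivFinOfCardEq rfl
    exact ⟨fun k => (e.symm k : Q), fun a b h => e.symm.injective (Subtype.ext h),
      fun k => (e.symm k).2, fun v hv => ⟨e ⟨v, hv⟩, by simp⟩⟩
  obtain ⟨y, yinj, ymem, ysurj⟩ : ∃ y : Fin m → Fin 3 → P,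
      (∀ k k' i i', y k i = y k' i' → k = k' ∧ i = i') ∧ (∀ k i, y k i ∈ SP) ∧
      ∀ v ∈ SP, ∃ k i, y k i = v := by
    let e : SP ≃ Fin m × Fin 3 := (SP.equivFinOfCardEq hcard).trans finProdFinEquiv.symm
    refine ⟨fun k i => (e.symm (k, i) : P), fun k k' i i' h => ?_,
      fun k i => (e.symm (k, i)).2, fun v hv => ⟨(e ⟨v, hv⟩).1, (e ⟨v, hv⟩).2, by simp⟩⟩
    have h2 : (k, i) = (k', i') := e.symm.injective (Subtype.ext h)
    exact ⟨congrArg Prod.fst h2, congrArg Prod.snd h2⟩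
  let t : Fin m → E Q P := fun k => (u k, y k 0, y k 1, y k 2)
  -- Hall's condition is immediate since each of the `m` candidate sets has at least `m` elements.
  obtain ⟨f, finj, hf⟩ := (Finset.all_card_le_biUnion_card_iff_exists_injective
    (fun k => F ∩ absorbers H (t k))).1 (by
      intro s
      rcases s.eq_empty_or_nonempty with rfl | ⟨k, hk⟩
      · simp
      · calc s.card ≤ m := by simpa using card_le_univ s
          _ ≤ _ := hm (t k)
          _ ≤ _ := card_le_card (subset_biUnion_of_mem (fun k => F ∩ absorbers H (t k)) hk))
  let TQ : Block Q P → Finset Q := fun b => (univ.filter (fun k => f k = b)).image u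
  let TP : Block Q P → Finset P := fun b =>
    (univ.filter (fun k => f k = b)).biUnion (fun k => {y k 0, y k 1, y k 2})
  have hfF : ∀ k, f k ∈ F := fun k => (mem_inter.1 (hf k)).1
  have hfA : ∀ k, Absorbs H (t k) (f k) := fun k => (mem_filter.1 (mem_inter.1 (hf k)).2).2
  have tri : ∀ k, ({y k 0, y k 1, y k 2} : Finset P) = univ.image (y k) := by
    intro k; ext v; simp [Fin.exists_fin_succ, eq_comm]
  have TQsub : ∀ b, TQ b ⊆ SQ := by
    intro b v hv
    obtain ⟨k, -, rfl⟩ := mem_image.1 hv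
    exact umem k
  have TPsub : ∀ b, TP b ⊆ SP := by
    intro b v hv
    obtain ⟨k, -, hk⟩ := mem_biUnion.1 hv
    rw [tri] at hk
    obtain ⟨i, -, rfl⟩ := mem_image.1 hk
    exact ymem k i
  -- Each block takes its own vertices and the quadruple assigned to it, if there is one.
  have key := HasPM.biUnion (H := H) F (fun b => TQ b ∪ bQ b) (fun b => TP b ∪ bP b) ?_ ?_ ?_
  · convert key using 1
    · ext v
      simp only [mem_union, mem_biUnion]
      constructor
      · rintro (h | ⟨b, hb, h⟩)
        · obtain ⟨k, rfl⟩ := usurj v h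
          exact ⟨f k, hfF k, Or.inl (mem_image_of_mem _ (by simp))⟩
        · exact ⟨b, hb, Or.inr h⟩
      · rintro ⟨b, hb, h | h⟩
        · exact Or.inl (TQsub b h)
        · exact Or.inr ⟨b, hb, h⟩
    · ext v
      simp only [mem_union, mem_biUnion]
      constructor
      · rintro (h | ⟨b, hb, h⟩)
        · obtain ⟨k, i, rfl⟩ := ysurj v h
          exact ⟨f k, hfF k, Or.inl (mem_biUnion.2 ⟨k, by simp, by
            rw [tri]; exact mem_image_of_mem _ (mem_univ i)⟩)⟩
        · exact ⟨b, hb, Or.inr h⟩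
      · rintro ⟨b, hb, h | h⟩
        · exact Or.inl (TPsub b h)
        · exact Or.inr ⟨b, hb, h⟩
  · intro b hb
    by_cases hk : ∃ k, f k = b
    · obtain ⟨k, rfl⟩ := hk
      have hfil : univ.filter (fun k' => f k' = f k) = {k} := by
        ext k'; simp [finj.eq_iff]
      simp only [TQ, TP, hfil, image_singleton, singleton_biUnion]
      have hyP : ∀ i, y k i ∉ bP (f k) := fun i => disjoint_left.1 (dP _ hb) (ymem k i)
      refine absorb_pm h3 (hprop _ hb) (hfA k) (disjoint_left.1 (dQ _ hb) (umem k))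
        (hyP 0) (hyP 1) (hyP 2) (fun h => ?_) (fun h => ?_) (fun h => ?_)
      · simpa using (yinj k k 0 1 h).2
      · simpa using (yinj k k 0 2 h).2
      · simpa using (yinj k k 1 2 h).2
    · have hfil : univ.filter (fun k' => f k' = b) = ∅ := by
        ext k'; simp only [mem_filter, mem_univ, true_and, notMem_empty, iff_false]
        exact fun h => hk ⟨k', h⟩
      simp only [TQ, TP, hfil, image_empty, biUnion_empty, empty_union]
      exact block_pm (hprop b hb) (hedge b hb)
  · intro b hb c hc hbc
    refine disjoint_union_left.2 ⟨disjoint_union_right.2 ⟨?_, (dQ c hc).mono_left (TQsub b)⟩,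
      disjoint_union_right.2 ⟨((dQ b hb).mono_left (TQsub c)).symm,
        bQ_disjoint (hconf b hb c hc hbc)⟩⟩
    rw [disjoint_left]
    intro v h1 h2
    obtain ⟨k, hk, rfl⟩ := mem_image.1 h1
    obtain ⟨k', hk', h⟩ := mem_image.1 h2
    obtain rfl := uinj h
    simp only [mem_filter, mem_univ, true_and] at hk hk'
    exact hbc (hk.symm.trans hk')
  · intro b hb c hc hbc
    refine disjoint_union_left.2 ⟨disjoint_union_right.2 ⟨?_, (dP c hc).mono_left (TPsub b)⟩,
      disjoint_union_right.2 ⟨((dP b hb).mono_left (TPsub c)).symm,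
        bP_disjoint (hconf b hb c hc hbc)⟩⟩
    rw [disjoint_left]
    intro v h1 h2
    obtain ⟨k, hk, h1⟩ := mem_biUnion.1 h1
    obtain ⟨k', hk', h2⟩ := mem_biUnion.1 h2
    rw [tri] at h1 h2
    obtain ⟨i, -, rfl⟩ := mem_image.1 h1
    obtain ⟨j, -, h⟩ := mem_image.1 h2
    obtain ⟨rfl, -⟩ := yinj _ _ _ _ h
    simp only [mem_filter, mem_univ, true_and] at hk hk'
    exact hbc (hk.symm.trans hk')

/-- The set of all edges of the blocks in `F`. -/
def blockEdges (F : Finset (Block Q P)) : Finset (Q × Finset P) :=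
  F.biUnion (fun x => univ.image (fun i => ((x i).1, vP (x i))))

lemma mem_blockEdges {F : Finset (Block Q P)} {p : Q × Finset P} :
    p ∈ blockEdges F ↔ ∃ x ∈ F, ∃ i, ((x i).1, vP (x i)) = p := by
  simp [blockEdges]

lemma blockEdges_fst (F : Finset (Block Q P)) :
    (blockEdges F).image Prod.fst = F.biUnion bQ := by
  ext v; simp [mem_blockEdges, bQ]

lemma blockEdges_snd (F : Finset (Block Q P)) :
    (blockEdges F).biUnion Prod.snd = F.biUnion bP := by
  ext v; simp only [mem_biUnion, mem_blockEdges, bP, mem_univ, true_and]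
  constructor
  · rintro ⟨_, ⟨x, hx, i, rfl⟩, h⟩; exact ⟨x, hx, i, h⟩
  · rintro ⟨x, hx, i, h⟩; exact ⟨_, ⟨x, hx, i, rfl⟩, h⟩

lemma blockEdges_card (F : Finset (Block Q P)) : (blockEdges F).card ≤ F.card * 9 :=
  card_biUnion_le_card_mul _ _ 9 (fun x _ => by
    have h := card_image_le (s := (univ : Finset (Fin 9))) (f := fun i => ((x i).1, vP (x i)))
    simpa using h)

lemma exists_pow_four_mul_exp_lt_one (c : ℝ) (hc : 0 < c) :
    ∃ n₀ : ℕ, ∀ n : ℕ, n₀ ≤ n → (n : ℝ) ^ 4 * Real.exp (-(c * n)) < 1 := by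
  have h := (Real.tendsto_pow_mul_exp_neg_atTop_nhds_zero 4).comp
    ((tendsto_natCast_atTop_atTop (R := ℝ)).const_mul_atTop hc)
  have h1 := h.const_mul ((c ^ 4)⁻¹)
  rw [mul_zero] at h1
  have h2 := h1.eventually (gt_mem_nhds one_pos)
  obtain ⟨n₀, hn⟩ := Filter.eventually_atTop.1 h2
  refine ⟨n₀, fun n hh => ?_⟩
  have := hn n hh
  simp only [Function.comp] at this
  calc _ = (c ^ 4)⁻¹ * ((c * n) ^ 4 * Real.exp (-(c * n))) := by field_simp
    _ < 1 := this

end Final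

end Absorb

open Finset Absorb in
/-- **Absorbing lemma.** For constants `0 < ρ' ≪ ρ ≪ ε ≪ 1` and `n`
sufficiently large, divisible by 3: if `H` is a `(1,3)`-partite 4-graph with
classes `Q = Fin (n/3)`, `P = Fin n` (encoded as pairs `(u, s)`, `|s| = 3`),
every vertex of `Q` is adjacent to every vertex of `P`, and
`deg({u,v}) + deg({u,v'}) > (1/2 + ε)n²` whenever `deg({u,v,v'}) > 0`, then `H`
has a matching `M` with `|M| < ρn` such that for every balanced
`S ⊆ V(H) ∖ V(M)` with `|S| < ρ'n`, the induced subgraph `H[S ∪ V(M)]` has a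
perfect matching. -/
theorem stmt_6 :
    ∀ ε : ℝ, 0 < ε → ε < 1 →
    ∃ ρ₀ : ℝ, 0 < ρ₀ ∧ ∀ ρ : ℝ, 0 < ρ → ρ < ρ₀ →
    ∃ ρ'₀ : ℝ, 0 < ρ'₀ ∧ ∀ ρ' : ℝ, 0 < ρ' → ρ' < ρ'₀ →
    ∃ n₀ : ℕ, ∀ n : ℕ, n₀ ≤ n → 3 ∣ n →
    ∀ H : Finset (Fin (n / 3) × Finset (Fin n)),
      (∀ p ∈ H, p.2.card = 3) →
      (∀ u : Fin (n / 3), ∀ v : Fin n, ∃ p ∈ H, p.1 = u ∧ v ∈ p.2) →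
      (∀ u : Fin (n / 3), ∀ v v' : Fin n, v ≠ v' →
        0 < (H.filter (fun p => p.1 = u ∧ v ∈ p.2 ∧ v' ∈ p.2)).card →
        (((H.filter (fun p => p.1 = u ∧ v ∈ p.2)).card
          + (H.filter (fun p => p.1 = u ∧ v' ∈ p.2)).card : ℝ)
            > (1 / 2 + ε) * (n : ℝ) ^ 2)) →
      ∃ M ⊆ H,
        (∀ p ∈ M, ∀ r ∈ M, p ≠ r → p.1 ≠ r.1 ∧ Disjoint p.2 r.2) ∧
        ((M.card : ℝ) < ρ * n) ∧
        (∀ SQ : Finset (Fin (n / 3)), ∀ SP : Finset (Fin n),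
          (∀ u ∈ SQ, ∀ p ∈ M, p.1 ≠ u) →
          (∀ v ∈ SP, ∀ p ∈ M, v ∉ p.2) →
          3 * SQ.card = SP.card →
          ((SQ.card + SP.card : ℝ) < ρ' * n) →
          ∃ M' ⊆ H,
            (∀ p ∈ M', p.1 ∈ SQ ∪ M.image Prod.fst ∧ p.2 ⊆ SP ∪ M.biUnion Prod.snd) ∧
            (∀ p ∈ M', ∀ r ∈ M', p ≠ r → p.1 ≠ r.1 ∧ Disjoint p.2 r.2) ∧
            (∀ u ∈ SQ ∪ M.image Prod.fst, ∃ p ∈ M', p.1 = u) ∧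
            (∀ v ∈ SP ∪ M.biUnion Prod.snd, ∃ p ∈ M', v ∈ p.2)) := by
  classical
  intro ε hε hε1
  refine ⟨1, one_pos, fun ρ hρ hρ1 => ?_⟩
  set δ : ℝ := ε ^ 28 / 2 with hδ
  have hδpos : 0 < δ := by positivity
  have hδ1 : δ < 1 := by
    have : ε ^ 28 ≤ 1 := pow_le_one₀ hε.le hε1.le
    linarith
  set θ : ℝ := min (ρ / 10) (δ / 2000) with hθ
  have hθpos : 0 < θ := by positivity
  have hθρ : θ ≤ ρ / 10 := min_le_left _ _
  have hθδ : θ ≤ δ / 2000 := min_le_right _ _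
  refine ⟨δ * θ / 2, by positivity, fun ρ' hρ' hρ'1 => ?_⟩
  obtain ⟨n₁, hn₁⟩ := exists_pow_four_mul_exp_lt_one (δ * θ / 8) (by positivity)
  obtain ⟨n₂, hn₂⟩ := exists_nat_gt (2000 / δ + 2 / θ + 1)
  refine ⟨max n₁ n₂, fun n hn h3n H hH3 hcov hore => ?_⟩
  have hnn₁ := hn₁ n ((le_max_left _ _).trans hn)
  have hnn₂ : 2000 / δ + 2 / θ + 1 < (n : ℝ) :=
    hn₂.trans_le (by exact_mod_cast (le_max_right _ _).trans hn)
  have hnδ : 2000 ≤ δ * n := by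
    have : 2000 / δ ≤ n := by have : 0 < 2 / θ := by positivity
                              linarith
    rwa [div_le_iff₀ hδpos, mul_comm] at this
  have hnθ : 2 ≤ θ * n := by
    have : 2 / θ ≤ n := by have : 0 < 2000 / δ := by positivity
                           linarith
    rwa [div_le_iff₀ hθpos, mul_comm] at this
  have hn0 : (0 : ℝ) < n := by
    have : 0 < 2 / θ := by positivity
    have : 0 < 2000 / δ := by positivity
    linarith
  obtain ⟨q, hnq⟩ := h3n
  have hq : n / 3 = q := by omega
  have hn0' : 0 < n := by exact_mod_cast hn0
  have : Nonempty (Fin n) := ⟨⟨0, hn0'⟩⟩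
  have : Nonempty (Fin (n / 3)) := ⟨⟨0, by omega⟩⟩
  have hcardE : (Fintype.card (E (Fin (n / 3)) (Fin n)) : ℝ) = (n : ℝ) / 3 * n ^ 3 := by
    simp only [E, Fintype.card_prod, Fintype.card_fin, hq, Nat.cast_mul]
    have : (n : ℝ) = 3 * q := by exact_mod_cast hnq
    rw [this]; ring
  have hyp : Hyp H ε := by
    have hdist : ∀ u a b c, (u, ({a, b, c} : Finset (Fin n))) ∈ H → a ≠ b ∧ a ≠ c ∧ b ≠ c :=
      fun u a b c h => card_triple_eq_three_iff.1 (hH3 _ h)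
    refine ⟨hH3, ?_, ?_⟩
    · intro u v
      obtain ⟨p, hp, hpu, hv⟩ := hcov u v
      have h1 := two_deg_le H hH3 u v
      have h2 : 0 < (H.filter (fun p => p.1 = u ∧ v ∈ p.2)).card :=
        card_pos.2 ⟨p, mem_filter.2 ⟨hp, hpu, hv⟩⟩
      exact card_pos.1 (by omega)
    · intro u v v' c h
      have h1 := hore u v v' (hdist _ _ _ _ h).1
        (card_pos.2 ⟨_, mem_filter.2 ⟨h, rfl, by simp, by simp⟩⟩)
      have h2 : (2 * (H.filter (fun p => p.1 = u ∧ v ∈ p.2)).card : ℝ) ≤ (D H u v).card := by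
        exact_mod_cast two_deg_le H hH3 u v
      have h3 : (2 * (H.filter (fun p => p.1 = u ∧ v' ∈ p.2)).card : ℝ) ≤ (D H u v').card := by
        exact_mod_cast two_deg_le H hH3 u v'
      rw [Fintype.card_fin]
      linarith
  set K : ℕ := ⌊θ * n⌋₊ with hK
  have hKle : (K : ℝ) ≤ θ * n := Nat.floor_le (by positivity)
  have hKge : θ * n / 2 ≤ (K : ℝ) := by
    have := Nat.lt_floor_add_one (θ * n)
    rw [← hK] at this
    linarith
  -- Of the proportion `2δ` of absorbers for `t`, at most half is lost to degenerate blocks and to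
  -- blocks meeting the fewer than `θn ≤ δn/2000` blocks chosen so far.
  obtain ⟨F, hFK, hFd, hFA, hFs⟩ := greedy
    (fun t => (absorbers H t).filter Proper) (Conf (Q := Fin (n / 3)) (P := Fin n))
    (fun x => ⟨0, 0, meet_self _⟩) (fun x y ⟨i, j, h⟩ => ⟨j, i, h.symm⟩) δ hδpos K (by
      intro F hF t
      have h1 := hyp.absorbers_ge hε t
      have h2 := avail_ge (absorbers H t) F
      have h2' : ((absorbers H t).card : ℝ) ≤
          (((absorbers H t).filter Proper).filter (fun x => ∀ y ∈ F, ¬ Conf x y)).card +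
          81 * (F.card + 1) * ((Fintype.card (E (Fin (n / 3)) (Fin n))) ^ 8 *
            ((n : ℝ) ^ 3 + 9 * ((n : ℝ) / 3 * (n : ℝ) ^ 2))) := by
        have hq3 : (n : ℝ) / 3 = q := by
          have : (n : ℝ) = 3 * q := by exact_mod_cast hnq
          rw [this]; ring
        have hc : Fintype.card (Fin (n / 3)) = q := by rw [Fintype.card_fin, hq]
        rw [hc, Fintype.card_fin] at h2
        rw [hq3]
        exact_mod_cast h2
      have hX : (Fintype.card (Block (Fin (n / 3)) (Fin n)) : ℝ) =
          (Fintype.card (E (Fin (n / 3)) (Fin n)) : ℝ) ^ 9 := by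
        simp only [Block, Fintype.card_fun, Fintype.card_fin]; push_cast; rfl
      rw [hX] at h1 ⊢
      rw [hcardE] at h1 h2' ⊢
      have hFK : (F.card : ℝ) + 1 ≤ K := by exact_mod_cast hF
      have hbad : 81 * ((F.card : ℝ) + 1) * (((n : ℝ) / 3 * n ^ 3) ^ 8 *
            ((n : ℝ) ^ 3 + 9 * ((n : ℝ) / 3 * (n : ℝ) ^ 2))) ≤ δ * ((n : ℝ) / 3 * n ^ 3) ^ 9 := by
        calc _ = ((F.card : ℝ) + 1) * 972 * (((n : ℝ) / 3 * n ^ 3) ^ 8 * (n ^ 3 / 3)) := by ring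
          _ ≤ (δ * n) * (((n : ℝ) / 3 * n ^ 3) ^ 8 * (n ^ 3 / 3)) := by
            refine mul_le_mul_of_nonneg_right ?_ (by positivity)
            have : θ * n ≤ δ / 2000 * n := by gcongr
            have : 0 < δ * n := by positivity
            linarith
          _ = _ := by ring
      have : ε ^ 28 = 2 * δ := by rw [hδ]; ring
      rw [this] at h1
      refine le_trans (b := (((((absorbers H t).filter Proper).filter
        (fun x => ∀ y ∈ F, ¬ Conf x y)).card : ℕ) : ℝ)) (by linarith) (le_of_eq ?_)
      -- The two sides differ only in their decidability instances.
      congr!) K le_rfl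
  have hedge : ∀ x ∈ F, ∀ i, ((x i).1, vP (x i)) ∈ H := by
    intro x hx i
    obtain ⟨t, ht⟩ := hFA x hx
    exact (mem_filter.1 (mem_filter.1 ht).1).2.edges i
  have hprop : ∀ x ∈ F, Proper x := by
    intro x hx
    obtain ⟨t, ht⟩ := hFA x hx
    exact (mem_filter.1 ht).2
  have hcount : ∀ t, (1 / 2 : ℝ) ^ (F ∩ absorbers H t).card ≤
      Fintype.card (E (Fin (n / 3)) (Fin n)) * (1 - δ / 2) ^ K := by
    intro t
    refine le_trans ?_ ((single_le_sum (fun _ _ => by positivity) (mem_univ t)).trans hFs)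
    refine pow_le_pow_of_le_one (by norm_num) (by norm_num) (card_le_card fun x hx => ?_)
    obtain ⟨hxF, hxA⟩ := mem_inter.1 hx
    exact mem_inter.2 ⟨hxF, (mem_filter.1 hxA).1⟩
  refine ⟨blockEdges F, ?_, ?_, ?_, ?_⟩
  · intro p hp
    obtain ⟨x, hx, i, rfl⟩ := mem_blockEdges.1 hp
    exact hedge x hx i
  · intro p hp r hr hpr
    obtain ⟨x, hx, i, rfl⟩ := mem_blockEdges.1 hp
    obtain ⟨y, hy, j, rfl⟩ := mem_blockEdges.1 hr
    have hm : ¬ Meet (x i) (y j) := by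
      by_cases hxy : x = y
      · subst hxy
        exact hprop x hx i j (fun h => hpr (by rw [h]))
      · exact fun h => hFd x hx y hy hxy ⟨i, j, h⟩
    simpa only [Meet, not_or, not_not] using hm
  · have h1 : ((blockEdges F).card : ℝ) ≤ F.card * 9 := by exact_mod_cast blockEdges_card F
    rw [hFK] at h1
    have : θ * n ≤ ρ / 10 * n := by gcongr
    have : 0 < ρ * n := by positivity
    linarith
  · intro SQ SP hSQ hSP hbal hsmall
    have hbal' : (SP.card : ℝ) = 3 * SQ.card := by exact_mod_cast hbal.symm
    have hm : ∀ t, SQ.card ≤ (F ∩ absorbers H t).card := by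
      intro t
      -- Otherwise the summand of `t` alone exceeds the bound on the potential: it is at least
      -- `exp(-|SQ|)` with `4|SQ| < δθn/2`, and the bound is at most `n⁴ exp(-δθn/4)`.
      by_contra hlt
      push Not at hlt
      have h1 := (hcount t).trans' (pow_le_pow_of_le_one (by norm_num) (by norm_num) hlt.le)
      have h2 : Real.exp (-(SQ.card : ℝ)) ≤ (1 / 2 : ℝ) ^ SQ.card := by
        rw [show -(SQ.card : ℝ) = SQ.card * (-1) by ring, Real.exp_nat_mul]
        apply pow_le_pow_left₀ (Real.exp_pos _).le
        rw [Real.exp_neg, one_div]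
        apply inv_anti₀ (by norm_num)
        have := Real.add_one_le_exp (1 : ℝ)
        linarith
      have h3 : (1 - δ / 2) ^ K ≤ Real.exp (-(δ / 2 * K)) := by
        rw [show -(δ / 2 * K) = K * (-(δ / 2)) by ring, Real.exp_nat_mul]
        apply pow_le_pow_left₀ (by linarith)
        have := Real.add_one_le_exp (-(δ / 2))
        linarith
      have h4 : (Fintype.card (E (Fin (n / 3)) (Fin n)) : ℝ) ≤ (n : ℝ) ^ 4 := by
        rw [hcardE]
        have : 0 < (n : ℝ) ^ 4 := by positivity
        linarith
      have h5 : Real.exp (-(SQ.card : ℝ)) ≤ (n : ℝ) ^ 4 * Real.exp (-(δ / 2 * K)) :=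
        h2.trans (h1.trans (mul_le_mul h4 h3 (pow_nonneg (by linarith) _) (by positivity)))
      have h6 : 1 ≤ (n : ℝ) ^ 4 * Real.exp (SQ.card - δ / 2 * K) := by
        rw [Real.exp_neg, inv_le_iff_one_le_mul₀ (Real.exp_pos _)] at h5
        rw [sub_eq_neg_add, Real.exp_add, ← mul_assoc]
        linarith
      have h7 : (SQ.card : ℝ) - δ / 2 * K ≤ -(δ * θ / 8 * n) := by
        have a1 : 4 * (SQ.card : ℝ) ≤ δ * θ / 2 * n := by
          have : ρ' * n ≤ δ * θ / 2 * n := by gcongr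
          linarith
        have a2 : δ / 2 * (θ * n / 2) ≤ δ / 2 * K := by gcongr
        linarith
      have h8 : (n : ℝ) ^ 4 * Real.exp (SQ.card - δ / 2 * K) ≤
          (n : ℝ) ^ 4 * Real.exp (-(δ * θ / 8 * n)) := by gcongr
      linarith
    obtain ⟨M', hM'H, hM'd, hM'Q, hM'P⟩ := assemble hH3 F hprop hFd hedge SQ SP (by omega)
      (fun x hx => by
        rw [disjoint_left]
        intro u hu hu'
        obtain ⟨i, -, hi⟩ := mem_image.1 hu'
        exact hSQ u hu _ (mem_blockEdges.2 ⟨x, hx, i, rfl⟩) hi)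
      (fun x hx => by
        rw [disjoint_left]
        intro v hv hv'
        obtain ⟨i, -, hi⟩ := mem_biUnion.1 hv'
        exact hSP v hv _ (mem_blockEdges.2 ⟨x, hx, i, rfl⟩) hi)
      hm
    rw [blockEdges_fst, blockEdges_snd, ← hM'Q, ← hM'P]
    refine ⟨M', hM'H, fun p hp => ⟨mem_image_of_mem _ hp, subset_biUnion_of_mem Prod.snd hp⟩,
      hM'd, fun u hu => ?_, fun v hv => ?_⟩
    · exact mem_image.1 hu
    · exact mem_biUnion.1 hv
end
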